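/- Suppose n ≥ 3 is odd. Fix an integer m ≥ 2, a real α with 1/(n−Δ) < α < 1/(n−1), ε > 0, and S > 0. Define J(s) = (1/(2π))·lim_{R→∞} ∫_{−R}^{R} sin(2π(y^n + sy))·(dy/y) (the integrand being extended by its limiting value 2πs at y = 0). Then there exist C > 0 and t₁ > 0 such that for every t ∈ (0, t₁] which either (i) is irrational and lies in ℬ_{m,α}, or (ii) is a rational with reduced form u/q satisfying t ≤ m·q^{−1/(α(n−Δ))}, for every s ∈ [−S, S] and each sign σ ∈ {+1, −1}, the limit J(s) exists, the limit defining U(t, σγ + s·t^{1/n}) exists, and |U(t, σγ + s·t^{1/n}) − (1/2 − σ·J(s))| ≤ C·( t^{αΔ/2^{n−1} − ε} + t^{αn−1} ). -/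

import Mathlib

open Filter Finset MeasureTheory

/-- An approximant to a real number `t`: a reduced fraction `u/q` with `q ≥ 1`
and `|t - u/q| < 1/q²`. -/
def IsApproximant (t : ℝ) (u q : ℤ) : Prop :=
  1 ≤ q ∧ Int.gcd u q = 1 ∧ |t - (u : ℝ) / (q : ℝ)| < 1 / (q : ℝ) ^ 2

/-- The set `𝒜_m`: `t ∈ [0,1]` such that for every real `M ≥ m` there is an
approximant `u/q` to `t` with `M^Δ < q ≤ M^(n-Δ)`. -/
def Aset (n : ℕ) (Δ : ℝ) (m : ℤ) : Set ℝ :=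
  {t | t ∈ Set.Icc (0 : ℝ) 1 ∧ ∀ M : ℝ, (m : ℝ) ≤ M →
    ∃ u q : ℤ, IsApproximant t u q ∧ M ^ Δ < (q : ℝ) ∧ (q : ℝ) ≤ M ^ ((n : ℝ) - Δ)}

/-- The set `𝒜`: `t ∈ [0,1]` such that for all sufficiently large `M` there is an
approximant `u/q` to `t` with `M^Δ < q ≤ M^(n-Δ)`. -/
def Aall (n : ℕ) (Δ : ℝ) : Set ℝ :=
  {t | t ∈ Set.Icc (0 : ℝ) 1 ∧ ∃ M₀ : ℝ, ∀ M : ℝ, M₀ ≤ M →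
    ∃ u q : ℤ, IsApproximant t u q ∧ M ^ Δ < (q : ℝ) ∧ (q : ℝ) ≤ M ^ ((n : ℝ) - Δ)}

/-- The set `ℬ_{m,α}`: `t ∈ (0,1]` such that for every real `M ≥ m·t^(-α)` there is an
approximant `u/q` to `t` with `M^Δ < q ≤ M^(n-Δ)`. -/
def Bset (n : ℕ) (Δ : ℝ) (m : ℤ) (α : ℝ) : Set ℝ :=
  {t | t ∈ Set.Ioc (0 : ℝ) 1 ∧ ∀ M : ℝ, (m : ℝ) * t ^ (-α) ≤ M →
    ∃ u q : ℤ, IsApproximant t u q ∧ M ^ Δ < (q : ℝ) ∧ (q : ℝ) ≤ M ^ ((n : ℝ) - Δ)}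

/-- `e(ξ) = exp(2πiξ)`. -/
noncomputable def ee (ξ : ℝ) : ℂ := Complex.exp (2 * Real.pi * Complex.I * ξ)

/-- The partial sum defining `U(t,x)`:
`2γ + Σ_{0<|k|≤K} (sin(2πγk)/(πk))·e(t·k^n + x·k)`. -/
noncomputable def Upartial (n : ℕ) (γ t x : ℝ) (K : ℕ) : ℂ :=
  Complex.ofReal (2 * γ) +
    ∑ k ∈ (Finset.Icc (-(K : ℤ)) (K : ℤ)).filter (· ≠ 0),
      Complex.ofReal (Real.sin (2 * Real.pi * γ * (k : ℝ)) / (Real.pi * (k : ℝ))) *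
        ee (t * (k : ℝ) ^ n + x * (k : ℝ))

/-- The truncated integral `∫_{−R}^{R} sin(2π(y^n + sy))·dy/y`, the integrand extended by its
limiting value `2πs` at `y = 0`. -/
noncomputable def Jint (n : ℕ) (s R : ℝ) : ℝ :=
  ∫ y in (-R)..R,
    (if y = 0 then 2 * Real.pi * s else Real.sin (2 * Real.pi * (y ^ n + s * y)) / y)

lemma ee_add (x y : ℝ) : ee (x + y) = ee x * ee y := by
  unfold ee; rw [← Complex.exp_add]; congr 1; push_cast; ring

lemma ee_zero : ee 0 = 1 := by simp [ee]

lemma ee_ne_zero (x : ℝ) : ee x ≠ 0 := Complex.exp_ne_zero _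

lemma ee_eq (x : ℝ) : ee x = Complex.exp (((2 * Real.pi * x : ℝ) : ℂ) * Complex.I) := by
  unfold ee; congr 1; push_cast; ring

lemma norm_ee (x : ℝ) : ‖ee x‖ = 1 := by
  rw [ee_eq]; exact Complex.norm_exp_ofReal_mul_I _

lemma ee_im (x : ℝ) : (ee x).im = Real.sin (2 * Real.pi * x) := by
  rw [ee_eq, Complex.exp_ofReal_mul_I_im]

lemma ee_neg (x : ℝ) : ee (-x) = (starRingEnd ℂ) (ee x) := by
  rw [ee_eq, ee_eq, ← Complex.exp_conj]; congr 1
  rw [map_mul, Complex.conj_ofReal, Complex.conj_I]; push_cast; ring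

lemma ee_int (k : ℤ) : ee (k : ℝ) = 1 := by
  unfold ee
  rw [Complex.exp_eq_one_iff]; exact ⟨k, by push_cast; ring⟩

lemma ee_sub (x y : ℝ) : ee (x - y) = ee x * (starRingEnd ℂ) (ee y) := by
  rw [sub_eq_add_neg, ee_add, ee_neg]

lemma ee_nat_mul (x : ℝ) (k : ℕ) : ee (x * k) = ee x ^ k := by
  unfold ee; rw [← Complex.exp_nat_mul]; congr 1; push_cast; ring

lemma norm_ee_sub_one (x : ℝ) : ‖ee x - 1‖ = 2 * |Real.sin (Real.pi * x)| := by
  have := Complex.norm_exp_I_mul_ofReal_sub_one (2 * Real.pi * x)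
  rw [ee_eq, mul_comm, this, norm_mul, Real.norm_eq_abs, Real.norm_eq_abs]
  rw [abs_of_pos (by norm_num : (0:ℝ) < 2)]; congr 3; ring

lemma norm_ee_sub_one_le (x : ℝ) : ‖ee x - 1‖ ≤ 2 * Real.pi * |x| := by
  rw [norm_ee_sub_one]
  have := Real.abs_sin_le_abs (x := Real.pi * x)
  rw [abs_mul, abs_of_pos Real.pi_pos] at this
  linarith

lemma norm_ee_sub_ee_le (x y : ℝ) : ‖ee x - ee y‖ ≤ 2 * Real.pi * |x - y| := by
  have : ee x - ee y = ee y * (ee (x - y) - 1) := by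
    rw [mul_sub, ← ee_add, mul_one]; congr 2; ring
  rw [this, norm_mul, norm_ee, one_mul]; exact norm_ee_sub_one_le _

/-- distance to nearest integer -/
noncomputable def nrm (x : ℝ) : ℝ := |x - round x|

lemma nrm_nonneg (x : ℝ) : 0 ≤ nrm x := abs_nonneg _

lemma nrm_le (x : ℝ) (z : ℤ) : nrm x ≤ |x - z| := round_le x z

lemma nrm_le_half (x : ℝ) : nrm x ≤ 1 / 2 := abs_sub_round x

lemma nrm_le_add (x y : ℝ) : nrm x ≤ nrm y + |x - y| := by
  have := nrm_le x (round y)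
  have h2 := abs_sub_le x y (round y)
  unfold nrm at *; linarith

lemma norm_ee_sub_one_ge (x : ℝ) : 4 * nrm x ≤ ‖ee x - 1‖ := by
  have h1 : ee x = ee (x - round x) := by
    have : x = (x - round x) + (round x : ℤ) := by ring
    conv_lhs => rw [this, ee_add, ee_int, mul_one]
  rw [h1, norm_ee_sub_one]
  have h2 : |Real.pi * (x - round x)| ≤ Real.pi / 2 := by
    rw [abs_mul, abs_of_pos Real.pi_pos]
    have := abs_sub_round x
    nlinarith [Real.pi_pos]
  have h3 := Real.mul_abs_le_abs_sin h2
  rw [abs_mul, abs_of_pos Real.pi_pos] at h3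
  have : 2 / Real.pi * (Real.pi * |x - round x|) = 2 * nrm x := by
    unfold nrm; field_simp
  linarith

lemma nrm_ge_of_mem {g δ : ℝ} (h0 : δ ≤ g) (h1 : g ≤ 1 - δ) : δ ≤ nrm g := by
  unfold nrm
  rcases le_or_gt (round g) 0 with h | h
  · have : ((round g : ℤ) : ℝ) ≤ 0 := by exact_mod_cast h
    exact le_trans (by linarith) (le_abs_self _)
  · have : (1:ℝ) ≤ ((round g : ℤ) : ℝ) := by exact_mod_cast h
    exact le_trans (by linarith) (neg_le_abs _)

/-- Abel summation identity. -/
lemma abel_identity (w z : ℕ → ℂ) (a b : ℕ) (hab : a ≤ b) :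
    ∑ k ∈ Ico a b, w k * z k = w b * ∑ k ∈ Ico a b, z k
      - ∑ k ∈ Ico a b, (w (k + 1) - w k) * ∑ j ∈ Ico a (k + 1), z j := by
  induction b, hab using Nat.le_induction with
  | base => simp
  | succ b hb ih =>
    rw [sum_Ico_succ_top hb, ih, sum_Ico_succ_top hb,
      sum_Ico_succ_top hb (fun k => (w (k + 1) - w k) * ∑ j ∈ Ico a (k + 1), z j),
      sum_Ico_succ_top hb]
    ring

lemma abel_bound (w z : ℕ → ℂ) (a b : ℕ) (hab : a ≤ b) (P : ℝ)
    (hP : ∀ j, a ≤ j → j ≤ b → ‖∑ k ∈ Ico a j, z k‖ ≤ P) :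
    ‖∑ k ∈ Ico a b, w k * z k‖ ≤ P * (‖w b‖ + ∑ k ∈ Ico a b, ‖w (k + 1) - w k‖) := by
  rw [abel_identity w z a b hab]
  refine (norm_sub_le _ _).trans ?_
  rw [mul_add, mul_sum (Ico a b) (fun k => ‖w (k + 1) - w k‖)]
  refine add_le_add ?_ ((norm_sum_le _ _).trans (sum_le_sum fun k hk => ?_))
  · rw [norm_mul, mul_comm]; exact mul_le_mul_of_nonneg_right (hP b hab le_rfl) (norm_nonneg _)
  · rw [mem_Ico] at hk
    rw [norm_mul, mul_comm]
    exact mul_le_mul_of_nonneg_right (hP _ (by omega) (by omega)) (norm_nonneg _)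

lemma abel_inv (z : ℕ → ℂ) (a b : ℕ) (ha : 1 ≤ a) (hab : a ≤ b) (P : ℝ)
    (hP : ∀ j, a ≤ j → j ≤ b → ‖∑ k ∈ Ico a j, z k‖ ≤ P) :
    ‖∑ k ∈ Ico a b, z k / k‖ ≤ P / a := by
  have h := abel_bound (fun k => ((1 / (k:ℝ) : ℝ) : ℂ)) z a b hab P hP
  have e1 : ∑ k ∈ Ico a b, z k / k = ∑ k ∈ Ico a b, ((1 / (k:ℝ) : ℝ) : ℂ) * z k := by
    refine sum_congr rfl fun k _ => ?_
    push_cast; ring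
  rw [e1]
  refine h.trans (le_of_eq ?_)
  have e2 : ∑ k ∈ Ico a b, ‖((1 / ((k + 1 : ℕ):ℝ) : ℝ) : ℂ) - ((1 / (k:ℝ) : ℝ) : ℂ)‖
      = 1 / (a:ℝ) - 1 / (b:ℝ) := by
    clear h e1 hP
    induction b, hab using Nat.le_induction with
    | base => simp
    | succ b hb ih =>
      rw [sum_Ico_succ_top hb, ih, ← Complex.ofReal_sub, Complex.norm_real, Real.norm_eq_abs,
        abs_sub_comm, abs_of_nonneg]
      · ring
      · have : (0:ℝ) < b := by exact_mod_cast (by omega : 0 < b)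
        rw [sub_nonneg]; push_cast
        apply one_div_le_one_div_of_le this; linarith
  rw [e2, Complex.norm_real, Real.norm_eq_abs, abs_of_nonneg (by positivity)]
  ring

/-- Crude Kusmin–Landau. -/
lemma kusmin (f : ℕ → ℝ) (δ : ℝ) (hδ : 0 < δ) (a b : ℕ) (hab : a ≤ b)
    (h1 : ∀ k, a ≤ k → k ≤ b → δ ≤ f (k + 1) - f k)
    (h2 : ∀ k, a ≤ k → k ≤ b → f (k + 1) - f k ≤ 1 - δ)
    (hm : ∀ k, a ≤ k → k < b → f (k + 1) - f k ≤ f (k + 2) - f (k + 1)) :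
    ‖∑ k ∈ Ico a b, ee (f k)‖ ≤ 2 / δ ^ 2 := by
  set g : ℕ → ℝ := fun k => f (k + 1) - f k with hg
  have hδ2 : δ ≤ 1 / 2 := by
    have := h1 a le_rfl hab; have := h2 a le_rfl hab; linarith
  have hn : ∀ k, a ≤ k → k ≤ b → 4 * δ ≤ ‖ee (g k) - 1‖ := fun k hk hk' =>
    le_trans (by linarith [nrm_ge_of_mem (h1 k hk hk') (h2 k hk hk')]) (norm_ee_sub_one_ge (g k))
  have hne : ∀ k, a ≤ k → k ≤ b → ee (g k) - 1 ≠ 0 := fun k hk hk' h0 => by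
    have := hn k hk hk'; rw [h0, norm_zero] at this; linarith
  have e1 : ∑ k ∈ Ico a b, ee (f k)
      = ∑ k ∈ Ico a b, (ee (g k) - 1)⁻¹ * (ee (f (k + 1)) - ee (f k)) := by
    refine sum_congr rfl fun k hk => ?_
    rw [mem_Ico] at hk
    have hne' := hne k hk.1 hk.2.le
    have : ee (f (k + 1)) = ee (f k) * ee (g k) := by
      rw [← ee_add]; congr 1; simp [hg]
    rw [this]; field_simp
  rw [e1]
  have hP : ∀ j, a ≤ j → j ≤ b → ‖∑ k ∈ Ico a j, (ee (f (k + 1)) - ee (f k))‖ ≤ 2 := by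
    intro j hj _
    rw [sum_Ico_sub (fun k => ee (f k)) hj]
    refine (norm_sub_le _ _).trans ?_
    rw [norm_ee, norm_ee]; norm_num
  refine (abel_bound _ _ a b hab 2 hP).trans ?_
  have i1 : ‖(ee (g b) - 1)⁻¹‖ ≤ 1 / (4 * δ) := by
    rw [norm_inv, ← one_div]
    exact one_div_le_one_div_of_le (by positivity) (hn b hab le_rfl)
  have i2 : ∀ k ∈ Ico a b, ‖(ee (g (k+1)) - 1)⁻¹ - (ee (g k) - 1)⁻¹‖
      ≤ (2 * Real.pi / (16 * δ ^ 2)) * (g (k + 1) - g k) := by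
    intro k hk
    rw [mem_Ico] at hk
    have n1 := hn k hk.1 hk.2.le
    have n2 := hn (k+1) (by omega) (by omega)
    have := hne k hk.1 hk.2.le
    have := hne (k+1) (by omega) (by omega)
    have e : (ee (g (k+1)) - 1)⁻¹ - (ee (g k) - 1)⁻¹
      = (ee (g k) - ee (g (k+1))) / ((ee (g (k+1)) - 1) * (ee (g k) - 1)) := by
      field_simp; ring
    rw [e, norm_div, norm_mul, div_le_iff₀ (by
      have : 0 < 4 * δ := by positivity
      exact mul_pos (by linarith) (by linarith))]
    have hmono : 0 ≤ g (k+1) - g k := sub_nonneg.2 (hm k hk.1 hk.2)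
    have hl := norm_ee_sub_ee_le (g k) (g (k+1))
    rw [abs_sub_comm, abs_of_nonneg hmono] at hl
    have hprod : 16 * δ ^ 2 ≤ ‖ee (g (k+1)) - 1‖ * ‖ee (g k) - 1‖ := by
      calc 16 * δ ^ 2 = (4 * δ) * (4 * δ) := by ring
        _ ≤ _ := mul_le_mul n2 n1 (by positivity) (norm_nonneg _)
    calc _ ≤ _ := hl
      _ = (2 * Real.pi / (16 * δ ^ 2)) * (g (k + 1) - g k) * (16 * δ ^ 2) := by field_simp
      _ ≤ _ := mul_le_mul_of_nonneg_left hprod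
        (mul_nonneg (by have := Real.pi_pos; positivity) hmono)
  have i3 := sum_le_sum i2
  rw [← mul_sum, sum_Ico_sub g hab] at i3
  have i4 : g b - g a ≤ 1 := by
    have := h1 a le_rfl hab; have := h2 b hab le_rfl
    simp only [hg]; linarith
  have i5 : (2 * Real.pi / (16 * δ ^ 2)) * (g b - g a) ≤ 2 * Real.pi / (16 * δ ^ 2) := by
    have : 0 ≤ 2 * Real.pi / (16 * δ ^ 2) := by have := Real.pi_pos; positivity
    nlinarith
  have i6 : 2 * Real.pi / (16 * δ ^ 2) ≤ (1/2) / δ^2 := by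
    have := Real.pi_le_four
    rw [div_le_div_iff₀ (by positivity) (by positivity)]
    nlinarith [sq_nonneg δ]
  have i7 : 1 / (4 * δ) ≤ (1/2) / δ^2 := by
    rw [div_le_div_iff₀ (by positivity) (by positivity)]
    nlinarith
  have : 2 / δ^2 = 2 * ((1/2) / δ^2 + (1/2) / δ^2) := by ring
  rw [this]; linarith

lemma geom_bound (c : ℝ) (a b : ℕ) (hab : a ≤ b) :
    ‖∑ k ∈ Ico a b, ee (c * k)‖ * nrm c ≤ 1 / 2 := by
  have h : (∑ k ∈ Ico a b, ee (c * k)) * (ee c - 1) = ee c ^ b - ee c ^ a := by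
    simp_rw [ee_nat_mul]; exact geom_sum_Ico_mul (ee c) hab
  have h2 : ‖(∑ k ∈ Ico a b, ee (c * k))‖ * ‖ee c - 1‖ ≤ 2 := by
    rw [← norm_mul, h]
    refine (norm_sub_le _ _).trans ?_
    rw [norm_pow, norm_pow, norm_ee]; norm_num
  have := norm_ee_sub_one_ge c
  have := mul_le_mul_of_nonneg_left this (norm_nonneg (∑ k ∈ Ico a b, ee (c * k)))
  linarith

noncomputable def phi (N x : ℝ) : ℝ := (1 / N + nrm x)⁻¹

lemma phi_nonneg {N : ℝ} (hN : 0 ≤ N) (x : ℝ) : 0 ≤ phi N x := by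
  unfold phi; have := nrm_nonneg x; positivity

lemma vdc_identity (z : ℕ → ℂ) (hz : ∀ k, ‖z k‖ = 1) (N : ℕ) :
    ‖∑ k ∈ range N, z k‖ ^ 2 = N + 2 * (∑ h ∈ range N, ∑ k ∈ range (N - 1 - h),
      z (k + (h + 1)) * (starRingEnd ℂ) (z k)).re := by
  induction N with
  | zero => simp
  | succ N ih =>
    have e1 : ∑ h ∈ range (N + 1), ∑ k ∈ range (N + 1 - 1 - h),
        z (k + (h + 1)) * (starRingEnd ℂ) (z k)
        = ∑ h ∈ range N, ∑ k ∈ range (N - 1 - h), z (k + (h + 1)) * (starRingEnd ℂ) (z k)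
          + z N * (starRingEnd ℂ) (∑ k ∈ range N, z k) := by
      rw [sum_range_succ]
      simp only [Nat.add_sub_cancel, Nat.sub_self, range_zero, sum_empty, add_zero]
      rw [map_sum, mul_sum, ← sum_range_reflect (fun k => z N * (starRingEnd ℂ) (z k)),
        ← sum_add_distrib]
      refine sum_congr rfl fun h hh => ?_
      rw [mem_range] at hh
      have : N - h = (N - 1 - h) + 1 := by omega
      rw [this, sum_range_succ]
      congr 3; omega
    rw [e1, sum_range_succ, Complex.add_re, mul_add, ← add_assoc]
    have e2 : ‖∑ k ∈ range N, z k + z N‖ ^ 2 = ‖∑ k ∈ range N, z k‖ ^ 2 + 1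
      + 2 * (z N * (starRingEnd ℂ) (∑ k ∈ range N, z k)).re := by
      have hz' := hz N
      rw [add_comm, ← Complex.normSq_eq_norm_sq, Complex.normSq_add, Complex.normSq_eq_norm_sq,
        Complex.normSq_eq_norm_sq, hz']; ring
    rw [e2, ih]; push_cast; ring

lemma vdc (z : ℕ → ℂ) (hz : ∀ k, ‖z k‖ = 1) (N : ℕ) :
    ‖∑ k ∈ range N, z k‖ ^ 2 ≤ N + 2 * ∑ h ∈ range N, ‖∑ k ∈ range (N - 1 - h),
      z (k + (h + 1)) * (starRingEnd ℂ) (z k)‖ := by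
  rw [vdc_identity z hz N]
  have := (Complex.re_le_norm _).trans (norm_sum_le (range N) (fun h => ∑ k ∈ range (N - 1 - h),
      z (k + (h + 1)) * (starRingEnd ℂ) (z k)))
  linarith

lemma mult_bound (g : ℕ → ℝ) (hg : ∀ m, 0 ≤ g m) (N X D : ℕ)
    (hD : ∀ m, 1 ≤ m → m ≤ X * N → m.divisors.card ≤ D) :
    ∑ h ∈ Icc 1 N, ∑ m ∈ Icc 1 X, g (m * h) ≤ D * ∑ r ∈ Icc 1 (X * N), g r := by
  rw [← sum_product' (Icc 1 N) (Icc 1 X) (fun h m => g (m * h))]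
  have hmaps : ∀ x ∈ Icc 1 N ×ˢ Icc 1 X, x.2 * x.1 ∈ Icc 1 (X * N) := by
    intro x hx
    simp only [mem_product, mem_Icc] at hx ⊢
    exact ⟨Nat.mul_pos hx.2.1 hx.1.1, Nat.mul_le_mul hx.2.2 hx.1.2⟩
  rw [← sum_fiberwise_of_maps_to hmaps, mul_sum]
  refine sum_le_sum fun r hr => ?_
  rw [mem_Icc] at hr
  have : ∑ x ∈ (Icc 1 N ×ˢ Icc 1 X) with x.2 * x.1 = r, g (x.2 * x.1)
      = (#{x ∈ Icc 1 N ×ˢ Icc 1 X | x.2 * x.1 = r}) * g r := by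
    rw [← nsmul_eq_mul]
    apply sum_eq_card_nsmul
    intro x hx; rw [(mem_filter.1 hx).2]
  rw [this]
  apply mul_le_mul_of_nonneg_right _ (hg r)
  have hc : #{x ∈ Icc 1 N ×ˢ Icc 1 X | x.2 * x.1 = r} ≤ r.divisors.card := by
    apply card_le_card_of_injOn (fun x => x.1)
    · intro x hx
      have := (mem_filter.1 hx).2
      simp only [Nat.mem_divisors, mem_coe]
      exact ⟨⟨x.2, by rw [← this]; ring⟩, by omega⟩
    · intro x hx y hy hxy
      have h1 := (mem_filter.1 hx)
      have h2 := (mem_filter.1 hy)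
      have h3 := mem_product.1 h1.1
      have h4 := (mem_Icc.1 h3.1).1
      simp only at hxy
      refine Prod.ext hxy ?_
      have := h1.2.trans h2.2.symm
      rw [hxy] at this h4
      exact Nat.eq_of_mul_eq_mul_right (by omega) this
  exact_mod_cast hc.trans (hD r hr.1 hr.2)

open Polynomial in
lemma diff_poly (p : ℝ[X]) (d : ℕ) (hp : p.natDegree ≤ d + 2) (h : ℝ) :
    (taylor h p - p).natDegree ≤ d + 1 ∧
    (taylor h p - p).coeff (d + 1) = (d + 2) * h * p.coeff (d + 2) := by
  constructor
  · rw [natDegree_le_iff_coeff_eq_zero]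
    intro N hN
    rw [coeff_sub, taylor_coeff]
    rcases Nat.lt_or_ge (d + 2) N with h1 | h1
    · rw [coeff_eq_zero_of_natDegree_lt (by omega), sub_zero,
        hasseDeriv_eq_zero_of_lt_natDegree _ _ (by omega), eval_zero]
    · have : N = d + 2 := by omega
      subst this
      have hd : (hasseDeriv (d + 2) p).natDegree ≤ 0 :=
        (natDegree_hasseDeriv_le p (d+2)).trans (by omega)
      rw [eq_C_of_natDegree_le_zero hd, eval_C, hasseDeriv_coeff]
      simp
  · rw [coeff_sub, taylor_coeff]
    have hd : (hasseDeriv (d + 1) p).natDegree ≤ 1 :=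
        (natDegree_hasseDeriv_le p (d+1)).trans (by omega)
    rw [eval_eq_sum_range' (n := 2) (by omega), sum_range_succ, sum_range_one,
      hasseDeriv_coeff, hasseDeriv_coeff]
    have : (1 + (d + 1)).choose (d + 1) = d + 2 := by
      rw [show 1 + (d + 1) = (d + 1) + 1 by ring, Nat.choose_succ_self_right]
    rw [this]
    simp only [Nat.zero_add, Nat.choose_self, pow_zero, pow_one]
    rw [show 1 + (d + 1) = d + 2 by ring]
    push_cast; ring

open Polynomial in
lemma weyl_ind (d : ℕ) : ∃ C > (0:ℝ), ∀ N D : ℕ, 1 ≤ N → 1 ≤ D →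
    (∀ m, 1 ≤ m → m ≤ N ^ d → m.divisors.card ≤ D) →
    ∀ p : ℝ[X], p.natDegree ≤ d + 1 → ∀ N' ≤ N,
    (‖∑ k ∈ range N', ee (p.eval (k : ℝ))‖ / N) ^ (2 ^ d) ≤
      C * (1 / N + (D:ℝ) ^ d / (N:ℝ) ^ (d + 1) *
        ∑ m ∈ Icc 1 (N ^ d), phi N (m * ((d + 1).factorial * p.coeff (d + 1)))) := by
  induction d with
  | zero =>
    refine ⟨3/2, by norm_num, fun N D hN hD _ p hp N' hN' => ?_⟩
    have hN0 : (0:ℝ) < N := by exact_mod_cast hN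
    set c := p.coeff 1 with hc
    have hev : ∀ k : ℕ, ee (p.eval (k:ℝ)) = ee (c * k) * ee (p.coeff 0) := by
      intro k
      rw [← ee_add, eval_eq_sum_range' (n := 2) (by omega), sum_range_succ, sum_range_one]
      congr 1; rw [hc]; simp; ring
    simp only [pow_zero, pow_one, Icc_self, sum_singleton, Nat.factorial, zero_add, mul_one,
      Nat.cast_one, one_mul]
    simp_rw [hev]
    rw [← sum_mul, norm_mul, norm_ee, mul_one]
    have h1 := geom_bound c 0 N' (Nat.zero_le _)
    rw [Nat.Ico_zero_eq_range] at h1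
    have h2 : ‖∑ k ∈ range N', ee (c * k)‖ ≤ N := by
      refine (norm_sum_le _ _).trans ?_
      simp_rw [norm_ee]; simp; exact_mod_cast hN'
    set s := ‖∑ k ∈ range N', ee (c * k)‖
    have hphi : s ≤ 3/2 * phi N c := by
      unfold phi
      have := nrm_nonneg c
      rw [← div_eq_mul_inv, le_div_iff₀ (by positivity), mul_add]
      have : s * (1 / N) ≤ 1 := by rw [mul_one_div, div_le_one hN0]; exact h2
      linarith
    rw [div_le_iff₀ hN0]
    have : 3 / 2 * (1 / (N:ℝ) + 1 / N * phi N c) * N = 3/2 + 3/2 * phi N c := by field_simp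
    rw [this]; linarith
  | succ d ih =>
    obtain ⟨C, hC, ih⟩ := ih
    refine ⟨2 ^ (2 ^ d) * (1 + 2 ^ (2 ^ d) * C), by positivity,
      fun N D hN hD hdiv p hp N' hN' => ?_⟩
    have hN0 : (0:ℝ) < N := by exact_mod_cast hN
    have hN1 : (1:ℝ) ≤ N := by exact_mod_cast hN
    set c := p.coeff (d + 1 + 1) with hc
    set A : ℕ → ℝ := fun h => ‖∑ k ∈ range (N' - h),
      ee ((taylor (h:ℝ) p - p).eval (k:ℝ))‖ / N with hA
    have hA0 : ∀ h, 0 ≤ A h := fun h => by positivity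
    have step1 : (‖∑ k ∈ range N', ee (p.eval (k : ℝ))‖ / N) ^ 2
        ≤ 1 / N + 2 * ((∑ h ∈ Icc 1 N, A h) / N) := by
      have h1 := vdc (fun k => ee (p.eval (k:ℝ))) (fun k => norm_ee _) N'
      have h2 : ∑ h ∈ range N', ‖∑ k ∈ range (N' - 1 - h), ee (p.eval ((k + (h + 1) : ℕ):ℝ)) *
          (starRingEnd ℂ) (ee (p.eval (k:ℝ)))‖ ≤ N * ∑ h ∈ Icc 1 N, A h := by
        have e : ∑ h ∈ range N', ‖∑ k ∈ range (N' - 1 - h), ee (p.eval ((k + (h + 1) : ℕ):ℝ)) *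
          (starRingEnd ℂ) (ee (p.eval (k:ℝ)))‖ = ∑ h ∈ range N', N * A (h + 1) := by
          refine sum_congr rfl fun h _ => ?_
          simp only [hA]
          rw [mul_div_cancel₀ _ hN0.ne', show N' - 1 - h = N' - (h + 1) by omega]
          congr 1
          refine sum_congr rfl fun k _ => ?_
          rw [← ee_sub, eval_sub, taylor_eval]
          push_cast; rfl
        rw [e, ← mul_sum]
        apply mul_le_mul_of_nonneg_left _ hN0.le
        rw [← Finset.Ico_add_one_right_eq_Icc, sum_Ico_eq_sum_range]
        refine (sum_le_sum_of_subset_of_nonneg (range_subset_range.2 hN') fun i _ _ => hA0 _).trans ?_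
        simp [add_comm]
      rw [div_pow, div_le_iff₀ (by positivity)]
      have h3 : (N':ℝ) ≤ N := by exact_mod_cast hN'
      have : (1 / (N:ℝ) + 2 * ((∑ h ∈ Icc 1 N, A h) / N)) * (N:ℝ) ^ 2
          = N + 2 * (N * ∑ h ∈ Icc 1 N, A h) := by field_simp
      rw [this]; linarith
    have step2 : ((∑ h ∈ Icc 1 N, A h) / N) ^ (2 ^ d) ≤ (∑ h ∈ Icc 1 N, A h ^ (2 ^ d)) / N := by
      have h1 := Real.pow_arith_mean_le_arith_mean_pow (Icc 1 N) (fun _ => 1 / (N:ℝ)) A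
        (fun _ _ => by positivity) (by simp; field_simp) (fun h _ => hA0 h) (2 ^ d)
      rw [← mul_sum, ← mul_sum] at h1
      rw [div_eq_mul_one_div, mul_comm, div_eq_mul_one_div (∑ h ∈ Icc 1 N, A h ^ (2 ^ d)),
        mul_comm (∑ h ∈ Icc 1 N, A h ^ (2 ^ d))]
      exact h1
    have step3 : (∑ h ∈ Icc 1 N, A h ^ (2 ^ d)) / N ≤ C * (1 / N + (D:ℝ) ^ (d + 1) / (N:ℝ) ^ (d + 2) *
        ∑ m ∈ Icc 1 (N ^ (d + 1)), phi N (m * ((d + 1 + 1).factorial * c))) := by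
      have h1 : ∀ h ∈ Icc 1 N, A h ^ (2 ^ d) ≤ C * (1 / N + (D:ℝ) ^ d / (N:ℝ) ^ (d + 1) *
        ∑ m ∈ Icc 1 (N ^ d), phi N ((m * h : ℕ) * ((d + 1 + 1).factorial * c))) := by
        intro h hh
        obtain ⟨d1, d2⟩ := diff_poly p d hp h
        have := ih N D hN hD (fun m h1 h2 => hdiv m h1 (h2.trans (Nat.pow_le_pow_right hN (by omega))))
          _ d1 (N' - h) (by omega)
        refine this.trans (le_of_eq ?_)
        congr 3
        refine sum_congr rfl fun m _ => ?_
        rw [d2, Nat.factorial_succ (d + 1)]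
        congr 1; push_cast; ring
      have h2 := sum_le_sum h1
      rw [← mul_sum, sum_add_distrib, ← mul_sum] at h2
      have h3 := mult_bound (fun m => phi N (m * ((d + 1 + 1).factorial * c)))
        (fun m => phi_nonneg hN0.le _) N (N ^ d) D (by rw [← pow_succ]; exact hdiv)
      rw [← pow_succ] at h3
      rw [div_le_iff₀ hN0]
      refine h2.trans ?_
      have h4 : (D:ℝ) ^ d / (N:ℝ) ^ (d + 1) * ∑ h ∈ Icc 1 N,  ∑ m ∈ Icc 1 (N ^ d),
          phi N ((m * h : ℕ) * ((d + 1 + 1).factorial * c)) ≤ (D:ℝ) ^ d / (N:ℝ) ^ (d + 1) * _ :=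
        mul_le_mul_of_nonneg_left h3 (by positivity)
      rw [mul_assoc]
      apply mul_le_mul_of_nonneg_left _ hC.le
      rw [add_mul]
      refine add_le_add ?_ (h4.trans (le_of_eq ?_))
      · simp; field_simp; exact le_refl _
      · generalize (∑ r ∈ Icc 1 (N ^ (d + 1)), phi (N:ℝ) (r * ((d + 1 + 1).factorial * c))) = T
        field_simp
        ring
    calc _ = ((‖∑ k ∈ range N', ee (p.eval (k : ℝ))‖ / N) ^ 2) ^ (2 ^ d) := by
          rw [← pow_mul, pow_succ]; ring_nf
      _ ≤ (1 / N + 2 * ((∑ h ∈ Icc 1 N, A h) / N)) ^ (2 ^ d) :=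
          pow_le_pow_left₀ (by positivity) step1 _
      _ ≤ 2 ^ (2 ^ d - 1) * ((1 / N) ^ (2 ^ d) + (2 * ((∑ h ∈ Icc 1 N, A h) / N)) ^ (2 ^ d)) :=
          add_pow_le (by positivity) (by have := sum_nonneg (fun h (_ : h ∈ Icc 1 N) => hA0 h); positivity) _
      _ ≤ 2 ^ (2 ^ d) * ((1 / N) ^ (2 ^ d) + (2 * ((∑ h ∈ Icc 1 N, A h) / N)) ^ (2 ^ d)) := by
          apply mul_le_mul_of_nonneg_right
          · exact pow_le_pow_right₀ (by norm_num) (Nat.sub_le _ _)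
          · have := sum_nonneg (fun h (_ : h ∈ Icc 1 N) => hA0 h); positivity
      _ ≤ 2 ^ (2 ^ d) * (1 / N + 2 ^ (2 ^ d) * (C * (1 / N + (D:ℝ) ^ (d + 1) / (N:ℝ) ^ (d + 2) *
        ∑ m ∈ Icc 1 (N ^ (d + 1)), phi N (m * ((d + 1 + 1).factorial * c))))) := by
          apply mul_le_mul_of_nonneg_left _ (by positivity)
          apply add_le_add
          · apply pow_le_of_le_one (by positivity) _ (by positivity)
            rw [div_le_one hN0]; exact hN1
          · rw [mul_pow]
            exact mul_le_mul_of_nonneg_left (step2.trans step3) (by positivity)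
      _ ≤ _ := by
          rw [mul_assoc]
          apply mul_le_mul_of_nonneg_left _ (by positivity)
          have : 0 ≤ (D:ℝ) ^ (d + 1) / (N:ℝ) ^ (d + 2) *
            ∑ m ∈ Icc 1 (N ^ (d + 1)), phi N (m * ((d + 1 + 1).factorial * c)) :=
            mul_nonneg (by positivity) (sum_nonneg fun m _ => phi_nonneg hN0.le _)
          rw [show d + 1 + 1 = d + 2 by ring] at *
          linarith

lemma divisor_bound (ε : ℝ) (hε : 0 < ε) : ∃ C ≥ (1:ℝ), ∀ m : ℕ, 1 ≤ m →
    (m.divisors.card : ℝ) ≤ C * (m:ℝ) ^ ε := by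
  have hl2 : 0 < Real.log 2 := Real.log_pos (by norm_num)
  set B : ℝ := 1 + 1 / (ε * Real.log 2) with hB
  have hB1 : 1 ≤ B := by rw [hB]; have : 0 < 1 / (ε * Real.log 2) := by positivity
                         linarith
  set P : ℕ := ⌈(2:ℝ) ^ (1 / ε)⌉₊ with hP
  refine ⟨B ^ P, one_le_pow₀ hB1, fun m hm => ?_⟩
  rw [Nat.card_divisors (by omega)]
  push_cast
  have h1 : ∀ p ∈ m.primeFactors, ((m.factorization p : ℝ) + 1)
      ≤ (if p < P then B else 1) * ((p:ℝ) ^ (m.factorization p)) ^ ε := by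
    intro p hp
    have hp2 : 2 ≤ p := (Nat.prime_of_mem_primeFactors hp).two_le
    have hp2' : (2:ℝ) ≤ p := by exact_mod_cast hp2
    set a := m.factorization p
    have e1 : ((p:ℝ) ^ a) ^ ε = ((p:ℝ) ^ ε) ^ a := by
      rw [← Real.rpow_natCast, ← Real.rpow_natCast, ← Real.rpow_mul (by positivity),
        ← Real.rpow_mul (by positivity), mul_comm]
    split_ifs with hlt
    · have h2 : ((2:ℝ) ^ ε) ^ a ≤ ((p:ℝ) ^ ε) ^ a :=
        pow_le_pow_left₀ (by positivity) (Real.rpow_le_rpow (by norm_num) hp2' hε.le) _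
      have h3 : 1 + a * (ε * Real.log 2) ≤ ((2:ℝ) ^ ε) ^ a := by
        rw [Real.rpow_def_of_pos (by norm_num), ← Real.exp_nat_mul]
        have := Real.add_one_le_exp (a * (Real.log 2 * ε))
        linarith
      have h4 : (a:ℝ) + 1 ≤ B * (1 + a * (ε * Real.log 2)) := by
        have : B * (1 + a * (ε * Real.log 2)) = 1 + 1 / (ε * Real.log 2) + a * (ε * Real.log 2) + a := by
          rw [hB]; field_simp; ring
        rw [this]
        have : 0 < 1 / (ε * Real.log 2) := by positivity
        have : 0 ≤ a * (ε * Real.log 2) := by positivity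
        linarith
      rw [e1]
      exact h4.trans (mul_le_mul_of_nonneg_left (h3.trans h2) (by linarith))
    · push Not at hlt
      have h5 : (2:ℝ) ≤ (p:ℝ) ^ ε := by
        have : (2:ℝ) ^ (1 / ε) ≤ p := (Nat.le_ceil _).trans (by exact_mod_cast hlt)
        calc (2:ℝ) = ((2:ℝ) ^ (1 / ε)) ^ ε := by
              rw [← Real.rpow_mul (by norm_num), one_div, inv_mul_cancel₀ hε.ne', Real.rpow_one]
          _ ≤ _ := Real.rpow_le_rpow (by positivity) this hε.le
      rw [one_mul, e1]
      have h6 : (2:ℝ) ^ a ≤ ((p:ℝ) ^ ε) ^ a := pow_le_pow_left₀ (by norm_num) h5 _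
      have h7 : a + 1 ≤ 2 ^ a := Nat.lt_two_pow_self
      have h8 : (a:ℝ) + 1 ≤ 2 ^ a := by exact_mod_cast h7
      linarith
  refine (prod_le_prod (fun p _ => by positivity) h1).trans ?_
  rw [prod_mul_distrib]
  have e2 : ∏ p ∈ m.primeFactors, ((p:ℝ) ^ (m.factorization p)) ^ ε = (m:ℝ) ^ ε := by
    rw [Real.finsetProd_rpow _ _ (fun p _ => by positivity)]
    congr 1
    have := Nat.prod_primeFactors_pow_factorization (n := m) (by omega)
    conv_rhs => rw [this]
    push_cast; rfl
  rw [e2]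
  apply mul_le_mul_of_nonneg_right _ (by positivity)
  rw [prod_ite, prod_const, prod_const_one, mul_one]
  apply pow_le_pow_right₀ hB1
  calc _ ≤ (range P).card := card_le_card (fun p hp => by
            rw [mem_range]; exact (mem_filter.1 hp).2)
    _ = P := card_range P

lemma nrm_add_int (x : ℝ) (k : ℤ) : nrm (x + k) = nrm x := by
  unfold nrm; rw [round_add_intCast]; push_cast; congr 1; ring

lemma sum_inv_le (q : ℕ) : ∑ r ∈ range q, 1 / ((r:ℝ) + 1) ≤ 1 + Real.log q := by
  have := harmonic_le_one_add_log q
  unfold harmonic at this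
  push_cast at this
  simpa [one_div] using this

lemma block (N : ℝ) (hN : 0 < N) (u : ℤ) (q : ℕ) (hq : 1 ≤ q) (huq : Int.gcd u q = 1) (x : ℝ)
    (e : ℕ → ℝ) (he : ∀ j < q, |e j| ≤ 1 / q) :
    ∑ j ∈ range q, phi N (x + u * j / q + e j) ≤ 6 * N + 12 * q * (1 + Real.log q) := by
  have hq0 : (0:ℝ) < q := by exact_mod_cast hq
  set c : ℤ := round (q * x) with hc
  set ψ : ℕ → ℝ := fun r => ((if r ≤ 2 then N else 0) + (if q ≤ r + 2 then N else 0))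
    + (6 * q * (1 / ((r:ℝ) + 1)) + 6 * q * (1 / ((q:ℝ) - r))) with hψ
  set i : ℕ → ℕ := fun j => ((u * j + c) % (q:ℤ)).toNat with hi
  have hi' : ∀ j, ((i j : ℕ) : ℤ) = (u * j + c) % (q:ℤ) := fun j =>
    Int.toNat_of_nonneg (Int.emod_nonneg _ (by omega))
  have hilt : ∀ j, i j < q := fun j => by
    have := Int.emod_lt_of_pos (u * j + c) (by omega : (0:ℤ) < q)
    have := hi' j; omega
  have key : ∀ j ∈ range q, phi N (x + u * j / q + e j) ≤ ψ (i j) := by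
    intro j hj
    rw [mem_range] at hj
    set r := i j with hr
    have hrq : (r:ℝ) + 1 ≤ q := by exact_mod_cast hilt j
    have hr0 : (0:ℝ) ≤ r := by positivity
    have hphiN : phi N (x + u * j / q + e j) ≤ N := by
      unfold phi
      have := nrm_nonneg (x + u * j / q + e j)
      rw [inv_le_comm₀ (by positivity) hN, ← one_div]; linarith
    have p1 : 0 ≤ 6 * q * (1 / ((r:ℝ) + 1)) := by positivity
    have p2 : 0 ≤ 6 * q * (1 / ((q:ℝ) - r)) := by
      have : 0 < (q:ℝ) - r := by linarith
      positivity
    have p3 : 0 ≤ (if r ≤ 2 then N else 0) := by split_ifs <;> linarith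
    have p4 : 0 ≤ (if q ≤ r + 2 then N else 0) := by split_ifs <;> linarith
    by_cases h1 : r ≤ 2
    · simp only [hψ, if_pos h1]; linarith
    by_cases h2 : q ≤ r + 2
    · simp only [hψ, if_pos h2]; linarith
    push Not at h1 h2
    have h1' : (3:ℝ) ≤ r := by exact_mod_cast h1
    have h2' : (r:ℝ) + 3 ≤ q := by exact_mod_cast h2
    -- nrm bound
    set μ : ℝ := min r (q - r) with hμ
    have hμ3 : 3 ≤ μ := le_min h1' (by linarith)
    have n1 : μ / q ≤ nrm ((r:ℝ) / q) := by
      apply nrm_ge_of_mem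
      · exact div_le_div_of_nonneg_right (min_le_left _ _) hq0.le
      · rw [le_sub_iff_add_le, ← add_div, div_le_one hq0]
        have := min_le_right (r:ℝ) (q - r); linarith
    have n2 : nrm ((r:ℝ) / q) ≤ nrm (x + u * j / q + e j) + 2 / q := by
      have hz : (r:ℝ) / q = ((u * j + c : ℤ):ℝ) / q + ((-((u * j + c) / (q:ℤ)) : ℤ):ℝ) := by
        have h := Int.emod_add_mul_ediv (u * j + c) q
        rw [← hi' j] at h
        have h' : ((r:ℕ):ℝ) + (q:ℝ) * (((u * j + c) / (q:ℤ) : ℤ) : ℝ) = ((u * j + c : ℤ):ℝ) := by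
          exact_mod_cast h
        rw [← h']; push_cast; field_simp; ring
      rw [hz, nrm_add_int]
      refine (nrm_le_add _ (x + u * j / q + e j)).trans ?_
      have : ((u * j + c : ℤ):ℝ) / q - (x + u * j / q + e j) = -((q * x - c) / q) - e j := by
        push_cast; field_simp; ring
      rw [this]
      have a1 : |(q * x - c) / q| ≤ 1 / q := by
        rw [abs_div, abs_of_pos hq0]
        apply div_le_div_of_nonneg_right _ hq0.le
        have := abs_sub_round (q * x); rw [← hc] at this; linarith
      have a2 := he j hj
      have a3 := abs_sub (-((q * x - c) / q)) (e j)
      rw [abs_neg] at a3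
      have : (2:ℝ) / q = 1 / q + 1 / q := by ring
      linarith
    have n3 : μ / (3 * q) ≤ nrm (x + u * j / q + e j) := by
      have : μ / (3 * q) + 2 / q ≤ μ / q := by
        rw [div_add_div _ _ (by positivity) (by positivity), div_le_div_iff₀ (by positivity) (by positivity)]
        nlinarith [mul_pos hq0 hq0]
      linarith
    have n4 : phi N (x + u * j / q + e j) ≤ 3 * q / μ := by
      unfold phi
      have : 0 < 1 / N := by positivity
      calc _ ≤ (μ / (3 * q))⁻¹ := by
            apply inv_anti₀ (by positivity); linarith
        _ = _ := by rw [inv_div]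
    have n5 : 3 * q / μ ≤ 3 * q * (1 / (r:ℝ)) + 3 * q * (1 / (q - r)) := by
      have s1 : 0 ≤ 3 * q * (1 / (r:ℝ)) := by positivity
      have s2 : 0 ≤ 3 * q * (1 / ((q:ℝ) - r)) := by
        have : 0 < (q:ℝ) - r := by linarith
        positivity
      rcases min_choice (r:ℝ) (q - r) with h | h
      · rw [hμ, h, div_eq_mul_one_div]; linarith
      · rw [hμ, h, div_eq_mul_one_div]; linarith
    have n6 : 3 * q * (1 / (r:ℝ)) ≤ 6 * q * (1 / ((r:ℝ) + 1)) := by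
      rw [mul_one_div, mul_one_div, div_le_div_iff₀ (by positivity) (by positivity)]
      nlinarith
    have n7 : 3 * q * (1 / ((q:ℝ) - r)) ≤ 6 * q * (1 / ((q:ℝ) - r)) := by
      have : 0 < (q:ℝ) - r := by linarith
      apply mul_le_mul_of_nonneg_right _ (by positivity); linarith
    simp only [hψ]
    linarith
  have inj : Set.InjOn i (range q : Finset ℕ) := by
    intro a ha b hb hab
    simp only [coe_range, Set.mem_Iio] at ha hb
    have h1 : (u * a + c) % (q:ℤ) = (u * b + c) % (q:ℤ) := by rw [← hi', ← hi', hab]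
    have h2 : (q:ℤ) ∣ u * (a - b) := by
      have := Int.dvd_of_emod_eq_zero (Int.emod_eq_emod_iff_emod_sub_eq_zero.1 h1)
      rwa [show u * a + c - (u * b + c) = u * (a - b) by ring] at this
    have h3 : (q:ℤ) ∣ (a - b : ℤ) := by
      refine IsCoprime.dvd_of_dvd_mul_left ?_ h2
      rw [Int.isCoprime_iff_gcd_eq_one, Int.gcd_comm]; exact huq
    have := Int.eq_zero_of_abs_lt_dvd h3 (by rw [abs_lt]; omega)
    omega
  have maps : Set.MapsTo i (range q : Finset ℕ) (range q : Finset ℕ) := by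
    intro j _; simpa using hilt j
  have hsum : ∑ j ∈ range q, ψ (i j) = ∑ r ∈ range q, ψ r := by
    apply sum_nbij i (fun j hj => maps hj) inj _ (fun _ _ => rfl)
    exact surjOn_of_injOn_of_card_le i maps inj le_rfl
  refine (sum_le_sum key).trans ?_
  rw [hsum]
  simp only [hψ]
  rw [sum_add_distrib, sum_add_distrib, sum_add_distrib, ← mul_sum, ← mul_sum]
  have b1 : ∑ r ∈ range q, (if r ≤ 2 then N else 0) ≤ 3 * N := by
    rw [← sum_filter, sum_const, nsmul_eq_mul]
    apply mul_le_mul_of_nonneg_right _ hN.le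
    have : #{r ∈ range q | r ≤ 2} ≤ (range 3).card :=
      card_le_card fun r hr => by rw [mem_range]; have := (mem_filter.1 hr).2; omega
    rw [card_range] at this; exact_mod_cast this
  have b2 : ∑ r ∈ range q, (if q ≤ r + 2 then N else 0) ≤ 3 * N := by
    rw [← sum_filter, sum_const, nsmul_eq_mul]
    apply mul_le_mul_of_nonneg_right _ hN.le
    have : #{r ∈ range q | q ≤ r + 2} ≤ (Ico (q - 2) q).card :=
      card_le_card fun r hr => by
        have := (mem_filter.1 hr).2; have := mem_range.1 (mem_filter.1 hr).1
        rw [mem_Ico]; omega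
    rw [Nat.card_Ico] at this
    have : #{r ∈ range q | q ≤ r + 2} ≤ 3 := by omega
    exact_mod_cast this
  have b3 := sum_inv_le q
  have b4 : ∑ r ∈ range q, 1 / ((q:ℝ) - r) = ∑ r ∈ range q, 1 / ((r:ℝ) + 1) := by
    rw [← sum_range_reflect]
    refine sum_congr rfl fun j hj => ?_
    rw [mem_range] at hj
    congr 1
    have : ((q - 1 - j : ℕ):ℝ) = (q:ℝ) - 1 - j := by
      rw [Nat.cast_sub (by omega), Nat.cast_sub hq]; simp
    rw [this]; ring
  rw [b4]
  have b5 : 6 * (q:ℝ) * ∑ r ∈ range q, 1 / ((r:ℝ) + 1) ≤ 6 * q * (1 + Real.log q) :=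
    mul_le_mul_of_nonneg_left b3 (by positivity)
  linarith

lemma sum_range_mul_eq (f : ℕ → ℝ) (q B : ℕ) :
    ∑ m ∈ range (B * q), f m = ∑ b ∈ range B, ∑ j ∈ range q, f (b * q + j) := by
  induction B with
  | zero => simp
  | succ B ih => rw [sum_range_succ, ← ih, Nat.succ_mul, sum_range_add]

lemma lin_sum (N : ℝ) (hN : 0 < N) (u : ℤ) (q : ℕ) (hq : 1 ≤ q) (huq : Int.gcd u q = 1) (t : ℝ)
    (ht : |t - u / q| ≤ 1 / (q:ℝ) ^ 2) (F X : ℕ) (hF : 1 ≤ F) :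
    ∑ m ∈ Icc 1 X, phi N (m * (F * t)) ≤
      ((F * X : ℝ) / q + 1) * (6 * N + 12 * q * (1 + Real.log q)) := by
  have hq0 : (0:ℝ) < q := by exact_mod_cast hq
  set B := F * X / q + 1 with hB
  have h0 : ∑ m ∈ Icc 1 X, phi N (m * (F * t)) ≤ ∑ m ∈ range (B * q), phi N (m * t) := by
    have e : ∑ m ∈ Icc 1 X, phi N (m * (F * t))
        = ∑ m ∈ (Icc 1 X).image (fun m => F * m), phi N (m * t) := by
      rw [sum_image]
      · refine sum_congr rfl fun m _ => ?_
        push_cast; congr 1; ring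
      · intro a _ b _ h
        exact Nat.eq_of_mul_eq_mul_left (by omega) h
    rw [e]
    apply sum_le_sum_of_subset_of_nonneg
    · intro m hm
      obtain ⟨k, hk, rfl⟩ := mem_image.1 hm
      rw [mem_Icc] at hk
      rw [mem_range, hB]
      have h1 : F * k ≤ F * X := Nat.mul_le_mul_left _ hk.2
      have h2 := Nat.lt_div_mul_add (a := F * X) (b := q) (by omega)
      rw [Nat.add_mul, one_mul]; omega
    · intro m _ _; exact phi_nonneg hN.le _
  refine h0.trans ?_
  rw [sum_range_mul_eq]
  have h1 : ∀ b ∈ range B, ∑ j ∈ range q, phi N ((b * q + j : ℕ) * t)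
      ≤ 6 * N + 12 * q * (1 + Real.log q) := by
    intro b _
    have := block N hN u q hq huq (b * q * t) (fun j => j * (t - u / q)) (by
      intro j hj
      have hj' : (j:ℝ) ≤ q := by exact_mod_cast hj.le
      rw [abs_mul, abs_of_nonneg (by positivity : (0:ℝ) ≤ j)]
      calc (j:ℝ) * |t - u / q| ≤ q * (1 / (q:ℝ)^2) :=
            mul_le_mul hj' ht (abs_nonneg _) hq0.le
        _ = 1 / q := by field_simp)
    refine le_trans (le_of_eq (sum_congr rfl fun j _ => ?_)) this
    congr 1; push_cast; field_simp; ring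
  refine (sum_le_sum h1).trans ?_
  rw [sum_const, card_range, nsmul_eq_mul]
  apply mul_le_mul_of_nonneg_right
  · rw [hB]; push_cast
    have : ((F * X / q : ℕ):ℝ) ≤ ((F * X : ℕ):ℝ) / q := Nat.cast_div_le
    push_cast at this; linarith
  · have : 0 ≤ Real.log q := Real.log_natCast_nonneg q
    positivity

set_option maxHeartbeats 1000000 in
open Polynomial in
theorem weyl (d : ℕ) (hd : 1 ≤ d) (Δ : ℝ) (hΔ0 : 0 < Δ) (hΔ1 : Δ < 1) (ε : ℝ) (hε : 0 < ε) :
    ∃ C > (0:ℝ), ∀ (t : ℝ) (u q : ℤ) (M : ℝ), IsApproximant t u q → 1 ≤ M →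
      M ^ Δ < (q:ℝ) → (q:ℝ) ≤ M ^ (((d + 1 : ℕ) : ℝ) - Δ) →
      ∀ p : ℝ[X], p.natDegree ≤ d + 1 → p.coeff (d + 1) = t → ∀ N' : ℕ, (N':ℝ) ≤ M →
      ‖∑ k ∈ range N', ee (p.eval (k:ℝ))‖ ≤ C * M ^ (1 - Δ / 2 ^ d + ε) := by
  obtain ⟨C0, hC0, hw⟩ := weyl_ind d
  set e : ℝ := 2 ^ d * ε / 2 with he
  have he0 : 0 < e := by positivity
  set ε1 : ℝ := e / (d ^ 2 + 1) with hε1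
  have hε10 : 0 < ε1 := by positivity
  obtain ⟨C1, hC1, hdiv⟩ := divisor_bound ε1 hε10
  set F : ℕ := (d + 1).factorial with hF
  have hF1 : 1 ≤ F := Nat.factorial_pos _
  have hF1' : (1:ℝ) ≤ F := by exact_mod_cast hF1
  set C2 : ℝ := 1 + ((d + 1 : ℕ):ℝ) / e with hC2
  have hC21 : 1 ≤ C2 := by rw [hC2]; have : 0 ≤ ((d + 1 : ℕ):ℝ) / e := by positivity
                           linarith
  set C3 : ℝ := C0 * (2 + (2 * C1) ^ d * 2 ^ (d + 1) * (48 * C2 * F)) with hC3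
  have hC30 : 0 < C3 := by positivity
  refine ⟨C3 ^ ((1:ℝ) / 2 ^ d), by positivity, ?_⟩
  intro t u q M happ hM hq1 hq2 p hp hpt N' hN'
  obtain ⟨hq0, hgcd, htq⟩ := happ
  obtain ⟨Q, rfl⟩ := Int.eq_ofNat_of_zero_le (by omega : 0 ≤ q)
  have hQ1 : 1 ≤ Q := by exact_mod_cast hq0
  rw [Int.cast_natCast] at *
  have hM0 : 0 < M := by linarith
  have hQ0 : (0:ℝ) < Q := by exact_mod_cast hQ1
  set N := ⌊M⌋₊ with hN
  have hN1 : 1 ≤ N := Nat.le_floor (by simpa using hM)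
  have hN0 : (0:ℝ) < N := by exact_mod_cast hN1
  have hNM : (N:ℝ) ≤ M := Nat.floor_le hM0.le
  have hMN : M ≤ 2 * N := by
    have := Nat.lt_floor_add_one M
    have : (1:ℝ) ≤ N := by exact_mod_cast hN1
    linarith
  have hN'N : N' ≤ N := Nat.le_floor hN'
  set D : ℕ := ⌈C1 * ((N ^ d : ℕ):ℝ) ^ ε1⌉₊ with hD
  have hNd1 : (1:ℝ) ≤ ((N ^ d : ℕ):ℝ) := by exact_mod_cast Nat.one_le_pow _ _ hN1
  have hx1 : 1 ≤ C1 * ((N ^ d : ℕ):ℝ) ^ ε1 := by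
    have := Real.one_le_rpow hNd1 hε10.le
    nlinarith
  have hD1 : 1 ≤ D := by
    have : 0 < D := Nat.ceil_pos.2 (by linarith)
    omega
  have hDle : (D:ℝ) ≤ 2 * C1 * M ^ (d * ε1) := by
    have h1 : (D:ℝ) < C1 * ((N ^ d : ℕ):ℝ) ^ ε1 + 1 := Nat.ceil_lt_add_one (by linarith)
    have h2 : ((N ^ d : ℕ):ℝ) ^ ε1 ≤ M ^ (d * ε1) := by
      rw [Real.rpow_mul hM0.le, Real.rpow_natCast]
      apply Real.rpow_le_rpow (by positivity) _ hε10.le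
      push_cast; exact pow_le_pow_left₀ hN0.le hNM d
    have h3 := mul_le_mul_of_nonneg_left h2 (by linarith : 0 ≤ C1)
    linarith
  have hDd : (D:ℝ) ^ d ≤ (2 * C1) ^ d * M ^ e := by
    calc (D:ℝ) ^ d ≤ (2 * C1 * M ^ (d * ε1)) ^ d := pow_le_pow_left₀ (by positivity) hDle d
      _ = (2 * C1) ^ d * M ^ (d * ε1 * d) := by
        rw [mul_pow, Real.rpow_mul hM0.le (d * ε1), Real.rpow_natCast]
      _ ≤ _ := by
        apply mul_le_mul_of_nonneg_left _ (by positivity)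
        apply Real.rpow_le_rpow_of_exponent_le hM
        rw [hε1]
        have : (d:ℝ) * (e / (d ^ 2 + 1)) * d = e * (d ^ 2 / (d^2 + 1)) := by ring
        rw [this]
        have : (d:ℝ) ^ 2 / (d^2 + 1) ≤ 1 := by rw [div_le_one (by positivity)]; linarith
        nlinarith
  have hmain := hw N D hN1 hD1 (by
    intro m h1 h2
    have h3 := hdiv m h1
    have h4 : (m:ℝ) ^ ε1 ≤ ((N ^ d : ℕ):ℝ) ^ ε1 :=
      Real.rpow_le_rpow (by positivity) (by exact_mod_cast h2) hε10.le
    have h5 := mul_le_mul_of_nonneg_left h4 (by linarith : 0 ≤ C1)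
    have h6 : (m.divisors.card:ℝ) ≤ D := h3.trans (h5.trans (Nat.le_ceil _))
    exact_mod_cast h6) p hp N' hN'N
  rw [hpt] at hmain
  have hlin := lin_sum N hN0 u Q hQ1 hgcd t htq.le F (N ^ d) hF1
  have hL : 1 + Real.log Q ≤ C2 * M ^ e := by
    have h1 : Real.log Q ≤ Real.log (M ^ (((d + 1 : ℕ) : ℝ) - Δ)) := Real.log_le_log hQ0 hq2
    rw [Real.log_rpow hM0] at h1
    have h2 : 0 ≤ Real.log M := Real.log_nonneg hM
    have h3 : Real.log M ≤ M ^ e / e := Real.log_le_rpow_div hM0.le he0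
    have h4 : 1 ≤ M ^ e := Real.one_le_rpow hM he0.le
    have h5 : (((d + 1 : ℕ) : ℝ) - Δ) * Real.log M ≤ ((d + 1 : ℕ) : ℝ) * (M ^ e / e) :=
      mul_le_mul (by linarith) h3 h2 (by positivity)
    rw [hC2, add_mul, one_mul]
    have : ((d + 1 : ℕ) : ℝ) / e * M ^ e = ((d + 1 : ℕ) : ℝ) * (M ^ e / e) := by ring
    rw [this]; linarith
  have hLog0 : 0 ≤ Real.log Q := Real.log_natCast_nonneg Q
  set T := M ^ (((d + 1 : ℕ) : ℝ) - Δ) with hT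
  have hTΔ : T = M ^ (d + 1) * M ^ (-Δ) := by
    rw [hT, sub_eq_add_neg, Real.rpow_add hM0, Real.rpow_natCast]
  have hd1 : (1:ℝ) ≤ d := by exact_mod_cast hd
  have t1 : M ^ (d + 1) / Q ≤ T := by
    rw [hTΔ, div_eq_mul_inv]
    apply mul_le_mul_of_nonneg_left _ (by positivity)
    rw [Real.rpow_neg hM0.le]
    exact inv_anti₀ (by positivity) hq1.le
  have t2 : M ^ d ≤ T := by
    rw [hT, ← Real.rpow_natCast M d]
    apply Real.rpow_le_rpow_of_exponent_le hM; push_cast; linarith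
  have t3 : M ≤ T := by
    rw [hT]; conv_lhs => rw [← Real.rpow_one M]
    apply Real.rpow_le_rpow_of_exponent_le hM; push_cast; linarith
  have hprod : ((F * ((N ^ d : ℕ):ℝ)) / Q + 1) * (6 * N + 12 * Q * (1 + Real.log Q))
      ≤ 48 * C2 * F * (M ^ e * T) := by
    have a1 : (F * ((N ^ d : ℕ):ℝ)) / Q + 1 ≤ F * (M ^ d / Q + 1) := by
      have : ((N ^ d : ℕ):ℝ) ≤ M ^ d := by push_cast; exact pow_le_pow_left₀ hN0.le hNM d
      have h2 : (F * ((N ^ d : ℕ):ℝ)) / Q ≤ F * (M ^ d / Q) := by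
        rw [← mul_div_assoc]
        apply div_le_div_of_nonneg_right _ hQ0.le
        exact mul_le_mul_of_nonneg_left this (by positivity)
      linarith
    have a2 : 6 * N + 12 * Q * (1 + Real.log Q) ≤ 12 * (C2 * M ^ e) * (M + Q) := by
      have h1 : 12 * (Q:ℝ) * (1 + Real.log Q) ≤ 12 * Q * (C2 * M ^ e) :=
        mul_le_mul_of_nonneg_left hL (by positivity)
      have h2 : 1 ≤ C2 * M ^ e := by linarith
      generalize C2 * M ^ e = X at h1 h2
      have h3 : M * 1 ≤ M * X := mul_le_mul_of_nonneg_left h2 hM0.le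
      have h4 : 12 * X * (M + Q) = 12 * (M * X) + 12 * Q * X := by ring
      rw [h4]; linarith
    have a3 : (M ^ d / Q + 1) * (M + Q) ≤ 4 * T := by
      have : (M ^ d / Q + 1) * (M + Q) = M ^ (d + 1) / Q + M ^ d + M + Q := by
        field_simp; ring
      rw [this]; linarith
    calc _ ≤ F * (M ^ d / Q + 1) * (12 * (C2 * M ^ e) * (M + Q)) :=
          mul_le_mul a1 a2 (by positivity) (by positivity)
      _ = 12 * C2 * F * M ^ e * ((M ^ d / Q + 1) * (M + Q)) := by ring
      _ ≤ 12 * C2 * F * M ^ e * (4 * T) := mul_le_mul_of_nonneg_left a3 (by positivity)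
      _ = _ := by ring
  have hNpow : (D:ℝ) ^ d / (N:ℝ) ^ (d + 1) ≤ (2 * C1) ^ d * M ^ e * (2 ^ (d + 1) / M ^ (d + 1)) := by
    rw [div_eq_mul_inv]
    apply mul_le_mul hDd _ (by positivity) (by positivity)
    rw [← one_div, div_le_div_iff₀ (by positivity) (by positivity), one_mul, ← mul_pow]
    exact pow_le_pow_left₀ hM0.le hMN _
  have hfin : (‖∑ k ∈ range N', ee (p.eval (k : ℝ))‖ / N) ^ (2 ^ d) ≤ C3 * M ^ (-Δ + 2 * e) := by
    refine hmain.trans ?_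
    rw [hC3, mul_assoc]
    apply mul_le_mul_of_nonneg_left _ hC0.le
    rw [add_mul]
    apply add_le_add
    · have h1 : 1 / (N:ℝ) ≤ 2 * (1 / M) := by
        rw [mul_one_div, div_le_div_iff₀ hN0 hM0]; linarith
      have h2 : 1 / M ≤ M ^ (-Δ + 2 * e) := by
        rw [one_div, ← Real.rpow_neg_one]
        apply Real.rpow_le_rpow_of_exponent_le hM; linarith
      linarith
    · calc _ ≤ (2 * C1) ^ d * M ^ e * (2 ^ (d + 1) / M ^ (d + 1)) * (48 * C2 * F * (M ^ e * T)) :=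
            mul_le_mul hNpow (hlin.trans hprod)
              (sum_nonneg fun m _ => phi_nonneg hN0.le _) (by positivity)
        _ = _ := by
          rw [hTΔ, show -Δ + 2 * e = -Δ + e + e by ring, Real.rpow_add hM0, Real.rpow_add hM0]
          field_simp
  set a := ‖∑ k ∈ range N', ee (p.eval (k : ℝ))‖ / N with ha
  have ha0 : 0 ≤ a := by positivity
  have hroot : a ≤ (C3 * M ^ (-Δ + 2 * e)) ^ ((1:ℝ) / 2 ^ d) := by
    have h := Real.rpow_le_rpow (by positivity) hfin (by positivity : (0:ℝ) ≤ (1:ℝ) / 2 ^ d)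
    rwa [← Real.rpow_natCast, ← Real.rpow_mul ha0, Nat.cast_pow, Nat.cast_ofNat,
      mul_one_div_cancel (by positivity), Real.rpow_one] at h
  have hS : ‖∑ k ∈ range N', ee (p.eval (k : ℝ))‖ = a * N := by rw [ha]; field_simp
  rw [hS]
  calc a * N ≤ (C3 * M ^ (-Δ + 2 * e)) ^ ((1:ℝ) / 2 ^ d) * M :=
        mul_le_mul hroot hNM hN0.le (by positivity)
    _ = _ := by
      rw [Real.mul_rpow hC30.le (by positivity), ← Real.rpow_mul hM0.le, mul_assoc]
      congr 1
      conv_lhs => rw [← Real.rpow_one M, ← Real.rpow_mul hM0.le, ← Real.rpow_add hM0]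
      congr 1
      rw [he]; field_simp; ring

noncomputable def Wsum (n : ℕ) (t y : ℝ) (K : ℕ) : ℝ :=
  ∑ k ∈ Ico 1 K, Real.sin (2 * Real.pi * (t * (k:ℝ) ^ n + y * k)) / (Real.pi * k)

noncomputable def Ssum (n : ℕ) (t y : ℝ) (a b : ℕ) : ℝ :=
  ∑ k ∈ Ico a b, Real.sin (2 * Real.pi * (t * (k:ℝ) ^ n + y * k)) / k

lemma Wsum_sub (n : ℕ) (t y : ℝ) (a b : ℕ) (ha : 1 ≤ a) (hab : a ≤ b) :
    Wsum n t y b - Wsum n t y a = (1 / Real.pi) * Ssum n t y a b := by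
  unfold Wsum Ssum
  rw [← sum_Ico_consecutive _ ha hab, add_sub_cancel_left, mul_sum]
  refine sum_congr rfl fun k _ => ?_
  have := Real.pi_pos
  rw [one_div, mul_comm Real.pi, div_mul_eq_div_div]; ring

lemma Ssum_eq_im (n : ℕ) (t y : ℝ) (a b : ℕ) :
    Ssum n t y a b = (∑ k ∈ Ico a b, ee (t * (k:ℝ) ^ n + y * k) / k).im := by
  unfold Ssum
  rw [Complex.im_sum]
  refine sum_congr rfl fun k _ => ?_
  rw [Complex.div_natCast_im, ee_im]

lemma abs_Ssum_le (n : ℕ) (t y : ℝ) (a b : ℕ) :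
    |Ssum n t y a b| ≤ ‖∑ k ∈ Ico a b, ee (t * (k:ℝ) ^ n + y * k) / k‖ := by
  rw [Ssum_eq_im]; exact Complex.abs_im_le_norm _

lemma abs_Wsum_sub_le (n : ℕ) (t y : ℝ) (a b : ℕ) (ha : 1 ≤ a) (hab : a ≤ b) :
    |Wsum n t y b - Wsum n t y a| ≤ ‖∑ k ∈ Ico a b, ee (t * (k:ℝ) ^ n + y * k) / k‖ := by
  rw [Wsum_sub n t y a b ha hab, abs_mul, abs_of_pos (by have := Real.pi_pos; positivity)]
  refine le_trans ?_ (abs_Ssum_le n t y a b)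
  have : 1 / Real.pi ≤ 1 := by
    rw [div_le_one Real.pi_pos]; linarith [Real.pi_gt_three]
  have h := abs_nonneg (Ssum n t y a b)
  nlinarith

open Polynomial in
lemma weyl_phase (n : ℕ) (hn : 2 ≤ n) (Δ : ℝ) (hΔ0 : 0 < Δ) (hΔ1 : Δ < 1) (ε : ℝ) (hε : 0 < ε) :
    ∃ C > (0:ℝ), ∀ (t : ℝ) (u q : ℤ) (M : ℝ), IsApproximant t u q → 1 ≤ M →
      M ^ Δ < (q:ℝ) → (q:ℝ) ≤ M ^ ((n : ℝ) - Δ) →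
      ∀ (y : ℝ) (a b : ℕ), a ≤ b → (((b - a : ℕ)):ℝ) ≤ M →
      ‖∑ k ∈ Ico a b, ee (t * (k:ℝ) ^ n + y * k)‖ ≤ C * M ^ (1 - Δ / 2 ^ (n - 1) + ε) := by
  obtain ⟨d, rfl⟩ : ∃ d, n = d + 2 := ⟨n - 2, by omega⟩
  obtain ⟨C0, hC, h⟩ := weyl (d + 1) (by omega) Δ hΔ0 hΔ1 ε hε
  refine ⟨C0, hC, fun t u q M happ hM h1 h2 y a b hab hM2 => ?_⟩
  set p0 : ℝ[X] := C t * X ^ (d + 2) + C y * X with hp0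
  have hdeg : p0.natDegree ≤ d + 2 := by
    rw [hp0]
    apply (natDegree_add_le _ _).trans
    apply max_le
    · exact natDegree_C_mul_X_pow_le _ _
    · exact (natDegree_C_mul_le _ _).trans (natDegree_X_le.trans (by omega))
  have hcoeff : p0.coeff (d + 2) = t := by
    rw [hp0]; simp
  set p := taylor (a:ℝ) p0 with hp
  have hpd : p.natDegree ≤ d + 1 + 1 := by rw [hp, natDegree_taylor]; exact hdeg
  have hpc : p.coeff (d + 1 + 1) = t := by
    have := coeff_eq_zero_of_natDegree_lt
      (lt_of_le_of_lt (diff_poly p0 d hdeg a).1 (by omega : d + 1 < d + 2))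
    rw [coeff_sub, hcoeff] at this
    exact sub_eq_zero.1 this
  have := h t u q M happ hM h1 h2 p hpd hpc (b - a) hM2
  rw [sum_Ico_eq_sum_range]
  refine le_trans (le_of_eq ?_) this
  congr 1
  refine sum_congr rfl fun k _ => ?_
  rw [hp, taylor_eval, hp0]
  congr 1; simp; ring

lemma rpow_step (η : ℝ) (hη : 0 < η) (b : ℕ) (hb : 1 ≤ b) :
    ((b:ℝ) + 1) ^ (-η) / b ≤ (2 / η) * ((b:ℝ) ^ (-η) - ((b:ℝ) + 1) ^ (-η)) := by
  have hb0 : (0:ℝ) < b := by exact_mod_cast hb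
  have hb1 : (1:ℝ) ≤ b := by exact_mod_cast hb
  have hx : 0 < ((b:ℝ) + 1) ^ (-η) := by positivity
  have e : (b:ℝ) ^ (-η) = ((b:ℝ) + 1) ^ (-η) * ((((b:ℝ) + 1) / b) ^ η) := by
    rw [Real.div_rpow (by positivity) hb0.le, Real.rpow_neg (by positivity : (0:ℝ) ≤ (b:ℝ) + 1),
      Real.rpow_neg hb0.le]
    field_simp
  have h1 : 1 + η / (2 * b) ≤ (((b:ℝ) + 1) / b) ^ η := by
    rw [Real.rpow_def_of_pos (by positivity)]
    have h2 := Real.add_one_le_exp (Real.log (((b:ℝ) + 1) / b) * η)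
    have h3 := Real.one_sub_inv_le_log_of_pos (by positivity : 0 < ((b:ℝ) + 1) / b)
    have h4 : 1 / (2 * b) ≤ 1 - (((b:ℝ) + 1) / b)⁻¹ := by
      rw [inv_div, one_sub_div (by positivity), div_le_div_iff₀ (by positivity) (by positivity)]
      linarith
    have h5 : η / (2 * b) = 1 / (2 * b) * η := by ring
    have h6 : 1 / (2 * b) * η ≤ Real.log (((b:ℝ) + 1) / b) * η :=
      mul_le_mul_of_nonneg_right (h4.trans h3) hη.le
    linarith
  rw [e]
  calc ((b:ℝ) + 1) ^ (-η) / b = (2 / η) * (((b:ℝ) + 1) ^ (-η) * (η / (2 * b))) := by field_simp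
    _ ≤ (2 / η) * (((b:ℝ) + 1) ^ (-η) * ((((b:ℝ) + 1) / b) ^ η - 1)) := by
      apply mul_le_mul_of_nonneg_left _ (by positivity)
      apply mul_le_mul_of_nonneg_left _ hx.le
      linarith
    _ = _ := by ring

lemma abel_growth (η : ℝ) (hη : 0 < η) (C : ℝ) (hC : 0 ≤ C) (z : ℕ → ℂ) (a b : ℕ) (ha : 1 ≤ a)
    (hab : a ≤ b)
    (hP : ∀ j, a ≤ j → j ≤ b → ‖∑ k ∈ Ico a j, z k‖ ≤ C * (j:ℝ) ^ (1 - η)) :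
    ‖∑ k ∈ Ico a b, z k / k‖ ≤ C * (1 + 2 / η) * (a:ℝ) ^ (-η) := by
  have key : ‖∑ k ∈ Ico a b, z k / k - (∑ k ∈ Ico a b, z k) / b‖
      ≤ C * (2 / η) * ((a:ℝ) ^ (-η) - (b:ℝ) ^ (-η)) := by
    induction b, hab using Nat.le_induction with
    | base => simp
    | succ b hb ih =>
      have ih := ih (fun j h1 h2 => hP j h1 (by omega))
      have hb1 : 1 ≤ b := by omega
      have hb0 : (0:ℝ) < b := by exact_mod_cast hb1
      have hb0' : (b:ℂ) ≠ 0 := by exact_mod_cast hb0.ne'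
      have hb0'' : (b:ℂ) + 1 ≠ 0 := by exact_mod_cast (by positivity : (b:ℝ) + 1 ≠ 0)
      have hPb := hP (b + 1) (by omega) le_rfl
      have e : ∑ k ∈ Ico a (b + 1), z k / k - (∑ k ∈ Ico a (b + 1), z k) / ((b + 1 : ℕ):ℂ)
        = (∑ k ∈ Ico a b, z k / k - (∑ k ∈ Ico a b, z k) / b)
          + (∑ k ∈ Ico a (b + 1), z k) / ((b:ℂ) * (b + 1)) := by
        rw [sum_Ico_succ_top hb, sum_Ico_succ_top hb]
        push_cast
        field_simp
        ring
      rw [e]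
      refine (norm_add_le _ _).trans ?_
      have n1 : ‖(∑ k ∈ Ico a (b + 1), z k) / ((b:ℂ) * (b + 1))‖
          ≤ C * (((b:ℝ) + 1) ^ (-η) / b) := by
        rw [norm_div]
        have : ‖(b:ℂ) * (b + 1)‖ = (b:ℝ) * (b + 1) := by
          rw [show (b:ℂ) * (b + 1) = (((b:ℝ) * (b + 1) : ℝ):ℂ) by push_cast; rfl,
            Complex.norm_real, Real.norm_eq_abs, abs_of_pos (by positivity)]
        rw [this, div_le_iff₀ (by positivity)]
        refine hPb.trans (le_of_eq ?_)
        push_cast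
        rw [sub_eq_add_neg, Real.rpow_add (by positivity), Real.rpow_one]
        field_simp
      have n2 := mul_le_mul_of_nonneg_left (rpow_step η hη b hb1) hC
      push_cast
      calc _ ≤ _ := add_le_add ih (n1.trans n2)
        _ = _ := by ring
  have hPb := hP b hab le_rfl
  have hb1 : 1 ≤ b := by omega
  have hb0 : (0:ℝ) < b := by exact_mod_cast hb1
  have ha0 : (0:ℝ) < a := by exact_mod_cast ha
  have n1 : ‖(∑ k ∈ Ico a b, z k) / b‖ ≤ C * (b:ℝ) ^ (-η) := by
    rw [norm_div, Complex.norm_natCast, div_le_iff₀ hb0]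
    refine hPb.trans (le_of_eq ?_)
    rw [sub_eq_add_neg, Real.rpow_add (by positivity), Real.rpow_one]; ring
  have n2 := norm_add_le (∑ k ∈ Ico a b, z k / k - (∑ k ∈ Ico a b, z k) / b)
    ((∑ k ∈ Ico a b, z k) / b)
  rw [sub_add_cancel] at n2
  have n3 : (b:ℝ) ^ (-η) ≤ (a:ℝ) ^ (-η) :=
    Real.rpow_le_rpow_of_nonpos ha0 (by exact_mod_cast hab) (by linarith)
  have n4 : C * (b:ℝ) ^ (-η) ≤ C * (a:ℝ) ^ (-η) := mul_le_mul_of_nonneg_left n3 hC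
  have n5 : 0 ≤ C * (2 / η) * (b:ℝ) ^ (-η) := by positivity
  calc _ ≤ _ := n2
    _ ≤ C * (2 / η) * ((a:ℝ) ^ (-η) - (b:ℝ) ^ (-η)) + C * (a:ℝ) ^ (-η) :=
      add_le_add key (n1.trans n4)
    _ ≤ _ := by linarith

lemma tail_weyl (n : ℕ) (hn : 2 ≤ n) (Δ : ℝ) (hΔ0 : 0 < Δ) (hΔ1 : Δ < 1) (η : ℝ) (hη : 0 < η)
    (hηΔ : η < Δ / 2 ^ (n - 1)) :
    ∃ C > (0:ℝ), ∀ (t y : ℝ) (a b : ℕ), 1 ≤ a → a ≤ b →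
      (∀ j : ℕ, a ≤ j → j ≤ b → ∃ u q : ℤ, IsApproximant t u q ∧ (j:ℝ) ^ Δ < (q:ℝ) ∧
        (q:ℝ) ≤ (j:ℝ) ^ ((n:ℝ) - Δ)) →
      |Wsum n t y b - Wsum n t y a| ≤ C * (a:ℝ) ^ (-η) := by
  obtain ⟨C, hC, h⟩ := weyl_phase n hn Δ hΔ0 hΔ1 (Δ / 2 ^ (n - 1) - η) (by linarith)
  refine ⟨C * (1 + 2 / η), by positivity, fun t y a b ha hab hj => ?_⟩
  refine (abs_Wsum_sub_le n t y a b ha hab).trans ?_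
  refine abel_growth η hη C hC.le (fun k => ee (t * (k:ℝ) ^ n + y * k)) a b ha hab ?_
  intro j h1 h2
  obtain ⟨u, q, happ, hq1, hq2⟩ := hj j h1 h2
  have := h t u q j happ (by exact_mod_cast ha.trans h1) hq1 hq2 y a j h1
    (by exact_mod_cast Nat.sub_le _ _)
  rwa [show 1 - Δ / 2 ^ (n - 1) + (Δ / 2 ^ (n - 1) - η) = 1 - η by ring] at this

lemma cauchy_of_le (f B : ℕ → ℝ) (N : ℕ) (hB : Tendsto B atTop (nhds 0))
    (h : ∀ a b, N ≤ a → a ≤ b → |f b - f a| ≤ B a) : CauchySeq f := by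
  rw [Metric.cauchySeq_iff']
  intro ε hε
  obtain ⟨N1, hN1⟩ := (hB.eventually (gt_mem_nhds hε)).exists_forall_of_atTop
  refine ⟨max N N1, fun b hb => ?_⟩
  rw [Real.dist_eq]
  exact (h _ b (le_max_left _ _) hb).trans_lt (hN1 _ (le_max_right _ _))

lemma sinsum_far (θ : ℝ) (a b : ℕ) (ha : 1 ≤ a) (hab : a ≤ b) :
    |∑ k ∈ Ico a b, Real.sin (2 * Real.pi * (θ * k)) / k| * (a * nrm θ) ≤ 1 / 2 := by
  have ha0 : (0:ℝ) < a := by exact_mod_cast ha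
  rcases (nrm_nonneg θ).eq_or_lt with h0 | h0
  · rw [← h0]; simp
  have e : ∑ k ∈ Ico a b, Real.sin (2 * Real.pi * (θ * k)) / k
      = (∑ k ∈ Ico a b, ee (θ * k) / k).im := by
    rw [Complex.im_sum]
    refine sum_congr rfl fun k _ => ?_
    rw [Complex.div_natCast_im, ee_im]
  have h1 := abel_inv (fun k => ee (θ * k)) a b ha hab (1 / 2 / nrm θ) (fun j hj _ => by
    rw [le_div_iff₀ h0]; exact geom_bound θ a j hj)
  have h2 := (Complex.abs_im_le_norm _).trans h1
  rw [e]
  calc _ ≤ (1 / 2 / nrm θ / a) * (a * nrm θ) := by gcongr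
    _ = 1 / 2 := by field_simp

lemma abs_sin_le_nrm (θ : ℝ) (k : ℕ) :
    |Real.sin (2 * Real.pi * (θ * k))| ≤ 2 * Real.pi * nrm θ * k := by
  have e : Real.sin (2 * Real.pi * (θ * k))
      = Real.sin (2 * Real.pi * ((θ - round θ) * k)) := by
    rw [← ee_im, ← ee_im, sub_mul, ee_sub,
      show ((round θ : ℤ):ℝ) * (k:ℝ) = ((round θ * k : ℤ) : ℝ) by push_cast; rfl, ee_int]
    simp
  rw [e]
  refine Real.abs_sin_le_abs.trans (le_of_eq ?_)
  rw [abs_mul, abs_of_pos Real.two_pi_pos, abs_mul, Nat.abs_cast]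
  unfold nrm; ring

lemma sinsum_near (θ : ℝ) (a b : ℕ) (ha : 1 ≤ a) (hb : (b:ℝ) * nrm θ ≤ 3 / 2) :
    |∑ k ∈ Ico a b, Real.sin (2 * Real.pi * (θ * k)) / k| ≤ 10 := by
  have h0 := nrm_nonneg θ
  refine (abs_sum_le_sum_abs _ _).trans ?_
  have h1 : ∀ k ∈ Ico a b, |Real.sin (2 * Real.pi * (θ * k)) / k| ≤ 2 * Real.pi * nrm θ := by
    intro k hk
    have hk0 : (0:ℝ) < k := by exact_mod_cast ha.trans (mem_Ico.1 hk).1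
    rw [abs_div, Nat.abs_cast, div_le_iff₀ hk0]
    exact abs_sin_le_nrm θ k
  refine (sum_le_card_nsmul _ _ _ h1).trans ?_
  rw [nsmul_eq_mul, Nat.card_Ico]
  have h2 : ((b - a : ℕ):ℝ) ≤ b := by exact_mod_cast Nat.sub_le _ _
  have h3 := Real.pi_lt_d2
  have h4 := Real.pi_pos
  calc _ ≤ (b:ℝ) * (2 * Real.pi * nrm θ) := by gcongr
    _ = 2 * Real.pi * (b * nrm θ) := by ring
    _ ≤ 2 * Real.pi * (3 / 2) := by gcongr
    _ ≤ 10 := by linarith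

lemma sinsum_bound (θ : ℝ) (a b : ℕ) (ha : 1 ≤ a) (hab : a ≤ b) :
    |∑ k ∈ Ico a b, Real.sin (2 * Real.pi * (θ * k)) / k| ≤ 22 / a * phi a θ := by
  have ha0 : (0:ℝ) < a := by exact_mod_cast ha
  have h0 := nrm_nonneg θ
  have e : 22 / a * phi a θ = 22 / (1 + a * nrm θ) := by
    unfold phi; field_simp
  rw [e, le_div_iff₀ (by positivity)]
  have far := sinsum_far θ a b ha hab
  by_cases h1 : 1 ≤ a * nrm θ
  · have := abs_nonneg (∑ k ∈ Ico a b, Real.sin (2 * Real.pi * (θ * k)) / k)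
    nlinarith
  push Not at h1
  suffices h : |∑ k ∈ Ico a b, Real.sin (2 * Real.pi * (θ * k)) / k| ≤ 21 / 2 by linarith
  by_cases h2 : (b:ℝ) * nrm θ ≤ 3 / 2
  · linarith [sinsum_near θ a b ha h2]
  push Not at h2
  have hν : 0 < nrm θ := by
    rcases h0.eq_or_lt with h | h
    · rw [← h] at h2; norm_num at h2
    · exact h
  set c := ⌈1 / nrm θ⌉₊ with hc
  have hc1 : 1 ≤ (c:ℝ) * nrm θ := by
    rw [← div_le_iff₀ hν]; exact Nat.le_ceil _
  have hc2 : (c:ℝ) * nrm θ ≤ 3 / 2 := by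
    have := (Nat.ceil_lt_add_one (by positivity : 0 ≤ 1 / nrm θ)).le
    calc (c:ℝ) * nrm θ ≤ (1 / nrm θ + 1) * nrm θ := by gcongr
      _ = 1 + nrm θ := by field_simp
      _ ≤ _ := by linarith [nrm_le_half θ]
  have hac : a ≤ c := by
    have : (a:ℝ) * nrm θ < c * nrm θ := by linarith
    exact_mod_cast (lt_of_mul_lt_mul_right this h0).le
  have hcb : c ≤ b := by
    have : (c:ℝ) * nrm θ < b * nrm θ := by linarith
    exact_mod_cast (lt_of_mul_lt_mul_right this h0).le
  rw [← sum_Ico_consecutive _ hac hcb]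
  refine (abs_add_le _ _).trans ?_
  have n1 := sinsum_near θ a c ha hc2
  have n2 := sinsum_far θ c b (ha.trans hac) hcb
  have := abs_nonneg (∑ k ∈ Ico c b, Real.sin (2 * Real.pi * (θ * k)) / k)
  nlinarith

lemma ee_add_int (x : ℝ) (k : ℤ) : ee (x + k) = ee x := by
  rw [ee_add, ee_int, mul_one]

lemma ee_congr {x y : ℝ} (k : ℤ) (h : x = y + k) : ee x = ee y := by
  rw [h, ee_add_int]

lemma eq_round_of_ee {x : ℝ} (h : ee x = 1) : x = round x := by
  have := norm_ee_sub_one_ge x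
  rw [h, sub_self, norm_zero] at this
  have h2 := nrm_nonneg x
  have h3 : nrm x = 0 := by linarith
  unfold nrm at h3
  linarith [abs_eq_zero.1 h3]

lemma orth (q : ℕ) (hq : 1 ≤ q) (z : ℤ) :
    ∑ b ∈ range q, ee (z / q * (b:ℕ)) = if (q:ℤ) ∣ z then (q:ℂ) else 0 := by
  have hq0 : (q:ℝ) ≠ 0 := by positivity
  simp_rw [ee_nat_mul]
  split_ifs with h
  · obtain ⟨w, rfl⟩ := h
    rw [show (((q:ℤ) * w : ℤ):ℝ) / q = (w:ℝ) by push_cast; field_simp, ee_int]; simp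
  · have h1 : ee ((z:ℝ) / q) ≠ 1 := by
      intro h1
      have h2 := eq_round_of_ee h1
      rw [div_eq_iff hq0] at h2
      apply h
      refine ⟨round ((z:ℝ) / q), ?_⟩
      rw [mul_comm]
      exact_mod_cast h2
    have h2 := geom_sum_mul (ee ((z:ℝ) / q)) q
    rw [← ee_nat_mul, div_mul_cancel₀ _ hq0, ee_int, sub_self] at h2
    exact (mul_eq_zero.1 h2).resolve_right (sub_ne_zero.2 h1)

noncomputable def cf (n : ℕ) (u : ℤ) (q : ℕ) (b : ℕ) : ℂ :=
  (1 / (q:ℂ)) * ∑ k ∈ Ico 0 q, ee ((u:ℝ) / (q:ℝ) * (k:ℝ) ^ n + (-(b:ℝ) / q) * k)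

lemma cf_expand (n : ℕ) (u : ℤ) (q : ℕ) (hq : 1 ≤ q) (k : ℕ) :
    ∑ b ∈ range q, cf n u q b * ee ((b:ℝ) / q * k) = ee ((u:ℝ) / q * (k:ℝ) ^ n) := by
  have hq0 : (q:ℝ) ≠ 0 := by positivity
  have hq0' : (q:ℂ) ≠ 0 := by exact_mod_cast hq0
  have e1 : ∀ b ∈ range q, cf n u q b * ee ((b:ℝ) / q * k)
      = ∑ j ∈ Ico 0 q, (1 / (q:ℂ)) * ee ((u:ℝ) / q * (j:ℝ) ^ n) *
          ee ((((k:ℤ) - (j:ℤ) : ℤ):ℝ) / q * (b:ℕ)) := by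
    intro b _
    unfold cf
    rw [mul_assoc, sum_mul, mul_sum]
    refine sum_congr rfl fun j _ => ?_
    rw [mul_assoc, ← ee_add, ← ee_add]
    congr 2; push_cast; ring
  rw [sum_congr rfl e1, sum_comm]
  simp_rw [← mul_sum, orth q hq]
  have hk : k % q ∈ Ico 0 q := by simp [Nat.mod_lt k hq]
  rw [sum_eq_single_of_mem _ hk]
  · have hd : (q:ℤ) ∣ (k:ℤ) - ((k % q : ℕ):ℤ) := by
      rw [Int.natCast_mod]; exact Int.dvd_self_sub_emod
    rw [if_pos hd]
    have hd2 : (q:ℤ) ∣ (k:ℤ) ^ n - ((k % q : ℕ):ℤ) ^ n := hd.trans (sub_dvd_pow_sub_pow _ _ n)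
    obtain ⟨w, hw⟩ := hd2
    have : ee ((u:ℝ) / q * (k:ℝ) ^ n) = ee ((u:ℝ) / q * ((k % q : ℕ):ℝ) ^ n) := by
      apply ee_congr (u * w)
      have hw' : (k:ℝ) ^ n = ((k % q : ℕ):ℝ) ^ n + q * w := by
        have : ((k:ℤ):ℝ) ^ n - (((k % q : ℕ):ℤ):ℝ) ^ n = ((q:ℤ):ℝ) * w := by exact_mod_cast hw
        simp only [Int.cast_natCast] at this
        linarith
      rw [hw']; push_cast; field_simp
    rw [this]; field_simp
  · intro j hj hne
    rw [if_neg, mul_zero]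
    rintro ⟨w, hw⟩
    apply hne
    have hjq := (mem_Ico.1 hj).2
    have : (k:ℤ) % q = j := by
      rw [show (k:ℤ) = j + q * w by linarith, Int.add_mul_emod_self_left]
      exact Int.emod_eq_of_lt (by positivity) (by exact_mod_cast hjq)
    exact_mod_cast this.symm

lemma cf_expand_neg (n : ℕ) (hno : Odd n) (u : ℤ) (q : ℕ) (hq : 1 ≤ q) (k : ℕ) :
    ∑ b ∈ range q, cf n u q b * ee (-((b:ℝ) / q * k)) = ee (-((u:ℝ) / q * (k:ℝ) ^ n)) := by
  have hq0 : (q:ℝ) ≠ 0 := by positivity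
  have h := cf_expand n u q hq ((q - 1) * k)
  have hc : (((q - 1) * k : ℕ):ℝ) = ((q:ℝ) - 1) * k := by
    rw [Nat.cast_mul, Nat.cast_sub hq]; simp
  rw [hc] at h
  have e1 : ee ((u:ℝ) / q * (((q:ℝ) - 1) * k) ^ n) = ee (-((u:ℝ) / q * (k:ℝ) ^ n)) := by
    have hd : (q:ℤ) ∣ ((q:ℤ) - 1) ^ n - (-1) ^ n := by
      have := sub_dvd_pow_sub_pow ((q:ℤ) - 1) (-1) n
      rwa [show (q:ℤ) - 1 - -1 = q by ring] at this
    rw [hno.neg_one_pow] at hd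
    obtain ⟨w, hw⟩ := hd
    have hw' : ((q:ℝ) - 1) ^ n = -1 + q * w := by
      have : ((q:ℝ) - 1) ^ n - -1 = q * w := by exact_mod_cast hw
      linarith
    apply ee_congr (u * w * k ^ n)
    rw [mul_pow, hw']; push_cast; field_simp
  rw [e1] at h
  rw [← h]
  refine sum_congr rfl fun b _ => ?_
  congr 1
  symm
  apply ee_congr (b * k)
  push_cast; field_simp; ring

lemma sin_eq_ee (x : ℝ) : ((Real.sin (2 * Real.pi * x) : ℝ) : ℂ)
    = (ee x - ee (-x)) / (2 * Complex.I) := by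
  rw [← ee_im, ee_neg, Complex.im_eq_sub_conj]

lemma cf_sin (n : ℕ) (hno : Odd n) (u : ℤ) (q : ℕ) (hq : 1 ≤ q) (y : ℝ) (k : ℕ) :
    ((Real.sin (2 * Real.pi * ((u:ℝ) / q * (k:ℝ) ^ n + y * k)) : ℝ) : ℂ)
      = ∑ b ∈ range q, cf n u q b *
        ((Real.sin (2 * Real.pi * ((y + (1:ℤ) * (b:ℕ) / q + 0) * k)) : ℝ) : ℂ) := by
  rw [sin_eq_ee, neg_add, ee_add, ee_add, ← cf_expand n u q hq k, ← cf_expand_neg n hno u q hq k,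
    sum_mul, sum_mul, ← sum_sub_distrib, sum_div]
  refine sum_congr rfl fun b _ => ?_
  rw [sin_eq_ee, mul_assoc, mul_assoc, ← ee_add, ← ee_add, ← mul_sub, mul_div_assoc]
  congr 4
  · push_cast; ring_nf
  · push_cast; ring_nf

lemma abs_Ssum_rat (n : ℕ) (hno : Odd n) (u : ℤ) (q : ℕ) (hq : 1 ≤ q) (y : ℝ) (a b : ℕ) :
    |Ssum n ((u:ℝ) / q) y a b| ≤ ∑ β ∈ range q, ‖cf n u q β‖ *
      |∑ k ∈ Ico a b, Real.sin (2 * Real.pi * ((y + (1:ℤ) * (β:ℕ) / q + 0) * k)) / k| := by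
  have e : ((Ssum n ((u:ℝ) / q) y a b : ℝ) : ℂ) = ∑ β ∈ range q, cf n u q β *
      ((∑ k ∈ Ico a b, Real.sin (2 * Real.pi * ((y + (1:ℤ) * (β:ℕ) / q + 0) * k)) / k : ℝ) : ℂ) := by
    unfold Ssum
    push_cast [-Complex.ofReal_sin]
    simp_rw [mul_sum]
    rw [sum_comm]
    refine sum_congr rfl fun k _ => ?_
    have := cf_sin n hno u q hq y k
    push_cast [-Complex.ofReal_sin] at this
    rw [this, sum_div]
    refine sum_congr rfl fun β _ => ?_
    rw [mul_div_assoc]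
  rw [← Real.norm_eq_abs, ← Complex.norm_real, e]
  refine (norm_sum_le _ _).trans (le_of_eq ?_)
  refine sum_congr rfl fun β _ => ?_
  rw [norm_mul, Complex.norm_real, Real.norm_eq_abs]

lemma cauchy_rat (n : ℕ) (hno : Odd n) (u : ℤ) (q : ℕ) (hq : 1 ≤ q) (y : ℝ) :
    CauchySeq (Wsum n ((u:ℝ) / q) y) := by
  set D : ℝ := ∑ β ∈ range q, ‖cf n u q β‖ * (1 / nrm (y + (1:ℤ) * (β:ℕ) / q + 0)) with hD
  apply cauchy_of_le _ (fun a => D / a) 1 (tendsto_const_div_atTop_nhds_zero_nat D)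
  intro a b ha hab
  have ha0 : (0:ℝ) < a := by exact_mod_cast ha
  rw [Wsum_sub _ _ _ _ _ ha hab, abs_mul, abs_of_pos (by have := Real.pi_pos; positivity)]
  have hpi : 1 / Real.pi ≤ 1 := by
    rw [div_le_one Real.pi_pos]; linarith [Real.pi_gt_three]
  refine (mul_le_of_le_one_left (abs_nonneg _) hpi).trans ?_
  refine (abs_Ssum_rat n hno u q hq y a b).trans ?_
  rw [hD, sum_div]
  refine sum_le_sum fun β _ => ?_
  rw [mul_div_assoc ‖cf n u q β‖]
  refine mul_le_mul_of_nonneg_left ?_ (norm_nonneg (cf n u q β))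
  set θ := y + (1:ℤ) * (β:ℕ) / q + 0
  rcases (nrm_nonneg θ).eq_or_lt with h0 | h0
  · rw [← h0]
    simp only [div_zero, zero_div]
    refine (abs_sum_le_sum_abs _ _).trans ?_
    refine sum_nonpos fun k _ => ?_
    have := abs_sin_le_nrm θ k
    rw [← h0] at this
    simp only [mul_zero, zero_mul] at this
    rw [abs_div]
    exact div_nonpos_of_nonpos_of_nonneg this (abs_nonneg _)
  · have := sinsum_far θ a b ha hab
    rw [div_div, le_div_iff₀ (by positivity)]
    rw [mul_comm (nrm θ)]; linarith

lemma tail_rat (n : ℕ) (hn : 3 ≤ n) (hno : Odd n) (Δ : ℝ) (hΔ0 : 0 < Δ) (hΔ1 : Δ < 1) (η : ℝ)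
    (hη : 0 < η) (hηΔ : η < Δ / 2 ^ (n - 1)) :
    ∃ C > (0:ℝ), ∀ (u : ℤ) (q : ℕ), 2 ≤ q → Int.gcd u q = 1 → ∀ (y : ℝ) (b : ℕ), q ≤ b →
      |Wsum n ((u:ℝ) / q) y b - Wsum n ((u:ℝ) / q) y q| ≤ C * (q:ℝ) ^ (-η) := by
  set ε := (Δ / 2 ^ (n - 1) - η) / 2 with hε
  have hε0 : 0 < ε := by rw [hε]; linarith
  obtain ⟨C, hC, h⟩ := weyl_phase n (by omega) Δ hΔ0 hΔ1 ε hε0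
  refine ⟨C * (22 * (18 + 12 / ε)), by positivity, fun u q hq huq y b hb => ?_⟩
  have hq0 : (0:ℝ) < q := by positivity
  have hq1 : (1:ℝ) < q := by exact_mod_cast hq
  have hcf : ∀ β, ‖cf n u q β‖ ≤ C * (q:ℝ) ^ (-η - ε) := by
    intro β
    have happ : IsApproximant ((u:ℝ) / q) u q := by
      refine ⟨by exact_mod_cast (by omega : 1 ≤ q), huq, ?_⟩
      simp; positivity
    have h1 := h ((u:ℝ) / q) u q q happ hq1.le
      (by
        conv_rhs => rw [Int.cast_natCast, ← Real.rpow_one (q:ℝ)]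
        exact Real.rpow_lt_rpow_of_exponent_lt hq1 hΔ1)
      (by
        conv_lhs => rw [Int.cast_natCast, ← Real.rpow_one (q:ℝ)]
        have : (3:ℝ) ≤ n := by exact_mod_cast hn
        exact Real.rpow_le_rpow_of_exponent_le hq1.le (by linarith))
      (-(β:ℝ) / q) 0 q (by omega) (by simp)
    unfold cf
    rw [norm_mul, norm_div, Complex.norm_natCast, norm_one, one_div, inv_mul_le_iff₀ hq0]
    refine h1.trans (le_of_eq ?_)
    rw [show 1 - Δ / 2 ^ (n - 1) + ε = 1 + (-η - ε) by rw [hε]; ring, Real.rpow_add hq0,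
      Real.rpow_one]
    ring
  rw [Wsum_sub _ _ _ _ _ (by omega) hb, abs_mul,
    abs_of_pos (by have := Real.pi_pos; positivity)]
  have hpi : 1 / Real.pi ≤ 1 := by
    rw [div_le_one Real.pi_pos]; linarith [Real.pi_gt_three]
  refine (mul_le_of_le_one_left (abs_nonneg _) hpi).trans ?_
  refine (abs_Ssum_rat n hno u q (by omega) y q b).trans ?_
  have hbl := block q hq0 1 q (by omega) (by simp) y (fun _ => 0) (by intros; simp)
  have hlog : Real.log q ≤ (q:ℝ) ^ ε / ε := Real.log_le_rpow_div hq0.le hε0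
  have hqe : 1 ≤ (q:ℝ) ^ ε := Real.one_le_rpow hq1.le hε0.le
  calc _ ≤ ∑ β ∈ range q, C * (q:ℝ) ^ (-η - ε) *
        (22 / q * phi q (y + (1:ℤ) * (β:ℕ) / q + 0)) := by
        refine sum_le_sum fun β _ => ?_
        exact mul_le_mul (hcf β) (sinsum_bound _ q b (by omega) hb) (abs_nonneg _) (by positivity)
    _ = C * (q:ℝ) ^ (-η - ε) * (22 / q) * ∑ β ∈ range q, phi q (y + (1:ℤ) * (β:ℕ) / q + 0) := by
        rw [mul_sum]; refine sum_congr rfl fun β _ => ?_; ring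
    _ ≤ C * (q:ℝ) ^ (-η - ε) * (22 / q) * (6 * q + 12 * q * (1 + Real.log q)) := by
        gcongr
    _ = C * (q:ℝ) ^ (-η - ε) * (22 * (18 + 12 * Real.log q)) := by field_simp; ring
    _ ≤ C * (q:ℝ) ^ (-η - ε) * (22 * (18 * (q:ℝ) ^ ε + 12 * ((q:ℝ) ^ ε / ε))) := by
        gcongr; linarith
    _ = C * (22 * (18 + 12 / ε)) * ((q:ℝ) ^ (-η - ε) * (q:ℝ) ^ ε) := by ring
    _ = _ := by rw [← Real.rpow_add hq0]; congr 2; ring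

def Adm (n : ℕ) (Δ : ℝ) (m : ℤ) (α t : ℝ) : Prop :=
  (Irrational t ∧ t ∈ Bset n Δ m α) ∨
    (∃ u q : ℤ, 1 ≤ q ∧ Int.gcd u q = 1 ∧ t = (u : ℝ) / (q : ℝ) ∧
      t ≤ (m : ℝ) * (q : ℝ) ^ (-(1 / (α * ((n : ℝ) - Δ)))))

lemma rat_q_le (n : ℕ) (hn : 3 ≤ n) (Δ : ℝ) (hΔ1 : Δ < 1) (m : ℤ) (hm : 2 ≤ m) (α : ℝ)
    (hα0 : 0 < α) (hα1 : α ≤ 1) (t : ℝ) (ht : 0 < t) (q : ℝ) (hq : 1 ≤ q)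
    (h : t ≤ (m : ℝ) * q ^ (-(1 / (α * ((n : ℝ) - Δ))))) (M : ℝ) (hM : (m:ℝ) * t ^ (-α) ≤ M) :
    q ≤ M ^ ((n:ℝ) - Δ) := by
  have hn' : (3:ℝ) ≤ n := by exact_mod_cast hn
  have hm' : (2:ℝ) ≤ m := by exact_mod_cast hm
  have hnd : 0 < (n:ℝ) - Δ := by linarith
  have hq0 : 0 < q := by linarith
  set c := α * ((n:ℝ) - Δ) with hc
  have hc0 : 0 < c := by positivity
  have h1 : q ^ (1 / c) ≤ m / t := by
    rw [le_div_iff₀ ht]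
    rw [Real.rpow_neg hq0.le, ← div_eq_mul_inv, le_div_iff₀ (by positivity)] at h
    linarith
  have h2 : q ≤ (m / t) ^ c := by
    have := Real.rpow_le_rpow (by positivity) h1 hc0.le
    rwa [← Real.rpow_mul hq0.le, one_div_mul_cancel hc0.ne', Real.rpow_one] at this
  have h3 : (m / t : ℝ) ^ α ≤ m * t ^ (-α) := by
    rw [Real.div_rpow (by linarith) ht.le, Real.rpow_neg ht.le, div_eq_mul_inv]
    gcongr
    calc (m:ℝ) ^ α ≤ (m:ℝ) ^ (1:ℝ) := Real.rpow_le_rpow_of_exponent_le (by linarith) hα1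
      _ = m := Real.rpow_one _
  calc q ≤ (m / t) ^ c := h2
    _ = ((m / t : ℝ) ^ α) ^ ((n:ℝ) - Δ) := by rw [hc, Real.rpow_mul (by positivity)]
    _ ≤ M ^ ((n:ℝ) - Δ) := by
      apply Real.rpow_le_rpow (by positivity) (h3.trans hM) hnd.le

lemma tail_all (n : ℕ) (hn : 3 ≤ n) (hno : Odd n) (Δ : ℝ) (hΔ0 : 0 < Δ) (hΔ1 : Δ < 1)
    (m : ℤ) (hm : 2 ≤ m) (α : ℝ) (hα0 : 0 < α) (α' : ℝ) (hαα : α ≤ α') (hα1 : α' < 1)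
    (η : ℝ) (hη : 0 < η) (hηΔ : η < Δ / 2 ^ (n - 1)) :
    ∃ C > (0:ℝ), ∃ t₁ > (0:ℝ), ∀ t ∈ Set.Ioc (0:ℝ) t₁, Adm n Δ m α t → ∀ y : ℝ,
      CauchySeq (Wsum n t y) ∧ ∀ K : ℕ, ⌈(m:ℝ) * t ^ (-α')⌉₊ ≤ K →
        |Wsum n t y K - Wsum n t y ⌈(m:ℝ) * t ^ (-α')⌉₊| ≤ C * t ^ (α * η) := by
  obtain ⟨C1, hC1, h1⟩ := tail_weyl n (by omega) Δ hΔ0 hΔ1 η hη hηΔ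
  obtain ⟨C2, hC2, h2⟩ := tail_rat n hn hno Δ hΔ0 hΔ1 η hη hηΔ
  have hm' : (2:ℝ) ≤ m := by exact_mod_cast hm
  have hm0 : (0:ℝ) < m := by linarith
  have hα'0 : 0 < 1 - α' := by linarith
  refine ⟨C1 + C2, by positivity, min (1 / 2) ((m:ℝ)⁻¹ ^ (1 / (1 - α'))), by positivity,
    fun t ht hadm y => ?_⟩
  obtain ⟨ht0, ht1⟩ := ht
  have hthalf : t ≤ 1 / 2 := ht1.trans (min_le_left _ _)
  have htm : t ≤ (m:ℝ)⁻¹ ^ (1 / (1 - α')) := ht1.trans (min_le_right _ _)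
  set N1 := ⌈(m:ℝ) * t ^ (-α')⌉₊ with hN1
  have hN1a : (m:ℝ) * t ^ (-α') ≤ N1 := Nat.le_ceil _
  have hta : t ^ (-α) ≤ t ^ (-α') :=
    Real.rpow_le_rpow_of_exponent_ge ht0 (by linarith) (by linarith)
  have hta0 : 0 < t ^ (-α) := by positivity
  have hN1b : (m:ℝ) * t ^ (-α) ≤ N1 := by
    refine le_trans ?_ hN1a
    gcongr
  have hN1c : t ^ (-α) ≤ N1 := by nlinarith
  have hN10 : (0:ℝ) < N1 := by linarith
  have hN11 : 1 ≤ N1 := by exact_mod_cast hN10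
  have hpow : (N1:ℝ) ^ (-η) ≤ t ^ (α * η) := by
    calc (N1:ℝ) ^ (-η) ≤ (t ^ (-α)) ^ (-η) :=
        Real.rpow_le_rpow_of_nonpos hta0 hN1c (by linarith)
      _ = _ := by rw [← Real.rpow_mul ht0.le]; ring_nf
  have hpos : 0 < t ^ (α * η) := by positivity
  rcases hadm with ⟨_, hB⟩ | ⟨u, q, hq1, huq, htq, htle⟩
  · have key : ∀ a b, N1 ≤ a → a ≤ b → |Wsum n t y b - Wsum n t y a| ≤ C1 * (a:ℝ) ^ (-η) := by
      intro a b ha hab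
      apply h1 t y a b (by omega) hab
      intro j hj _
      apply hB.2
      refine hN1b.trans ?_
      exact_mod_cast ha.trans hj
    constructor
    · apply cauchy_of_le _ (fun a => C1 * (a:ℝ) ^ (-η)) N1 _ key
      rw [← mul_zero C1]
      exact ((tendsto_rpow_neg_atTop hη).comp tendsto_natCast_atTop_atTop).const_mul C1
    · intro K hK
      refine (key N1 K le_rfl hK).trans ?_
      nlinarith
  · lift q to ℕ using by omega
    have hq1' : (1:ℝ) ≤ q := by exact_mod_cast hq1
    have hq0 : (0:ℝ) < q := by linarith
    rw [Int.cast_natCast] at htq htle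
    have hu : (1:ℝ) ≤ u := by
      have : (0:ℝ) < u := by
        rw [htq] at ht0
        exact (div_pos_iff_of_pos_right hq0).1 ht0
      exact_mod_cast this
    have hqt : 1 / t ≤ q := by
      rw [htq, one_div_div]; exact div_le_self hq0.le hu
    have hq2' : (2:ℝ) ≤ q := by
      refine le_trans ?_ hqt
      rw [le_div_iff₀ ht0]; linarith
    have hq2 : 2 ≤ q := by exact_mod_cast hq2'
    have hN1q : N1 ≤ q := by
      rw [hN1, Nat.ceil_le]
      refine le_trans ?_ hqt
      rw [le_div_iff₀ ht0]
      have e : t ^ (-α') * t = t ^ (1 - α') := by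
        nth_rewrite 2 [← Real.rpow_one t]
        rw [← Real.rpow_add ht0]; ring_nf
      have := Real.rpow_le_rpow ht0.le htm hα'0.le
      rw [← Real.rpow_mul (by positivity), one_div_mul_cancel hα'0.ne', Real.rpow_one] at this
      rw [mul_assoc, e]
      calc (m:ℝ) * t ^ (1 - α') ≤ m * (m:ℝ)⁻¹ := by gcongr
        _ = 1 := mul_inv_cancel₀ hm0.ne'
    constructor
    · rw [htq]; exact cauchy_rat n hno u q (by omega) y
    · have key : ∀ K, N1 ≤ K → K ≤ q → |Wsum n t y K - Wsum n t y N1| ≤ C1 * (N1:ℝ) ^ (-η) := by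
        intro K hK hKq
        apply h1 t y N1 K hN11 hK
        intro j hj hjK
        have hj0 : (0:ℝ) < j := by exact_mod_cast lt_of_lt_of_le hN11 hj
        refine ⟨u, q, ⟨by exact_mod_cast hq1, huq, ?_⟩, ?_, ?_⟩
        · rw [htq]; simp; positivity
        · calc (j:ℝ) ^ Δ ≤ (q:ℝ) ^ Δ :=
                Real.rpow_le_rpow hj0.le (by exact_mod_cast hjK.trans hKq) hΔ0.le
            _ < (q:ℝ) ^ (1:ℝ) := Real.rpow_lt_rpow_of_exponent_lt (by linarith) hΔ1
            _ = _ := by rw [Real.rpow_one]; simp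
        · rw [Int.cast_natCast]
          apply rat_q_le n hn Δ hΔ1 m hm α hα0 (by linarith) t ht0 q hq1' htle
          refine hN1b.trans ?_
          exact_mod_cast hj
      intro K hK
      rcases le_total K q with hKq | hKq
      · refine (key K hK hKq).trans ?_
        nlinarith
      · have k1 := key q hN1q le_rfl
        have k2 := h2 u q hq2 huq y K hKq
        rw [← htq] at k2
        have k3 : (q:ℝ) ^ (-η) ≤ t ^ (α * η) := by
          calc (q:ℝ) ^ (-η) ≤ (1 / t) ^ (-η) :=
              Real.rpow_le_rpow_of_nonpos (by positivity) hqt (by linarith)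
            _ = t ^ η := by
              rw [one_div, Real.inv_rpow ht0.le, Real.rpow_neg ht0.le, inv_inv]
            _ ≤ t ^ (α * η) := Real.rpow_le_rpow_of_exponent_ge ht0 (by linarith) (by nlinarith)
        have k4 := abs_sub_le (Wsum n t y K) (Wsum n t y q) (Wsum n t y N1)
        nlinarith

lemma dpow_mono (n : ℕ) (x y : ℝ) (hx : 0 ≤ x) (hxy : x ≤ y) :
    (x + 1) ^ n - x ^ n ≤ (y + 1) ^ n - y ^ n := by
  induction n with
  | zero => simp
  | succ n ih =>
    have e : ∀ z : ℝ, (z + 1) ^ (n + 1) - z ^ (n + 1) = z * ((z + 1) ^ n - z ^ n) + (z + 1) ^ n := by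
      intro z; ring
    rw [e, e]
    have h1 : 0 ≤ (x + 1) ^ n - x ^ n := by
      have : x ^ n ≤ (x + 1) ^ n := by gcongr; linarith
      linarith
    have h2 : x * ((x + 1) ^ n - x ^ n) ≤ y * ((y + 1) ^ n - y ^ n) :=
      mul_le_mul hxy ih h1 (hx.trans hxy)
    have h3 : (x + 1) ^ n ≤ (y + 1) ^ n := by gcongr
    linarith

lemma dpow_ge (n : ℕ) (hn : 1 ≤ n) (x : ℝ) (hx : 0 ≤ x) : x ^ (n - 1) ≤ (x + 1) ^ n - x ^ n := by
  obtain ⟨d, rfl⟩ : ∃ d, n = d + 1 := ⟨n - 1, by omega⟩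
  have : x ^ d ≤ (x + 1) ^ d := by gcongr; linarith
  simp only [Nat.add_sub_cancel]
  rw [pow_succ, pow_succ]
  nlinarith

lemma dpow_le (n : ℕ) (x : ℝ) (hx : 0 ≤ x) : (x + 1) ^ n - x ^ n ≤ n * (x + 1) ^ (n - 1) := by
  have h := abs_pow_sub_pow_le (x + 1) x n
  rw [abs_of_nonneg (by linarith : 0 ≤ x + 1), abs_of_nonneg hx, max_eq_left (by linarith),
    show x + 1 - x = 1 by ring, abs_one, one_mul] at h
  exact (le_abs_self _).trans h

lemma mid (n : ℕ) (t y δ : ℝ) (ht : 0 ≤ t) (hδ : 0 < δ) (a b : ℕ) (ha : 1 ≤ a)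
    (hab : a ≤ b) (h1 : δ ≤ y + t * (((a:ℝ) + 1) ^ n - (a:ℝ) ^ n))
    (h2 : y + t * (((b:ℝ) + 1) ^ n - (b:ℝ) ^ n) ≤ 1 - δ) :
    |Wsum n t y b - Wsum n t y a| ≤ 2 / δ ^ 2 / a := by
  refine (abs_Wsum_sub_le n t y a b ha hab).trans ?_
  apply abel_inv (fun k => ee (t * (k:ℝ) ^ n + y * k)) a b ha hab
  intro j haj hjb
  have e : ∀ k : ℕ, (t * ((k + 1 : ℕ):ℝ) ^ n + y * ((k + 1 : ℕ):ℝ)) - (t * (k:ℝ) ^ n + y * k)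
      = y + t * (((k:ℝ) + 1) ^ n - (k:ℝ) ^ n) := by
    intro k; push_cast; ring
  have mono : ∀ k l : ℕ, k ≤ l → y + t * (((k:ℝ) + 1) ^ n - (k:ℝ) ^ n)
      ≤ y + t * (((l:ℝ) + 1) ^ n - (l:ℝ) ^ n) := by
    intro k l hkl
    have := dpow_mono n k l (by positivity) (by exact_mod_cast hkl)
    have := mul_le_mul_of_nonneg_left this ht
    linarith
  apply kusmin (fun k : ℕ => t * (k:ℝ) ^ n + y * k) δ hδ a j haj
  · intro k hk1 hk2
    rw [e]; exact h1.trans (mono a k hk1)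
  · intro k hk1 hk2
    rw [e]; exact (mono k b (hk2.trans hjb)).trans h2
  · intro k hk1 hk2
    have := mono k (k + 1) (by omega)
    rw [← e, ← e] at this
    exact this

noncomputable def kap (n : ℕ) : ℝ := 1 / (3 * n - 2)

noncomputable def NN (n : ℕ) (t : ℝ) : ℕ := ⌈t ^ (-(3 * kap n))⌉₊

lemma kap_pos (n : ℕ) (hn : 3 ≤ n) : 0 < kap n := by
  have hn' : (3:ℝ) ≤ n := by exact_mod_cast hn
  unfold kap; apply one_div_pos.2; linarith

lemma NN_facts (n : ℕ) (hn : 3 ≤ n) (t : ℝ) (ht : 0 < t) (ht1 : t ≤ 1) :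
    0 < t ^ kap n ∧ t ^ kap n ≤ 1 ∧ t * (t ^ kap n) ^ 2 = (t ^ kap n) ^ (3 * n) ∧
    1 ≤ (NN n t : ℝ) * (t ^ kap n) ^ 3 ∧ (NN n t : ℝ) * (t ^ kap n) ^ 3 ≤ 2 ∧ 1 ≤ NN n t ∧
    t ^ ((n:ℝ)⁻¹) ≤ (t ^ kap n) ^ 2 := by
  have hn' : (3:ℝ) ≤ n := by exact_mod_cast hn
  have hk := kap_pos n hn
  have h0 : 0 < t ^ kap n := by positivity
  have h1 : t ^ kap n ≤ 1 := Real.rpow_le_one ht.le ht1 hk.le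
  have e3 : t ^ (-(3 * kap n)) * (t ^ kap n) ^ 3 = 1 := by
    rw [← Real.rpow_natCast, ← Real.rpow_mul ht.le, ← Real.rpow_add ht]
    push_cast; rw [show -(3 * kap n) + kap n * 3 = 0 by ring, Real.rpow_zero]
  have hN := Nat.le_ceil (t ^ (-(3 * kap n)))
  have hp : 0 < t ^ (-(3 * kap n)) := by positivity
  have hN2 := (Nat.ceil_lt_add_one hp.le).le
  have h13 : (t ^ kap n) ^ 3 ≤ 1 := pow_le_one₀ h0.le h1
  refine ⟨h0, h1, ?_, ?_, ?_, ?_, ?_⟩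
  · nth_rewrite 1 [← Real.rpow_one t]
    rw [← Real.rpow_natCast, ← Real.rpow_natCast, ← Real.rpow_mul ht.le, ← Real.rpow_mul ht.le,
      ← Real.rpow_add ht]
    congr 1; unfold kap; push_cast
    have : (3 * n - 2 : ℝ) ≠ 0 := by linarith
    field_simp; ring
  · rw [← e3]; unfold NN; gcongr
  · unfold NN
    calc _ ≤ (t ^ (-(3 * kap n)) + 1) * (t ^ kap n) ^ 3 := by gcongr
      _ = 1 + (t ^ kap n) ^ 3 := by rw [add_mul, e3, one_mul]
      _ ≤ 2 := by linarith
  · unfold NN; exact Nat.one_le_ceil_iff.2 hp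
  · rw [← Real.rpow_natCast, ← Real.rpow_mul ht.le]
    apply Real.rpow_le_rpow_of_exponent_ge ht ht1
    unfold kap
    push_cast
    rw [one_div_mul_eq_div, inv_eq_one_div, div_le_div_iff₀ (by linarith) (by linarith)]
    linarith

lemma NN_pow (n : ℕ) (hn : 3 ≤ n) (t : ℝ) (ht : 0 < t) (ht1 : t ≤ 1) :
    t ^ kap n ≤ t * (NN n t : ℝ) ^ (n - 1) ∧
    t * (NN n t : ℝ) ^ (n - 1) ≤ 2 ^ (n - 1) * t ^ kap n ∧
    1 ≤ t * (NN n t : ℝ) ^ n * (t ^ kap n) ^ 2 ∧ 1 / (NN n t : ℝ) ≤ t ^ kap n := by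
  obtain ⟨h0, h1, h2, h3, h4, h5, -⟩ := NN_facts n hn t ht ht1
  set τ := t ^ kap n
  set N : ℝ := (NN n t : ℝ)
  have hN0 : 0 < N := by
    have : (1:ℝ) ≤ N := Nat.one_le_cast.2 h5
    linarith
  have e1 : t * N ^ (n - 1) = τ * (N * τ ^ 3) ^ (n - 1) := by
    have : t * N ^ (n - 1) * τ ^ 2 = τ * (N * τ ^ 3) ^ (n - 1) * τ ^ 2 := by
      rw [mul_right_comm, h2]
      obtain ⟨d, rfl⟩ : ∃ d, n = d + 1 := ⟨n - 1, by omega⟩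
      simp only [Nat.add_sub_cancel]
      ring
    exact mul_right_cancel₀ (by positivity) this
  refine ⟨?_, ?_, ?_, ?_⟩
  · rw [e1]; exact le_mul_of_one_le_right h0.le (one_le_pow₀ h3)
  · rw [e1, mul_comm]; gcongr
  · rw [mul_right_comm, h2, pow_mul, ← mul_pow, mul_comm]; exact one_le_pow₀ h3
  · rw [div_le_iff₀ hN0]
    have : τ ^ 3 ≤ τ := by
      calc τ ^ 3 = τ * τ ^ 2 := by ring
        _ ≤ τ * 1 := by gcongr; exact pow_le_one₀ h0.le h1
        _ = τ := mul_one _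
    nlinarith

lemma N1_pow (n : ℕ) (hn : 3 ≤ n) (m : ℤ) (hm : 2 ≤ m) (α' : ℝ) (h0 : 0 < α')
    (hα' : α' < ((n:ℝ) - 1)⁻¹) (c : ℝ) (hc : 0 < c) :
    ∃ t₁ > (0:ℝ), t₁ ≤ 1 ∧ ∀ t ∈ Set.Ioc (0:ℝ) t₁,
      t * (((⌈(m:ℝ) * t ^ (-α')⌉₊ : ℝ) + 1) ^ n - (⌈(m:ℝ) * t ^ (-α')⌉₊ : ℝ) ^ n) ≤ c := by
  have hn' : (3:ℝ) ≤ n := by exact_mod_cast hn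
  have hm' : (2:ℝ) ≤ m := by exact_mod_cast hm
  have hβ : 0 < 1 - α' * (n - 1) := by
    have : α' * (n - 1) < ((n:ℝ) - 1)⁻¹ * (n - 1) := by
      apply mul_lt_mul_of_pos_right hα'; linarith
    rw [inv_mul_cancel₀ (by linarith)] at this
    linarith
  set β := 1 - α' * (n - 1) with hβd
  set D : ℝ := n * (m + 2) ^ (n - 1) with hD
  have hD0 : 0 < D := by positivity
  refine ⟨min 1 ((c / D) ^ (1 / β)), by positivity, min_le_left _ _, fun t ht => ?_⟩
  obtain ⟨ht0, ht1⟩ := ht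
  have htone : t ≤ 1 := ht1.trans (min_le_left _ _)
  have htb : t ^ β ≤ c / D := by
    have := Real.rpow_le_rpow ht0.le (ht1.trans (min_le_right _ _)) hβ.le
    rwa [← Real.rpow_mul (by positivity), one_div_mul_cancel hβ.ne', Real.rpow_one] at this
  set N := ⌈(m:ℝ) * t ^ (-α')⌉₊ with hN
  have hta : 1 ≤ t ^ (-α') := Real.one_le_rpow_of_pos_of_le_one_of_nonpos ht0 htone (by linarith)
  have hN2 : (N:ℝ) + 1 ≤ (m + 2) * t ^ (-α') := by
    have := (Nat.ceil_lt_add_one (by positivity : 0 ≤ (m:ℝ) * t ^ (-α'))).le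
    rw [← hN] at this
    linarith
  calc t * (((N:ℝ) + 1) ^ n - (N:ℝ) ^ n) ≤ t * (n * ((N:ℝ) + 1) ^ (n - 1)) := by
        gcongr; exact dpow_le n N (by positivity)
    _ ≤ t * (n * ((m + 2) * t ^ (-α')) ^ (n - 1)) := by gcongr
    _ = D * (t * (t ^ (-α')) ^ (n - 1)) := by rw [hD, mul_pow]; ring
    _ = D * t ^ β := by
        congr 1
        nth_rewrite 1 [← Real.rpow_one t]
        rw [← Real.rpow_natCast, ← Real.rpow_mul ht0.le, ← Real.rpow_add ht0]
        congr 1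
        rw [hβd, Nat.cast_sub (by omega)]; push_cast; ring
    _ ≤ D * (c / D) := by gcongr
    _ = c := by field_simp

lemma NN_le_N1 (n : ℕ) (m : ℤ) (hm : 2 ≤ m) (α' : ℝ)
    (hα' : 3 * kap n ≤ α') (t : ℝ) (ht : 0 < t) (ht1 : t ≤ 1) :
    NN n t ≤ ⌈(m:ℝ) * t ^ (-α')⌉₊ := by
  unfold NN
  apply Nat.ceil_mono
  have hm' : (2:ℝ) ≤ m := by exact_mod_cast hm
  have h1 : t ^ (-(3 * kap n)) ≤ t ^ (-α') :=
    Real.rpow_le_rpow_of_exponent_ge ht ht1 (by linarith)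
  have h2 : 0 < t ^ (-α') := by positivity
  nlinarith

lemma mid_zero (n : ℕ) (hn : 3 ≤ n) (m : ℤ) (hm : 2 ≤ m) (α' : ℝ) (h0 : 3 * kap n ≤ α')
    (hα' : α' < ((n:ℝ) - 1)⁻¹) (S : ℝ) (hS : 0 < S) :
    ∃ C > (0:ℝ), ∃ t₁ > (0:ℝ), ∀ t ∈ Set.Ioc (0:ℝ) t₁, ∀ s ∈ Set.Icc (-S) S,
      |Wsum n t (s * t ^ ((n:ℝ)⁻¹)) ⌈(m:ℝ) * t ^ (-α')⌉₊ - Wsum n t (s * t ^ ((n:ℝ)⁻¹)) (NN n t)|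
        ≤ C * t ^ kap n := by
  have hk := kap_pos n hn
  obtain ⟨t₂, ht₂, ht₂1, h⟩ := N1_pow n hn m hm α' (by linarith) hα' (1 / 4) (by norm_num)
  set r := min (1 / 4) (1 / (4 * S)) with hr
  have hr0 : 0 < r := by positivity
  refine ⟨8, by norm_num, min t₂ (r ^ (1 / kap n)), by positivity, fun t ht s hs => ?_⟩
  obtain ⟨ht0, ht1⟩ := ht
  have htt : t ≤ t₂ := ht1.trans (min_le_left _ _)
  have htone : t ≤ 1 := htt.trans ht₂1
  have hτr : t ^ kap n ≤ r := by
    have := Real.rpow_le_rpow ht0.le (ht1.trans (min_le_right _ _)) hk.le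
    rwa [← Real.rpow_mul (by positivity), one_div_mul_cancel hk.ne', Real.rpow_one] at this
  have h1 := h t ⟨ht0, htt⟩
  obtain ⟨f0, f1, f2, f3, f4, f5, f6⟩ := NN_facts n hn t ht0 htone
  obtain ⟨g1, g2, g3, g4⟩ := NN_pow n hn t ht0 htone
  set τ := t ^ kap n
  have hτ1 : τ ≤ 1 / 4 := hτr.trans (min_le_left _ _)
  have hτ2 : τ * (4 * S) ≤ 1 := by
    have := hτr.trans (min_le_right _ _)
    rwa [le_div_iff₀ (by positivity)] at this
  have hs' : |s * t ^ ((n:ℝ)⁻¹)| ≤ τ / 4 := by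
    rw [abs_mul, abs_of_pos (by positivity : 0 < t ^ ((n:ℝ)⁻¹))]
    calc |s| * t ^ ((n:ℝ)⁻¹) ≤ S * τ ^ 2 := by
          gcongr; exact abs_le.2 hs
      _ ≤ τ / 4 := by nlinarith
  obtain ⟨hs1, hs2⟩ := abs_le.1 hs'
  have hN0 : (0:ℝ) < NN n t := by exact_mod_cast f5
  have := mid n t (s * t ^ ((n:ℝ)⁻¹)) (τ / 2) ht0.le (by positivity) (NN n t)
    ⌈(m:ℝ) * t ^ (-α')⌉₊ f5 (NN_le_N1 n m hm α' h0 t ht0 htone)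
    (by
      have := mul_le_mul_of_nonneg_left (dpow_ge n (by omega) (NN n t) hN0.le) ht0.le
      linarith)
    (by linarith)
  refine this.trans ?_
  rw [div_le_iff₀ hN0, div_le_iff₀ (by positivity)]
  nlinarith

lemma mid_c (n : ℕ) (hn : 3 ≤ n) (m : ℤ) (hm : 2 ≤ m) (α' : ℝ) (h0 : 3 * kap n ≤ α')
    (hα' : α' < ((n:ℝ) - 1)⁻¹) (c : ℝ) (hc : 0 < c) :
    ∃ C > (0:ℝ), ∃ t₁ > (0:ℝ), ∀ t ∈ Set.Ioc (0:ℝ) t₁, ∀ y ∈ Set.Icc c (1 - c),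
      |Wsum n t y ⌈(m:ℝ) * t ^ (-α')⌉₊ - Wsum n t y (NN n t)| ≤ C * t ^ kap n := by
  have hk := kap_pos n hn
  obtain ⟨t₂, ht₂, ht₂1, h⟩ := N1_pow n hn m hm α' (by linarith) hα' (c / 2) (by linarith)
  refine ⟨2 / (c / 2) ^ 2, by positivity, t₂, ht₂, fun t ht y hy => ?_⟩
  obtain ⟨ht0, htt⟩ := ht
  have htone : t ≤ 1 := htt.trans ht₂1
  have h1 := h t ⟨ht0, htt⟩
  obtain ⟨f0, f1, f2, f3, f4, f5, f6⟩ := NN_facts n hn t ht0 htone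
  obtain ⟨g1, g2, g3, g4⟩ := NN_pow n hn t ht0 htone
  have hN0 : (0:ℝ) < NN n t := by exact_mod_cast f5
  have := mid n t y (c / 2) ht0.le (by positivity) (NN n t)
    ⌈(m:ℝ) * t ^ (-α')⌉₊ f5 (NN_le_N1 n m hm α' h0 t ht0 htone)
    (by
      have := mul_le_mul_of_nonneg_left (dpow_ge n (by omega) (NN n t) hN0.le) ht0.le
      linarith [hy.1])
    (by linarith [hy.2])
  refine this.trans ?_
  rw [div_eq_mul_one_div _ ((NN n t : ℕ):ℝ)]
  gcongr

lemma saw_cauchy (y c : ℝ) (hc : 0 < c) (hy : y ∈ Set.Icc c (1 - c)) (a b : ℕ) (ha : 1 ≤ a)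
    (hab : a ≤ b) : ‖∑ k ∈ Ico a b, ee (y * k) / k‖ ≤ 1 / (2 * c) / a := by
  apply abel_inv (fun k => ee (y * k)) a b ha hab
  intro j hj _
  have h1 := geom_bound y a j hj
  have h2 := nrm_ge_of_mem hy.1 hy.2
  rw [le_div_iff₀ (by positivity)]
  have := norm_nonneg (∑ k ∈ Ico a j, ee (y * k))
  nlinarith

lemma one_sub_ee (y : ℝ) : 1 - ee y = ((2 * Real.sin (Real.pi * y) : ℝ) : ℂ) *
    (Real.cos (Real.pi * y - Real.pi / 2) + Real.sin (Real.pi * y - Real.pi / 2) * Complex.I) := by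
  rw [Real.cos_sub_pi_div_two, Real.sin_sub_pi_div_two, ee_eq, Complex.exp_mul_I,
    ← Complex.ofReal_cos, ← Complex.ofReal_sin]
  rw [show 2 * Real.pi * y = 2 * (Real.pi * y) by ring, Real.cos_two_mul, Real.sin_two_mul]
  have := Real.sin_sq_add_cos_sq (Real.pi * y)
  apply Complex.ext
  · simp [-Complex.ofReal_sin, -Complex.ofReal_cos, pow_two]
    nlinarith
  · simp [-Complex.ofReal_sin, -Complex.ofReal_cos, pow_two]

lemma saw_tendsto (y : ℝ) (hy : y ∈ Set.Ioo (0:ℝ) 1) (n : ℕ) :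
    Tendsto (Wsum n 0 y) atTop (nhds (1 / 2 - y)) := by
  obtain ⟨hy0, hy1⟩ := hy
  have hsin : 0 < Real.sin (Real.pi * y) := by
    apply Real.sin_pos_of_pos_of_lt_pi
    · have := Real.pi_pos; positivity
    · nlinarith [Real.pi_pos]
  set c := min y (1 - y) with hc
  have hc0 : 0 < c := lt_min hy0 (by linarith)
  have hyc : y ∈ Set.Icc c (1 - c) :=
    ⟨min_le_left _ _, by linarith [min_le_right y (1 - y)]⟩
  set f : ℕ → ℂ := fun k => ee (y * k) / k with hf
  have hcs : CauchySeq (fun K => ∑ k ∈ range K, f k) := by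
    rw [Metric.cauchySeq_iff']
    intro ε hε
    obtain ⟨N, hN⟩ := ((tendsto_const_div_atTop_nhds_zero_nat (1 / (2 * c))).eventually
      (gt_mem_nhds hε)).exists_forall_of_atTop
    refine ⟨max 1 N, fun b hb => ?_⟩
    rw [dist_eq_norm, ← sum_Ico_eq_sub _ hb]
    exact (saw_cauchy y c hc0 hyc _ b (le_max_left _ _) hb).trans_lt (hN _ (le_max_right _ _))
  obtain ⟨l, hl⟩ := cauchySeq_tendsto_of_complete hcs
  have habel := Complex.tendsto_tsum_powerSeries_nhdsWithin_lt hl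
  have hre : 0 < (1 - ee y).re := by
    rw [one_sub_ee, Complex.re_ofReal_mul]
    simp only [Complex.add_re, Complex.ofReal_re, Complex.mul_I_re, Complex.ofReal_im]
    rw [Real.cos_sub_pi_div_two]
    simp only [neg_zero, add_zero]; positivity
  have hlim : Tendsto (fun x : ℝ => -Complex.log (1 - x * ee y)) (nhdsWithin 1 (Set.Iio 1))
      (nhds (-Complex.log (1 - ee y))) := by
    have h1 : ContinuousAt (fun x : ℝ => -Complex.log (1 - x * ee y)) 1 := by
      apply ContinuousAt.neg
      apply ContinuousAt.clog
      · fun_prop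
      · left; simpa using hre
    have := h1.tendsto.mono_left (nhdsWithin_le_nhds (s := Set.Iio 1))
    simpa using this
  have heq : l = -Complex.log (1 - ee y) := by
    rw [tendsto_map'_iff] at habel
    refine tendsto_nhds_unique (habel.congr' ?_) hlim
    have : Set.Ioo (0:ℝ) 1 ∈ nhdsWithin (1:ℝ) (Set.Iio 1) := Ioo_mem_nhdsLT (by norm_num)
    filter_upwards [this] with x hx
    have hn : ‖(x:ℂ) * ee y‖ < 1 := by
      rw [norm_mul, norm_ee, mul_one, Complex.norm_real, Real.norm_eq_abs, abs_of_pos hx.1]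
      exact hx.2
    rw [← (Complex.hasSum_taylorSeries_neg_log hn).tsum_eq]
    apply tsum_congr
    intro k
    simp only [hf]
    rw [ee_nat_mul, mul_pow]; ring
  have him : l.im = Real.pi / 2 - Real.pi * y := by
    rw [heq, Complex.neg_im, Complex.log_im, one_sub_ee]
    rw [Complex.ofReal_cos, Complex.ofReal_sin, Complex.arg_mul_cos_add_sin_mul_I (by positivity)]
    · ring
    · constructor
      · nlinarith [Real.pi_pos]
      · nlinarith [Real.pi_pos]
  have h3 := ((Complex.continuous_im.tendsto l).comp hl).const_mul (1 / Real.pi)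
  rw [him] at h3
  rw [show 1 / 2 - y = 1 / Real.pi * (Real.pi / 2 - Real.pi * y) by
    have := Real.pi_pos; field_simp]
  refine h3.congr' ?_
  filter_upwards [eventually_ge_atTop 1] with K hK
  simp only [Function.comp]
  rw [range_eq_Ico, sum_eq_sum_Ico_succ_bot (by omega)]
  unfold Wsum
  simp only [hf, Nat.cast_zero, div_zero, zero_add]
  rw [Complex.im_sum, mul_sum]
  refine sum_congr rfl fun k _ => ?_
  rw [Complex.div_natCast_im, ee_im]
  simp only [zero_mul, zero_add]
  rw [div_mul_div_comm, one_mul]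

lemma W_zero_bound (n : ℕ) (y c : ℝ) (hc : 0 < c) (hy : y ∈ Set.Icc c (1 - c)) (N : ℕ)
    (hN : 1 ≤ N) : |Wsum n 0 y N - (1 / 2 - y)| ≤ 1 / (2 * c) / N := by
  have h := saw_tendsto y ⟨hc.trans_le hy.1, hy.2.trans_lt (by linarith)⟩ n
  have h1 : Tendsto (fun b => |Wsum n 0 y N - Wsum n 0 y b|) atTop
      (nhds |Wsum n 0 y N - (1 / 2 - y)|) := (tendsto_const_nhds.sub h).abs
  refine le_of_tendsto h1 ?_
  filter_upwards [eventually_ge_atTop N] with b hb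
  rw [abs_sub_comm]
  refine (abs_Wsum_sub_le n 0 y N b hN hb).trans ?_
  simp only [zero_mul, zero_add]
  exact saw_cauchy y c hc hy N b hN hb

lemma W_diff_bound (n : ℕ) (hn : 2 ≤ n) (t y c : ℝ) (ht : 0 ≤ t) (hc : 0 < c)
    (hy : y ∈ Set.Icc c (1 - c)) (N : ℕ) (hN : 1 ≤ N) :
    |Wsum n t y N - Wsum n 0 y N|
      ≤ 1 / (2 * c) * (2 * Real.pi * (n + 2) * (t * (N:ℝ) ^ (n - 1))) := by
  obtain ⟨d, rfl⟩ : ∃ d, n = d + 2 := ⟨n - 2, by omega⟩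
  set w : ℕ → ℂ := fun k => (ee (t * (k:ℝ) ^ (d + 2)) - 1) / k with hw
  have hpi := Real.pi_pos
  have hN1 : (1:ℝ) ≤ N := by exact_mod_cast hN
  have e : Wsum (d + 2) t y N - Wsum (d + 2) 0 y N
      = (1 / Real.pi) * (∑ k ∈ Ico 1 N, w k * ee (y * k)).im := by
    unfold Wsum
    rw [← sum_sub_distrib, Complex.im_sum, mul_sum]
    refine sum_congr rfl fun k _ => ?_
    have : w k * ee (y * k) = (ee (t * (k:ℝ) ^ (d + 2) + y * k) - ee (0 * (k:ℝ) ^ (d + 2) + y * k)) / k := by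
      rw [zero_mul, zero_add, ee_add]; simp only [hw]; ring
    rw [this, Complex.div_natCast_im, Complex.sub_im, ee_im, ee_im]
    rw [← sub_div, div_mul_div_comm, one_mul]
  have hab := abel_bound w (fun k => ee (y * k)) 1 N hN (1 / (2 * c)) (by
    intro j hj _
    have h1 := geom_bound y 1 j hj
    have h2 := nrm_ge_of_mem hy.1 hy.2
    rw [le_div_iff₀ (by positivity)]
    have := norm_nonneg (∑ k ∈ Ico 1 j, ee (y * k))
    nlinarith)
  have hb1 : ∀ k : ℕ, ‖ee (t * (k:ℝ) ^ (d + 2)) - 1‖ ≤ 2 * Real.pi * (t * (k:ℝ) ^ (d + 2)) := by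
    intro k
    refine (norm_ee_sub_one_le _).trans (le_of_eq ?_)
    rw [abs_of_nonneg (by positivity)]
  have hwN : ‖w N‖ ≤ 2 * Real.pi * (t * (N:ℝ) ^ (d + 1)) := by
    simp only [hw]
    rw [norm_div, Complex.norm_natCast, div_le_iff₀ (by positivity)]
    refine (hb1 N).trans (le_of_eq ?_); ring
  have hstep : ∀ k ∈ Ico 1 N, ‖w (k + 1) - w k‖ ≤ 2 * Real.pi * t * (d + 3) * (N:ℝ) ^ d := by
    intro k hk
    obtain ⟨hk1, hkN⟩ := mem_Ico.1 hk
    have hk0 : (0:ℝ) < k := by exact_mod_cast hk1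
    have hkN' : (k:ℝ) + 1 ≤ N := by exact_mod_cast hkN
    have hk0' : (k:ℂ) ≠ 0 := by exact_mod_cast hk0.ne'
    have hk0'' : (k:ℂ) + 1 ≠ 0 := by exact_mod_cast (by positivity : (k:ℝ) + 1 ≠ 0)
    have e2 : w (k + 1) - w k
        = (ee (t * ((k:ℝ) + 1) ^ (d + 2)) - ee (t * (k:ℝ) ^ (d + 2))) / ((k + 1 : ℕ):ℂ)
          - (ee (t * (k:ℝ) ^ (d + 2)) - 1) / ((k * (k + 1) : ℕ):ℂ) := by
      simp only [hw]; push_cast; field_simp; ring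
    rw [e2]
    refine (norm_sub_le _ _).trans ?_
    have n1 : ‖(ee (t * ((k:ℝ) + 1) ^ (d + 2)) - ee (t * (k:ℝ) ^ (d + 2))) / ((k + 1 : ℕ):ℂ)‖
        ≤ 2 * Real.pi * t * (d + 2) * (N:ℝ) ^ d := by
      rw [norm_div, Complex.norm_natCast, div_le_iff₀ (by positivity)]
      refine (norm_ee_sub_ee_le _ _).trans ?_
      rw [← mul_sub, abs_mul, abs_of_nonneg ht, abs_of_nonneg (by
        have : (k:ℝ) ^ (d + 2) ≤ ((k:ℝ) + 1) ^ (d + 2) := by gcongr; linarith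
        linarith)]
      have := dpow_le (d + 2) k hk0.le
      push_cast at this ⊢
      calc _ ≤ 2 * Real.pi * (t * ((d + 2) * ((k:ℝ) + 1) ^ (d + 1))) := by gcongr
        _ = 2 * Real.pi * t * (d + 2) * ((k:ℝ) + 1) ^ d * (k + 1) := by ring
        _ ≤ 2 * Real.pi * t * (d + 2) * (N:ℝ) ^ d * (k + 1) := by gcongr
    have n2 : ‖(ee (t * (k:ℝ) ^ (d + 2)) - 1) / ((k * (k + 1) : ℕ):ℂ)‖
        ≤ 2 * Real.pi * t * (N:ℝ) ^ d := by
      rw [norm_div, Complex.norm_natCast, div_le_iff₀ (by positivity)]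
      refine (hb1 k).trans ?_
      push_cast
      calc _ = 2 * Real.pi * t * (k:ℝ) ^ d * (k * k) := by ring
        _ ≤ 2 * Real.pi * t * (N:ℝ) ^ d * (k * (k + 1)) := by gcongr <;> linarith
    linarith
  have hsum : ∑ k ∈ Ico 1 N, ‖w (k + 1) - w k‖ ≤ 2 * Real.pi * t * (d + 3) * (N:ℝ) ^ (d + 1) := by
    refine (sum_le_card_nsmul _ _ _ hstep).trans ?_
    rw [nsmul_eq_mul, Nat.card_Ico]
    have : ((N - 1 : ℕ):ℝ) ≤ N := by exact_mod_cast Nat.sub_le _ _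
    calc _ ≤ (N:ℝ) * (2 * Real.pi * t * (d + 3) * (N:ℝ) ^ d) := by gcongr
      _ = _ := by ring
  rw [e, abs_mul, abs_of_pos (by positivity)]
  have hpi1 : 1 / Real.pi ≤ 1 := by
    rw [div_le_one Real.pi_pos]; linarith [Real.pi_gt_three]
  refine (mul_le_of_le_one_left (abs_nonneg _) hpi1).trans ?_
  refine (Complex.abs_im_le_norm _).trans (hab.trans ?_)
  gcongr
  rw [show d + 2 - 1 = d + 1 by omega]
  push_cast
  have : 2 * Real.pi * ((d:ℝ) + 2 + 2) * (t * (N:ℝ) ^ (d + 1))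
      = 2 * Real.pi * (t * (N:ℝ) ^ (d + 1)) + 2 * Real.pi * t * (d + 3) * (N:ℝ) ^ (d + 1) := by ring
  linarith

lemma claimB (n : ℕ) (hn : 3 ≤ n) (c : ℝ) (hc : 0 < c) :
    ∃ C > (0:ℝ), ∀ t ∈ Set.Ioc (0:ℝ) 1, ∀ y ∈ Set.Icc c (1 - c),
      |Wsum n t y (NN n t) - (1 / 2 - y)| ≤ C * t ^ kap n := by
  have hpi := Real.pi_pos
  refine ⟨1 / (2 * c) * (2 * Real.pi * (n + 2) * 2 ^ (n - 1)) + 1 / (2 * c), by positivity,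
    fun t ht y hy => ?_⟩
  obtain ⟨f0, f1, f2, f3, f4, f5, f6⟩ := NN_facts n hn t ht.1 ht.2
  obtain ⟨g1, g2, g3, g4⟩ := NN_pow n hn t ht.1 ht.2
  have h1 := W_zero_bound n y c hc hy (NN n t) f5
  have h2 := W_diff_bound n (by omega) t y c ht.1.le hc hy (NN n t) f5
  have h3 := abs_sub_le (Wsum n t y (NN n t)) (Wsum n 0 y (NN n t)) (1 / 2 - y)
  have h4 : 1 / (2 * c) / (NN n t : ℝ) ≤ 1 / (2 * c) * t ^ kap n := by
    rw [div_eq_mul_one_div _ (NN n t : ℝ)]; gcongr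
  have h5 : 1 / (2 * c) * (2 * Real.pi * (n + 2) * (t * (NN n t:ℝ) ^ (n - 1)))
      ≤ 1 / (2 * c) * (2 * Real.pi * (n + 2) * (2 ^ (n - 1) * t ^ kap n)) := by gcongr
  linarith

noncomputable def Gf (n : ℕ) (t r y : ℝ) : ℝ :=
  2 * Real.pi * (t * y ^ (n - 1) + r) * Real.sinc (2 * Real.pi * (t * y ^ n + r * y))

lemma Gf_cont (n : ℕ) (t r : ℝ) : Continuous (Gf n t r) := by
  unfold Gf
  have := Real.continuous_sinc
  fun_prop

lemma Gf_int (n : ℕ) (t r a b : ℝ) : IntervalIntegrable (Gf n t r) volume a b :=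
  (Gf_cont n t r).intervalIntegrable a b

lemma Gf_eq (n : ℕ) (hn : 2 ≤ n) (t r y : ℝ) (hy : y ≠ 0) :
    Gf n t r y = Real.sin (2 * Real.pi * (t * y ^ n + r * y)) / y := by
  unfold Gf
  obtain ⟨d, rfl⟩ : ∃ d, n = d + 1 := ⟨n - 1, by omega⟩
  simp only [Nat.add_sub_cancel]
  have e : t * y ^ (d + 1) + r * y = (t * y ^ d + r) * y := by ring
  rw [e]
  by_cases h : t * y ^ d + r = 0
  · rw [h]; simp
  · have hpi := Real.pi_pos
    rw [Real.sinc_of_ne_zero (by positivity)]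
    field_simp

lemma Gf_zero (n : ℕ) (hn : 2 ≤ n) (t r : ℝ) : Gf n t r 0 = 2 * Real.pi * r := by
  unfold Gf
  rw [zero_pow (by omega), zero_pow (by omega)]; simp

lemma Gf_neg (n : ℕ) (hn : 2 ≤ n) (hno : Odd n) (t r y : ℝ) : Gf n t r (-y) = Gf n t r y := by
  unfold Gf
  have h1 : Even (n - 1) := by
    obtain ⟨k, hk⟩ := hno; exact ⟨k, by omega⟩
  rw [h1.neg_pow, hno.neg_pow,
    show 2 * Real.pi * (t * -y ^ n + r * -y) = -(2 * Real.pi * (t * y ^ n + r * y)) by ring,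
    Real.sinc_neg]

lemma Gf_scale (n : ℕ) (hn : 2 ≤ n) (l s y : ℝ) :
    Gf n (l ^ n) (s * l) y = l * Gf n 1 s (l * y) := by
  unfold Gf
  obtain ⟨d, rfl⟩ : ∃ d, n = d + 1 := ⟨n - 1, by omega⟩
  simp only [Nat.add_sub_cancel]
  rw [show l ^ (d + 1) * y ^ (d + 1) + s * l * y = 1 * (l * y) ^ (d + 1) + s * (l * y) by ring]
  ring

lemma Jint_eq (n : ℕ) (hn : 2 ≤ n) (hno : Odd n) (s R : ℝ) :
    (1 / (2 * Real.pi)) * Jint n s R = (1 / Real.pi) * ∫ y in (0:ℝ)..R, Gf n 1 s y := by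
  have e : Jint n s R = ∫ y in (-R)..R, Gf n 1 s y := by
    unfold Jint
    congr 1
    funext y
    split_ifs with h
    · rw [h, Gf_zero n hn]
    · rw [Gf_eq n hn _ _ _ h, one_mul]
  have e2 : ∫ y in (-R)..0, Gf n 1 s y = ∫ y in (0:ℝ)..R, Gf n 1 s y := by
    have := intervalIntegral.integral_comp_neg (a := 0) (b := R) (Gf n 1 s)
    rw [neg_zero] at this
    rw [← this]
    congr 1; funext y; exact Gf_neg n hn hno 1 s y
  rw [e, ← intervalIntegral.integral_add_adjacent_intervals (Gf_int n 1 s (-R) 0)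
    (Gf_int n 1 s 0 R), e2]
  have := Real.pi_pos
  field_simp; ring

lemma osc_tail (n : ℕ) (hn : 3 ≤ n) (s S a b : ℝ) (hs : s ∈ Set.Icc (-S) S)
    (ha1 : 1 ≤ a) (haS : S ≤ a) (hab : a ≤ b) :
    |∫ z in a..b, Gf n 1 s z| ≤ 2 / a ^ n := by
  have hn' : (3:ℝ) ≤ n := by exact_mod_cast hn
  have hpi := Real.pi_pos
  set D : ℝ → ℝ := fun z => n * z ^ n + s * z with hD
  have hpos : ∀ z, a ≤ z → z ^ n ≤ D z ∧ 0 ≤ (n:ℝ) * (n * z ^ (n - 1)) + s := by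
    intro z hz
    have hz1 : 1 ≤ z := ha1.trans hz
    have hzn : z ≤ z ^ (n - 1) := by
      calc z = z ^ 1 := (pow_one z).symm
        _ ≤ z ^ (n - 1) := pow_le_pow_right₀ hz1 (by omega)
    have h1 : -s ≤ z ^ (n - 1) := by linarith [hs.1]
    have e : z ^ n = z ^ (n - 1) * z := by rw [← pow_succ]; congr 1; omega
    constructor
    · simp only [hD]
      rw [e]
      have : 0 ≤ z ^ (n - 1) * z := by positivity
      nlinarith
    · have h2 : 0 ≤ z ^ (n - 1) := by positivity
      have h3 : z ^ (n - 1) ≤ n * z ^ (n - 1) := by nlinarith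
      nlinarith
  have hD0 : ∀ z, a ≤ z → 0 < D z := fun z hz =>
    lt_of_lt_of_le (by have : 0 < z := by linarith
                       positivity) (hpos z hz).1
  set u : ℝ → ℝ := fun z => (D z)⁻¹ with hu
  set u' : ℝ → ℝ := fun z => -((n:ℝ) * (n * z ^ (n - 1)) + s) / (D z) ^ 2 with hu'
  set v : ℝ → ℝ := fun z => -Real.cos (2 * Real.pi * (z ^ n + s * z)) / (2 * Real.pi) with hv
  set v' : ℝ → ℝ := fun z => Real.sin (2 * Real.pi * (z ^ n + s * z)) * (n * z ^ (n - 1) + s)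
    with hv'
  have hic : ∀ z ∈ Set.uIcc a b, a ≤ z := by
    intro z hz; rw [Set.uIcc_of_le hab] at hz; exact hz.1
  have hdu : ∀ z ∈ Set.uIcc a b, HasDerivAt u (u' z) z := by
    intro z hz
    have h1 : HasDerivAt D ((n:ℝ) * (n * z ^ (n - 1)) + s) z := by
      have h := ((hasDerivAt_pow n z).const_mul (n:ℝ)).add ((hasDerivAt_id z).const_mul s)
      rw [mul_one] at h
      exact h
    exact h1.inv (hD0 z (hic z hz)).ne'
  have hdv : ∀ z ∈ Set.uIcc a b, HasDerivAt v (v' z) z := by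
    intro z _
    have h1 : HasDerivAt (fun z : ℝ => 2 * Real.pi * (z ^ n + s * z))
        (2 * Real.pi * (n * z ^ (n - 1) + s)) z := by
      simpa using ((hasDerivAt_pow n z).add ((hasDerivAt_id z).const_mul s)).const_mul
        (2 * Real.pi)
    have h2 := (h1.cos.neg).div_const (2 * Real.pi)
    refine h2.congr_deriv ?_
    simp only [hv']; field_simp
  have hDc : Continuous D := by simp only [hD]; fun_prop
  have hcu' : ContinuousOn u' (Set.uIcc a b) := by
    apply ContinuousOn.div
    · fun_prop
    · fun_prop
    · intro z hz
      have := hD0 z (hic z hz); positivity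
  have hiu' : IntervalIntegrable u' volume a b := hcu'.intervalIntegrable
  have hiv' : IntervalIntegrable v' volume a b := by
    apply Continuous.intervalIntegrable; simp only [hv']; fun_prop
  have hparts := intervalIntegral.integral_mul_deriv_eq_deriv_mul hdu hdv hiu' hiv'
  have e1 : ∫ z in a..b, Gf n 1 s z = ∫ z in a..b, u z * v' z := by
    apply intervalIntegral.integral_congr
    intro z hz
    have hza := hic z hz
    have hz0 : z ≠ 0 := by linarith
    have hDz := hD0 z hza
    have e : D z = (n * z ^ (n - 1) + s) * z := by
      simp only [hD]
      rw [add_mul, mul_assoc, ← pow_succ]; congr 3; omega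
    simp only [hu, hv']
    rw [Gf_eq n (by omega) _ _ _ hz0, one_mul, e]
    have : (n * z ^ (n - 1) + s) ≠ 0 := by
      intro h; rw [e, h, zero_mul] at hDz; exact lt_irrefl _ hDz
    field_simp
  have hv1 : ∀ z, |v z| ≤ 1 := by
    intro z
    simp only [hv]
    rw [abs_div, abs_neg, abs_of_pos Real.two_pi_pos, div_le_one Real.two_pi_pos]
    have := Real.abs_cos_le_one (2 * Real.pi * (z ^ n + s * z))
    linarith [Real.pi_gt_three]
  have e2 : |∫ z in a..b, u' z * v z| ≤ ∫ z in a..b, -u' z := by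
    rw [← Real.norm_eq_abs]
    apply intervalIntegral.norm_integral_le_of_norm_le hab
    · filter_upwards with z hz
      have hneg : u' z ≤ 0 := by
        simp only [hu']
        apply div_nonpos_of_nonpos_of_nonneg
        · linarith [(hpos z hz.1.le).2]
        · positivity
      rw [Real.norm_eq_abs, abs_mul, abs_of_nonpos hneg]
      exact mul_le_of_le_one_right (by linarith) (hv1 z)
    · exact hiu'.neg
  have e3 : ∫ z in a..b, -u' z = u a - u b := by
    rw [intervalIntegral.integral_neg, intervalIntegral.integral_eq_sub_of_hasDerivAt hdu hiu']
    ring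
  rw [e1, hparts]
  have hua : 0 < u a := by simp only [hu]; exact inv_pos.2 (hD0 a le_rfl)
  have hub : 0 < u b := by simp only [hu]; exact inv_pos.2 (hD0 b hab)
  have hua2 : u a ≤ 1 / a ^ n := by
    simp only [hu]
    rw [← one_div]
    have : 0 < a := by linarith
    exact one_div_le_one_div_of_le (by positivity) (hpos a le_rfl).1
  have t1 : |u b * v b| ≤ u b := by
    rw [abs_mul, abs_of_pos hub]; exact mul_le_of_le_one_right hub.le (hv1 b)
  have t2 : |u a * v a| ≤ u a := by
    rw [abs_mul, abs_of_pos hua]; exact mul_le_of_le_one_right hua.le (hv1 a)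
  rw [e3] at e2
  have t3 := abs_sub (u b * v b - u a * v a) (∫ z in a..b, u' z * v z)
  have t4 := abs_sub (u b * v b) (u a * v a)
  have : 2 / a ^ n = 2 * (1 / a ^ n) := by ring
  linarith

lemma J_exists (n : ℕ) (hn : 3 ≤ n) (hno : Odd n) (S : ℝ) (s : ℝ) (hs : s ∈ Set.Icc (-S) S) :
    ∃ Js, Tendsto (fun R : ℝ => (1 / (2 * Real.pi)) * Jint n s R) atTop (nhds Js) ∧
      ∀ Z, 1 ≤ Z → S ≤ Z → |(1 / Real.pi) * (∫ z in (0:ℝ)..Z, Gf n 1 s z) - Js| ≤ 2 / Z ^ n := by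
  have hpi1 : 1 / Real.pi ≤ 1 := by
    rw [div_le_one Real.pi_pos]; linarith [Real.pi_gt_three]
  have hpi0 : 0 < 1 / Real.pi := by have := Real.pi_pos; positivity
  set H : ℝ → ℝ := fun Z => (1 / Real.pi) * ∫ z in (0:ℝ)..Z, Gf n 1 s z with hH
  have key : ∀ a b, 1 ≤ a → S ≤ a → a ≤ b → |H b - H a| ≤ 2 / a ^ n := by
    intro a b h1 h2 h3
    have e : H b - H a = (1 / Real.pi) * ∫ z in a..b, Gf n 1 s z := by
      simp only [hH]
      rw [← mul_sub, intervalIntegral.integral_interval_sub_left (Gf_int _ _ _ _ _)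
        (Gf_int _ _ _ _ _)]
    rw [e, abs_mul, abs_of_pos hpi0]
    exact (mul_le_of_le_one_left (abs_nonneg _) hpi1).trans (osc_tail n hn s S a b hs h1 h2 h3)
  have hc : CauchySeq H := by
    rw [Metric.cauchySeq_iff']
    intro ε hε
    have h0 : Tendsto (fun a : ℝ => 2 / a ^ n) atTop (nhds 0) :=
      (tendsto_pow_atTop (by omega)).const_div_atTop 2
    obtain ⟨A, hA⟩ := (h0.eventually (gt_mem_nhds hε)).exists_forall_of_atTop
    refine ⟨max A (max 1 S), fun b hb => ?_⟩
    rw [Real.dist_eq]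
    exact (key _ b ((le_max_left _ _).trans (le_max_right _ _))
      ((le_max_right _ _).trans (le_max_right _ _)) hb).trans_lt (hA _ (le_max_left _ _))
  obtain ⟨Js, hJs⟩ := cauchySeq_tendsto_of_complete hc
  refine ⟨Js, ?_, fun Z h1 h2 => ?_⟩
  · refine hJs.congr fun R => ?_
    rw [Jint_eq n (by omega) hno]
  · have h3 : Tendsto (fun b => |H Z - H b|) atTop (nhds |H Z - Js|) :=
      (tendsto_const_nhds.sub hJs).abs
    refine le_of_tendsto h3 ?_
    filter_upwards [eventually_ge_atTop Z] with b hb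
    rw [abs_sub_comm]; exact key Z b h1 h2 hb

lemma sum_inv_Ico (N : ℕ) : ∑ k ∈ Ico 1 N, 1 / (k:ℝ) ≤ 1 + Real.log N := by
  have h1 : ∑ k ∈ Ico 1 N, 1 / (k:ℝ) ≤ ∑ k ∈ Ico 1 (N + 1), 1 / (k:ℝ) := by
    apply sum_le_sum_of_subset_of_nonneg
    · apply Ico_subset_Ico_right; omega
    · intros; positivity
  refine h1.trans (le_trans (le_of_eq ?_) (sum_inv_le N))
  rw [sum_Ico_eq_sum_range]
  simp only [Nat.add_sub_cancel]
  refine sum_congr rfl fun k _ => ?_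
  push_cast; rw [add_comm]

lemma Gf_step (d : ℕ) (t r : ℝ) (ht : 0 ≤ t) (k : ℝ) (hk : 1 ≤ k) (y : ℝ)
    (hy : y ∈ Set.Icc k (k + 1)) :
    |Gf (d + 2) t r k - Gf (d + 2) t r y|
      ≤ 2 * Real.pi * (((d + 2) * 2 ^ (d + 1) + 1) * (t * k ^ d) + 2 * |r| * (1 / k)) := by
  have hpi := Real.pi_pos
  have hk0 : 0 < k := by linarith
  have hy0 : 0 < y := by linarith [hy.1]
  rw [abs_sub_comm, Gf_eq _ (by omega) _ _ _ hy0.ne', Gf_eq _ (by omega) _ _ _ hk0.ne']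
  set A := 2 * Real.pi * (t * y ^ (d + 2) + r * y) with hA
  set B := 2 * Real.pi * (t * k ^ (d + 2) + r * k) with hB
  have e : Real.sin A / y - Real.sin B / k
      = (Real.sin A - Real.sin B) / y - Real.sin B * (y - k) / (y * k) := by
    field_simp; ring
  have hAB : |Real.sin A - Real.sin B| ≤ 2 * Real.pi * (t * ((d + 2) * (k + 1) ^ (d + 1)) + |r|) := by
    have h1 : |Real.sin A - Real.sin B| ≤ |A - B| := by
      have := Real.lipschitzWith_sin.dist_le_mul A B
      simpa [Real.dist_eq] using this
    refine h1.trans ?_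
    have e2 : A - B = 2 * Real.pi * (t * (y ^ (d + 2) - k ^ (d + 2)) + r * (y - k)) := by
      rw [hA, hB]; ring
    rw [e2, abs_mul, abs_of_pos Real.two_pi_pos]
    gcongr
    refine (abs_add_le _ _).trans ?_
    have h2 := dpow_le (d + 2) k hk0.le
    push_cast at h2
    have h3 : y ^ (d + 2) ≤ (k + 1) ^ (d + 2) := by gcongr; exact hy.2
    have h4 : k ^ (d + 2) ≤ y ^ (d + 2) := by gcongr; exact hy.1
    apply add_le_add
    · rw [abs_mul, abs_of_nonneg ht, abs_of_nonneg (by linarith)]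
      gcongr
      linarith
    · rw [abs_mul, abs_of_nonneg (by linarith [hy.1] : 0 ≤ y - k)]
      exact mul_le_of_le_one_right (abs_nonneg _) (by linarith [hy.2])
  have hBB : |Real.sin B| ≤ 2 * Real.pi * (t * k ^ (d + 2) + |r| * k) := by
    refine Real.abs_sin_le_abs.trans ?_
    rw [hB, abs_mul, abs_of_pos Real.two_pi_pos]
    gcongr
    refine (abs_add_le _ _).trans (le_of_eq ?_)
    rw [abs_mul r, abs_of_pos hk0, abs_of_nonneg (by positivity)]
  have n1 : |(Real.sin A - Real.sin B) / y|
      ≤ 2 * Real.pi * ((d + 2) * 2 ^ (d + 1) * (t * k ^ d) + |r| * (1 / k)) := by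
    rw [abs_div, abs_of_pos hy0]
    have hkk : (k + 1) ^ (d + 1) ≤ (2 * k) ^ (d + 1) := by gcongr; linarith
    calc _ ≤ 2 * Real.pi * (t * ((d + 2) * (2 * k) ^ (d + 1)) + |r|) / k := by
          gcongr
          · refine hAB.trans ?_
            gcongr
          · exact hy.1
      _ = _ := by rw [mul_pow]; field_simp; ring
  have n2 : |Real.sin B * (y - k) / (y * k)| ≤ 2 * Real.pi * (t * k ^ d + |r| * (1 / k)) := by
    rw [abs_div, abs_mul, abs_of_nonneg (by linarith [hy.1] : 0 ≤ y - k),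
      abs_of_pos (by positivity : 0 < y * k)]
    calc _ ≤ 2 * Real.pi * (t * k ^ (d + 2) + |r| * k) * 1 / (k * k) := by
          gcongr
          · linarith [hy.1]
          · linarith [hy.2]
          · exact hy.1
      _ = _ := by field_simp; ring
  rw [e]
  have := abs_sub ((Real.sin A - Real.sin B) / y) (Real.sin B * (y - k) / (y * k))
  nlinarith

lemma riem (n : ℕ) (hn : 2 ≤ n) (t r : ℝ) (ht : 0 ≤ t) (N : ℕ) (hN : 1 ≤ N) :
    |∑ k ∈ Ico 1 N, Gf n t r k - ∫ y in (0:ℝ)..N, Gf n t r y|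
      ≤ 2 * Real.pi * ((n * 2 ^ (n - 1) + 2) * (t * (N:ℝ) ^ (n - 1)) + 3 * (|r| * (1 + Real.log N))) := by
  obtain ⟨d, rfl⟩ : ∃ d, n = d + 2 := ⟨n - 2, by omega⟩
  have hpi := Real.pi_pos
  have hN1 : (1:ℝ) ≤ N := by exact_mod_cast hN
  have h01 : |∫ y in (0:ℝ)..1, Gf (d + 2) t r y| ≤ 2 * Real.pi * (t + |r|) := by
    have := intervalIntegral.norm_integral_le_of_norm_le_const (a := 0) (b := 1)
      (f := Gf (d + 2) t r) (C := 2 * Real.pi * (t + |r|)) (by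
        intro y hy
        rw [Set.uIoc_of_le (by norm_num)] at hy
        unfold Gf
        rw [Real.norm_eq_abs, abs_mul, abs_mul, abs_of_pos Real.two_pi_pos]
        refine (mul_le_of_le_one_right (by positivity) (Real.abs_sinc_le_one _)).trans ?_
        gcongr
        refine (abs_add_le _ _).trans ?_
        gcongr
        have hy0 := hy.1.le
        rw [abs_of_nonneg (by positivity)]
        exact mul_le_of_le_one_right ht (pow_le_one₀ hy0 hy.2))
    simpa using this
  have hk : ∀ k ∈ Ico 1 N, |Gf (d + 2) t r k - ∫ y in (k:ℝ)..((k + 1 : ℕ):ℝ), Gf (d + 2) t r y|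
      ≤ 2 * Real.pi * (((d + 2) * 2 ^ (d + 1) + 1) * (t * (N:ℝ) ^ d) + 2 * |r| * (1 / k)) := by
    intro k hk
    obtain ⟨hk1, hkN⟩ := mem_Ico.1 hk
    have hk1' : (1:ℝ) ≤ k := by exact_mod_cast hk1
    have hkN' : (k:ℝ) ≤ N := by exact_mod_cast hkN.le
    have e : Gf (d + 2) t r k - ∫ y in (k:ℝ)..((k + 1 : ℕ):ℝ), Gf (d + 2) t r y
        = ∫ y in (k:ℝ)..((k + 1 : ℕ):ℝ), (Gf (d + 2) t r k - Gf (d + 2) t r y) := by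
      rw [intervalIntegral.integral_sub (by simp) (Gf_int _ _ _ _ _)]
      simp
    rw [e]
    have := intervalIntegral.norm_integral_le_of_norm_le_const (a := (k:ℝ))
      (b := ((k + 1 : ℕ):ℝ))
      (f := fun y => Gf (d + 2) t r k - Gf (d + 2) t r y)
      (C := 2 * Real.pi * (((d + 2) * 2 ^ (d + 1) + 1) * (t * (N:ℝ) ^ d) + 2 * |r| * (1 / k))) (by
        intro y hy
        rw [Set.uIoc_of_le (by push_cast; linarith)] at hy
        push_cast at hy
        rw [Real.norm_eq_abs]
        refine (Gf_step d t r ht k hk1' y ⟨hy.1.le, hy.2⟩).trans ?_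
        gcongr)
    simpa using this
  have e0 : ∫ y in (0:ℝ)..N, Gf (d + 2) t r y = (∫ y in (0:ℝ)..1, Gf (d + 2) t r y)
      + ∑ k ∈ Ico 1 N, ∫ y in (k:ℝ)..((k + 1 : ℕ):ℝ), Gf (d + 2) t r y := by
    rw [intervalIntegral.sum_integral_adjacent_intervals_Ico (a := fun k : ℕ => (k:ℝ)) hN
      (fun k _ => Gf_int _ _ _ _ _), Nat.cast_one,
      intervalIntegral.integral_add_adjacent_intervals (Gf_int _ _ _ _ _) (Gf_int _ _ _ _ _)]
  have e1 : ∑ k ∈ Ico 1 N, Gf (d + 2) t r k - ∫ y in (0:ℝ)..N, Gf (d + 2) t r y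
      = ∑ k ∈ Ico 1 N, (Gf (d + 2) t r k - ∫ y in (k:ℝ)..((k + 1 : ℕ):ℝ), Gf (d + 2) t r y)
        - ∫ y in (0:ℝ)..1, Gf (d + 2) t r y := by
    rw [e0, sum_sub_distrib]; ring
  rw [e1]
  refine (abs_sub _ _).trans ?_
  have h2 : |∑ k ∈ Ico 1 N, (Gf (d + 2) t r k - ∫ y in (k:ℝ)..((k + 1 : ℕ):ℝ), Gf (d + 2) t r y)|
      ≤ 2 * Real.pi * (((d + 2) * 2 ^ (d + 1) + 1) * (t * (N:ℝ) ^ (d + 1))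
        + 2 * |r| * (1 + Real.log N)) := by
    refine (abs_sum_le_sum_abs _ _).trans ((sum_le_sum hk).trans ?_)
    rw [← mul_sum, sum_add_distrib, sum_const, nsmul_eq_mul, Nat.card_Ico]
    have h3 : ((N - 1 : ℕ):ℝ) ≤ N := by exact_mod_cast Nat.sub_le _ _
    have h4 : ((N - 1 : ℕ):ℝ) * ((((d:ℝ) + 2) * 2 ^ (d + 1) + 1) * (t * (N:ℝ) ^ d))
        ≤ (((d:ℝ) + 2) * 2 ^ (d + 1) + 1) * (t * (N:ℝ) ^ (d + 1)) := by
      calc _ ≤ (N:ℝ) * ((((d:ℝ) + 2) * 2 ^ (d + 1) + 1) * (t * (N:ℝ) ^ d)) := by gcongr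
        _ = _ := by ring
    have h5 := sum_inv_Ico N
    refine mul_le_mul_of_nonneg_left (add_le_add h4 ?_) (by positivity)
    rw [← mul_sum]
    exact mul_le_mul_of_nonneg_left h5 (by positivity)
  have h6 : t ≤ t * (N:ℝ) ^ (d + 1) := le_mul_of_one_le_right ht (one_le_pow₀ hN1)
  have h7 : |r| ≤ |r| * (1 + Real.log N) :=
    le_mul_of_one_le_right (abs_nonneg _) (by linarith [Real.log_nonneg hN1])
  rw [show d + 2 - 1 = d + 1 by omega]
  push_cast at h2 ⊢
  calc _ ≤ 2 * Real.pi * ((((d:ℝ) + 2) * 2 ^ (d + 1) + 1) * (t * (N:ℝ) ^ (d + 1))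
        + 2 * |r| * (1 + Real.log N)) + 2 * Real.pi * (t * (N:ℝ) ^ (d + 1) + |r| * (1 + Real.log N)) := by
        refine add_le_add h2 (h01.trans ?_)
        gcongr
    _ = _ := by ring

lemma log_NN (n : ℕ) (hn : 3 ≤ n) (t : ℝ) (ht : 0 < t) (ht1 : t ≤ 1) :
    t ^ kap n * (1 + Real.log (NN n t)) ≤ 7 := by
  obtain ⟨f0, f1, f2, f3, f4, f5, f6⟩ := NN_facts n hn t ht ht1
  set τ := t ^ kap n
  have hN1 : (0:ℝ) < (NN n t : ℝ) := by exact_mod_cast f5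
  have h1 : (NN n t : ℝ) ≤ (2 / τ) ^ 3 := by
    rw [div_pow, le_div_iff₀ (by positivity)]; linarith
  have h2 : Real.log (NN n t) ≤ 3 * (2 / τ - 1) := by
    refine (Real.log_le_log hN1 h1).trans ?_
    rw [Real.log_pow]
    have := Real.log_le_sub_one_of_pos (by positivity : 0 < 2 / τ)
    push_cast; linarith
  calc _ ≤ τ * (1 + 3 * (2 / τ - 1)) := by gcongr
    _ = 6 - 2 * τ := by field_simp; ring
    _ ≤ 7 := by linarith

lemma claimA (n : ℕ) (hn : 3 ≤ n) (hno : Odd n) (S : ℝ) (hS : 0 < S) :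
    ∃ C > (0:ℝ), ∃ t₁ > (0:ℝ), ∀ s ∈ Set.Icc (-S) S, ∃ Js,
      Tendsto (fun R : ℝ => (1 / (2 * Real.pi)) * Jint n s R) atTop (nhds Js) ∧
      ∀ t ∈ Set.Ioc (0:ℝ) t₁,
        |Wsum n t (s * t ^ ((n:ℝ)⁻¹)) (NN n t) - Js| ≤ C * t ^ kap n := by
  have hpi := Real.pi_pos
  have hk := kap_pos n hn
  set r := 1 / (1 + S) ^ n with hr
  have hr0 : 0 < r := by positivity
  refine ⟨2 * Real.pi * ((n * 2 ^ (n - 1) + 2) * 2 ^ (n - 1) + 3 * (S * 7)) + 2, by positivity,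
    min 1 (r ^ (1 / kap n)), by positivity, fun s hs => ?_⟩
  obtain ⟨Js, hJ, hJ2⟩ := J_exists n hn hno S s hs
  refine ⟨Js, hJ, fun t ht => ?_⟩
  obtain ⟨ht0, ht1⟩ := ht
  have htone : t ≤ 1 := ht1.trans (min_le_left _ _)
  have hτr : t ^ kap n ≤ r := by
    have := Real.rpow_le_rpow ht0.le (ht1.trans (min_le_right _ _)) hk.le
    rwa [← Real.rpow_mul (by positivity), one_div_mul_cancel hk.ne', Real.rpow_one] at this
  obtain ⟨f0, f1, f2, f3, f4, f5, f6⟩ := NN_facts n hn t ht0 htone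
  obtain ⟨g1, g2, g3, g4⟩ := NN_pow n hn t ht0 htone
  have hlog := log_NN n hn t ht0 htone
  have hN1 : (1:ℝ) ≤ (NN n t : ℝ) := by exact_mod_cast f5
  have hlog0 := Real.log_nonneg hN1
  set N := NN n t with hN
  set l := t ^ ((n:ℝ)⁻¹) with hl
  have hl0 : 0 < l := by positivity
  have hln : l ^ n = t := by rw [hl]; exact Real.rpow_inv_natCast_pow ht0.le (by omega)
  set τ := t ^ kap n with hτ
  have hrm := riem n (by omega) t (s * l) ht0.le N f5
  have hint : ∫ y in (0:ℝ)..N, Gf n t (s * l) y = ∫ z in (0:ℝ)..(l * N), Gf n 1 s z := by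
    have := intervalIntegral.mul_integral_comp_mul_left (a := 0) (b := N) (f := Gf n 1 s) l
    rw [mul_zero] at this
    rw [← this, ← intervalIntegral.integral_const_mul]
    congr 1; funext y
    rw [← Gf_scale n (by omega) l s y, hln]
  have hW : Wsum n t (s * l) N = (1 / Real.pi) * ∑ k ∈ Ico 1 N, Gf n t (s * l) k := by
    unfold Wsum
    rw [mul_sum]
    refine sum_congr rfl fun k hk => ?_
    have hk0 : (k:ℝ) ≠ 0 := by
      have := (mem_Ico.1 hk).1; positivity
    rw [Gf_eq n (by omega) _ _ _ hk0, div_mul_div_comm, one_mul]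
  have hZn : 1 ≤ (l * N) ^ n * τ ^ 2 := by rw [mul_pow, hln]; exact g3
  have hZ : 1 + S ≤ l * N := by
    apply le_of_pow_le_pow_left₀ (by omega : n ≠ 0) (by positivity)
    have h1 : τ * (1 + S) ^ n ≤ 1 := by
      rw [hr, le_div_iff₀ (by positivity)] at hτr; exact hτr
    have h2 : τ ^ 2 ≤ τ := by nlinarith
    have h3 : 1 ≤ (l * N) ^ n * τ := by
      refine hZn.trans ?_
      gcongr
    have h4 : τ * (1 + S) ^ n ≤ τ * (l * N) ^ n := by linarith
    exact le_of_mul_le_mul_left h4 f0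
  have hJ3 := hJ2 (l * N) (by linarith) (by linarith)
  have hJ4 : 2 / (l * N) ^ n ≤ 2 * τ := by
    rw [div_le_iff₀ (by positivity)]
    have : (l * N) ^ n * τ ^ 2 ≤ (l * N) ^ n * τ := by
      gcongr; nlinarith
    linarith
  rw [hint] at hrm
  have hpi1 : 1 / Real.pi ≤ 1 := by
    rw [div_le_one Real.pi_pos]; linarith [Real.pi_gt_three]
  have hsl : |s * l| ≤ S * τ ^ 2 := by
    rw [abs_mul, abs_of_pos hl0]
    gcongr
    exact abs_le.2 hs
  have hrm2 : |Wsum n t (s * l) N - (1 / Real.pi) * ∫ z in (0:ℝ)..(l * N), Gf n 1 s z|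
      ≤ 2 * Real.pi * ((n * 2 ^ (n - 1) + 2) * (2 ^ (n - 1) * τ) + 3 * (S * 7 * τ)) := by
    rw [hW, ← mul_sub, abs_mul, abs_of_pos (by positivity)]
    refine (mul_le_of_le_one_left (abs_nonneg _) hpi1).trans (hrm.trans ?_)
    have : |s * l| * (1 + Real.log N) ≤ S * 7 * τ := by
      calc _ ≤ S * τ ^ 2 * (1 + Real.log N) := by gcongr
        _ = S * τ * (τ * (1 + Real.log N)) := by ring
        _ ≤ S * τ * 7 := by gcongr
        _ = _ := by ring
    gcongr
  have := abs_sub_le (Wsum n t (s * l) N) ((1 / Real.pi) * ∫ z in (0:ℝ)..(l * N), Gf n 1 s z) Js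
  linarith

lemma ee_re (x : ℝ) : ee x = (Real.cos (2 * Real.pi * x) : ℂ) + Real.sin (2 * Real.pi * x) * Complex.I := by
  unfold ee
  rw [show (2 * (Real.pi:ℂ) * Complex.I * x) = ((2 * Real.pi * x : ℝ) : ℂ) * Complex.I by push_cast; ring,
    Complex.exp_mul_I]
  push_cast; rfl

lemma Up_term (n : ℕ) (hno : Odd n) (γ t x : ℝ) (k : ℝ) :
    Complex.ofReal (Real.sin (2 * Real.pi * γ * k) / (Real.pi * k)) * ee (t * k ^ n + x * k)
    + Complex.ofReal (Real.sin (2 * Real.pi * γ * (-k)) / (Real.pi * (-k)))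
      * ee (t * (-k) ^ n + x * (-k))
    = ((Real.sin (2 * Real.pi * (t * k ^ n + (x + γ) * k)) / (Real.pi * k)
      - Real.sin (2 * Real.pi * (t * k ^ n + (x - γ) * k)) / (Real.pi * k) : ℝ) : ℂ) := by
  have e1 : Real.sin (2 * Real.pi * γ * (-k)) / (Real.pi * (-k))
      = Real.sin (2 * Real.pi * γ * k) / (Real.pi * k) := by
    rw [mul_neg, Real.sin_neg, mul_neg, neg_div_neg_eq]
  have e2 : t * (-k) ^ n + x * (-k) = -(t * k ^ n + x * k) := by
    rw [hno.neg_pow]; ring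
  rw [e1, e2, ee_re, ee_re]
  set θ := t * k ^ n + x * k with hθ
  rw [show 2 * Real.pi * (t * k ^ n + (x + γ) * k) = 2 * Real.pi * θ + 2 * Real.pi * γ * k by
      rw [hθ]; ring,
    show 2 * Real.pi * (t * k ^ n + (x - γ) * k) = 2 * Real.pi * θ - 2 * Real.pi * γ * k by
      rw [hθ]; ring,
    Real.sin_add, Real.sin_sub, mul_neg, Real.cos_neg, Real.sin_neg]
  push_cast
  ring

lemma Up_eq (n : ℕ) (hno : Odd n) (γ t x : ℝ) (K : ℕ) :
    Upartial n γ t x K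
      = ((2 * γ + Wsum n t (x + γ) (K + 1) - Wsum n t (x - γ) (K + 1) : ℝ) : ℂ) := by
  induction K with
  | zero =>
    have : (Finset.Icc (-((0:ℕ) : ℤ)) ((0:ℕ) : ℤ)).filter (· ≠ 0) = ∅ := by
      ext k; simp
    unfold Upartial Wsum
    rw [this]; simp
  | succ K ih =>
    have hs : (Finset.Icc (-((K + 1 : ℕ) : ℤ)) ((K + 1 : ℕ) : ℤ)).filter (· ≠ 0)
        = insert ((K + 1 : ℕ) : ℤ) (insert (-((K + 1 : ℕ) : ℤ))
          ((Finset.Icc (-(K : ℤ)) (K : ℤ)).filter (· ≠ 0))) := by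
      ext k
      simp only [mem_filter, mem_Icc, mem_insert]
      omega
    have hU : Upartial n γ t x (K + 1) = Upartial n γ t x K
        + (Complex.ofReal (Real.sin (2 * Real.pi * γ * ((K + 1 : ℕ):ℝ)) / (Real.pi * ((K + 1 : ℕ):ℝ)))
            * ee (t * ((K + 1 : ℕ):ℝ) ^ n + x * ((K + 1 : ℕ):ℝ))
          + Complex.ofReal (Real.sin (2 * Real.pi * γ * (-((K + 1 : ℕ):ℝ))) / (Real.pi * (-((K + 1 : ℕ):ℝ))))
            * ee (t * (-((K + 1 : ℕ):ℝ)) ^ n + x * (-((K + 1 : ℕ):ℝ)))) := by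
      unfold Upartial
      rw [hs, sum_insert, sum_insert]
      · simp only [Int.cast_neg, Int.cast_natCast]
        ring
      · simp only [mem_filter, mem_Icc]; omega
      · simp only [mem_filter, mem_Icc, mem_insert]; omega
    rw [hU, ih, Up_term n hno γ t x _, ← Complex.ofReal_add]
    congr 1
    unfold Wsum
    rw [sum_Ico_succ_top (by omega : 1 ≤ K + 1), sum_Ico_succ_top (by omega : 1 ≤ K + 1)]
    ring

lemma Wsum_add_one (n : ℕ) (t y : ℝ) (K : ℕ) : Wsum n t (y + 1) K = Wsum n t y K := by
  unfold Wsum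
  refine sum_congr rfl fun k _ => ?_
  rw [show 2 * Real.pi * (t * (k:ℝ) ^ n + (y + 1) * k)
    = 2 * Real.pi * (t * (k:ℝ) ^ n + y * k) + k * (2 * Real.pi) by ring,
    Real.sin_add_nat_mul_two_pi]

lemma kap_ge (n : ℕ) (hn : 3 ≤ n) (Δ α : ℝ) (hΔ0 : 0 < Δ) (hΔ1 : Δ < 1) (hα0 : 0 < α)
    (hα2 : α < ((n : ℝ) - 1)⁻¹) : α * Δ / 2 ^ (n - 1) ≤ kap n := by
  obtain ⟨d, rfl⟩ : ∃ d, n = d + 3 := ⟨n - 3, by omega⟩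
  have h2 : (1 + (d:ℝ)) ≤ 2 ^ d := by
    have := one_add_mul_le_pow (by norm_num : (-2:ℝ) ≤ 1) d
    norm_num at this; linarith
  have hd : (0:ℝ) ≤ d := by positivity
  push_cast at hα2
  unfold kap
  rw [show d + 3 - 1 = d + 2 by omega]
  push_cast
  have hα3 : α * (d + 2) ≤ 1 := by
    rw [show (d:ℝ) + 3 - 1 = d + 2 by ring, lt_inv_comm₀ hα0 (by positivity)] at hα2
    have := mul_le_mul_of_nonneg_left hα2.le hα0.le
    rwa [mul_inv_cancel₀ hα0.ne'] at this
  rw [div_le_div_iff₀ (by positivity) (by linarith), pow_add]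
  have hα4 : α * (3 * d + 7) ≤ 4 := by nlinarith
  have : α * Δ ≤ α := mul_le_of_le_one_right hα0.le hΔ1.le
  calc α * Δ * (3 * ((d:ℝ) + 3) - 2) = (α * Δ) * (3 * d + 7) := by ring
    _ ≤ α * (3 * d + 7) := by gcongr
    _ ≤ 4 := hα4
    _ ≤ 1 * (2 ^ d * 2 ^ 2) := by nlinarith

lemma four_abs (a b d e C1 C2 C3 C4 C5 S τ : ℝ) {κ : ℝ} (ha : |a| ≤ C1 * κ)
    (hb : |b| ≤ (C3 + C4) * τ) (hd : |d| ≤ C1 * κ + (C2 + C5) * τ) (he : |e| ≤ S * τ)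
    (h1 : 0 ≤ C1) (h2 : 0 ≤ C2) (h3 : 0 ≤ C3) (h4 : 0 ≤ C4) (h5 : 0 ≤ C5) (h6 : 0 ≤ S)
    (hτ : 0 ≤ τ) (hκ : 0 ≤ κ) :
    |a + b - d - e| ≤ (2 * C1 + C2 + C3 + C4 + C5 + S) * (τ + κ) := by
  have p1 := mul_nonneg h1 hτ
  have p2 := mul_nonneg h2 hκ
  have p3 := mul_nonneg h3 hκ
  have p4 := mul_nonneg h4 hκ
  have p5 := mul_nonneg h5 hκ
  have p6 := mul_nonneg h6 hκ
  obtain ⟨a1, a2⟩ := abs_le.1 ha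
  obtain ⟨b1, b2⟩ := abs_le.1 hb
  obtain ⟨d1, d2⟩ := abs_le.1 hd
  obtain ⟨e1, e2⟩ := abs_le.1 he
  rw [abs_le]
  constructor <;> linarith

lemma four_abs' (a b d e C1 C2 C3 C4 C5 S τ : ℝ) {κ : ℝ} (ha : |a| ≤ C1 * κ)
    (hb : |b| ≤ (C3 + C4) * τ) (hd : |d| ≤ C1 * κ + (C2 + C5) * τ) (he : |e| ≤ S * τ)
    (h1 : 0 ≤ C1) (h2 : 0 ≤ C2) (h3 : 0 ≤ C3) (h4 : 0 ≤ C4) (h5 : 0 ≤ C5) (h6 : 0 ≤ S)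
    (hτ : 0 ≤ τ) (hκ : 0 ≤ κ) :
    |-a - b + d + e| ≤ (2 * C1 + C2 + C3 + C4 + C5 + S) * (τ + κ) := by
  rw [show -a - b + d + e = -(a + b - d - e) by ring, abs_neg]
  exact four_abs a b d e C1 C2 C3 C4 C5 S τ ha hb hd he h1 h2 h3 h4 h5 h6 hτ hκ

theorem core (n : ℕ) (hn : 3 ≤ n) (hno : Odd n) (Δ : ℝ) (hΔ0 : 0 < Δ) (hΔ1 : Δ < 1)
    (γ : ℝ) (hγ : γ ∈ Set.Ioo (0 : ℝ) (1 / 2))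
    (m : ℤ) (hm : 2 ≤ m) (α : ℝ) (hα0 : 0 < α) (hα2 : α < ((n : ℝ) - 1)⁻¹)
    (η : ℝ) (hη : 0 < η) (hηΔ : η < Δ / 2 ^ (n - 1)) (S : ℝ) (hS : 0 < S) :
    ∃ C > (0 : ℝ), ∃ t₁ > (0 : ℝ), t₁ ≤ 1 ∧ ∀ t ∈ Set.Ioc (0 : ℝ) t₁, Adm n Δ m α t →
      ∀ s ∈ Set.Icc (-S) S, ∀ σ : ℝ, (σ = 1 ∨ σ = -1) →
        ∃ (Js L : ℝ),
          Tendsto (fun R : ℝ => (1 / (2 * Real.pi)) * Jint n s R) atTop (nhds Js) ∧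
          Tendsto (fun K : ℕ => Upartial n γ t (σ * γ + s * t ^ ((n : ℝ)⁻¹)) K)
            atTop (nhds (L : ℂ)) ∧
          |L - (1 / 2 - σ * Js)| ≤ C * (t ^ kap n + t ^ (α * η)) := by
  have hk := kap_pos n hn
  have hn3 : (3:ℝ) ≤ n := by exact_mod_cast hn
  set α' := max α (3 * kap n) with hα'
  have hα'2 : α' < ((n:ℝ) - 1)⁻¹ := by
    apply max_lt hα2
    unfold kap
    rw [mul_one_div, inv_eq_one_div, div_lt_div_iff₀ (by linarith) (by linarith)]
    linarith
  have hα'1 : α' < 1 := hα'2.trans (inv_lt_one_of_one_lt₀ (by linarith))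
  obtain ⟨hγ0, hγ1⟩ := hγ
  set c := min γ ((1 - 2 * γ) / 2) with hc
  have hc0 : 0 < c := lt_min hγ0 (by linarith)
  have hcγ : c ≤ γ := min_le_left _ _
  have hcγ' : c ≤ (1 - 2 * γ) / 2 := min_le_right _ _
  obtain ⟨C1, hC1, t1, ht1, H1⟩ := tail_all n hn hno Δ hΔ0 hΔ1 m hm α hα0 α' (le_max_left _ _) hα'1 η hη hηΔ
  obtain ⟨C2, hC2, t2, ht2, H2⟩ := mid_zero n hn m hm α' (le_max_right _ _) hα'2 S hS
  obtain ⟨C3, hC3, t3, ht3, H3⟩ := mid_c n hn m hm α' (le_max_right _ _) hα'2 c hc0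
  obtain ⟨C4, hC4, H4⟩ := claimB n hn c hc0
  obtain ⟨C5, hC5, t5, ht5, H5⟩ := claimA n hn hno S hS
  set r := c / S with hr
  have hr0 : 0 < r := by positivity
  refine ⟨2 * C1 + C2 + C3 + C4 + C5 + S, by positivity,
    min (min 1 (r ^ (1 / kap n))) (min (min t1 t2) (min t3 t5)), by positivity,
    (min_le_left _ _).trans (min_le_left _ _), ?_⟩
  rintro t ⟨ht0, ht⟩ hadm s hs
  simp only [le_min_iff] at ht
  obtain ⟨⟨htone, htr⟩, ⟨hta, htb⟩, htc, htd⟩ := ht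
  have hτr : t ^ kap n ≤ r := by
    have := Real.rpow_le_rpow ht0.le htr hk.le
    rwa [← Real.rpow_mul (by positivity), one_div_mul_cancel hk.ne', Real.rpow_one] at this
  obtain ⟨f0, f1, f2, f3, f4, f5, f6⟩ := NN_facts n hn t ht0 htone
  obtain ⟨g1, g2, g3, g4⟩ := NN_pow n hn t ht0 htone
  have hlτ : t ^ ((n:ℝ)⁻¹) ≤ t ^ kap n := by
    apply Real.rpow_le_rpow_of_exponent_ge ht0 htone
    unfold kap
    rw [inv_eq_one_div]
    apply one_div_le_one_div_of_le (by linarith) (by linarith)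
  have hl0 : 0 < t ^ ((n:ℝ)⁻¹) := by positivity
  obtain ⟨Js, hJ, hJ2⟩ := H5 s hs
  have A0 := hJ2 t ⟨ht0, htd⟩
  have A1 := H2 t ⟨ht0, htb⟩ s hs
  set s' := s * t ^ ((n:ℝ)⁻¹) with hs'
  have hsS : |s'| ≤ S * t ^ kap n := by
    rw [hs', abs_mul, abs_of_pos hl0]
    gcongr
    exact abs_le.2 hs
  have hsc : |s'| ≤ c := by
    refine hsS.trans ?_
    rw [hr, le_div_iff₀ hS] at hτr; linarith
  obtain ⟨hsc1, hsc2⟩ := abs_le.1 hsc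
  set N1 := ⌈(m:ℝ) * t ^ (-α')⌉₊ with hN1
  have lim : ∀ y, ∃ l, Tendsto (fun K => Wsum n t y (K + 1)) atTop (nhds l) ∧
      |l - Wsum n t y N1| ≤ C1 * t ^ (α * η) := by
    intro y
    obtain ⟨h1, h2⟩ := H1 t ⟨ht0, hta⟩ hadm y
    obtain ⟨l, hl⟩ := cauchySeq_tendsto_of_complete h1
    refine ⟨l, hl.comp (tendsto_add_atTop_nat 1), ?_⟩
    refine le_of_tendsto ((hl.sub_const _).abs) ?_
    filter_upwards [eventually_ge_atTop N1] with K hK using h2 K hK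
  have good : ∀ y ∈ Set.Icc c (1 - c), |Wsum n t y N1 - (1 / 2 - y)| ≤ (C3 + C4) * t ^ kap n := by
    intro y hy
    have a := H3 t ⟨ht0, htc⟩ y hy
    have b := H4 t ⟨ht0, htone⟩ y hy
    have := abs_sub_le (Wsum n t y N1) (Wsum n t y (NN n t)) (1 / 2 - y)
    linarith
  obtain ⟨l0, hl0, hl0'⟩ := lim s'
  have zero : |l0 - Js| ≤ C1 * t ^ (α * η) + (C2 + C5) * t ^ kap n := by
    have a := abs_sub_le l0 (Wsum n t s' N1) Js
    have b := abs_sub_le (Wsum n t s' N1) (Wsum n t s' (NN n t)) Js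
    linarith
  have hτ0 : 0 < t ^ kap n := by positivity
  have hη0 : 0 < t ^ (α * η) := by positivity
  rintro σ (rfl | rfl)
  · obtain ⟨l1, hl1, hl1'⟩ := lim (2 * γ + s')
    have G := good (2 * γ + s') ⟨by linarith, by linarith⟩
    refine ⟨Js, 2 * γ + l1 - l0, hJ, ?_, ?_⟩
    · simp_rw [Up_eq n hno]
      refine (Complex.continuous_ofReal.tendsto _).comp ?_
      rw [show 1 * γ + s' + γ = 2 * γ + s' by ring, show 1 * γ + s' - γ = s' by ring]
      exact (hl1.const_add _).sub hl0
    · have e : 2 * γ + l1 - l0 - (1 / 2 - 1 * Js)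
        = (l1 - Wsum n t (2 * γ + s') N1) + (Wsum n t (2 * γ + s') N1 - (1 / 2 - (2 * γ + s')))
          - (l0 - Js) - s' := by ring
      rw [e]
      exact four_abs _ _ _ _ _ _ _ _ _ _ _ hl1' G zero hsS hC1.le hC2.le hC3.le hC4.le hC5.le hS.le hτ0.le hη0.le
  · obtain ⟨l1, hl1, hl1'⟩ := lim (-2 * γ + s' + 1)
    have G := good (-2 * γ + s' + 1) ⟨by linarith, by linarith⟩
    refine ⟨Js, 2 * γ + l0 - l1, hJ, ?_, ?_⟩
    · simp_rw [Up_eq n hno]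
      refine (Complex.continuous_ofReal.tendsto _).comp ?_
      rw [show -1 * γ + s' + γ = s' by ring, show -1 * γ + s' - γ = -2 * γ + s' by ring]
      simp_rw [Wsum_add_one] at hl1
      exact (hl0.const_add _).sub hl1
    · have e : 2 * γ + l0 - l1 - (1 / 2 - -1 * Js)
        = -(l1 - Wsum n t (-2 * γ + s' + 1) N1)
          - (Wsum n t (-2 * γ + s' + 1) N1 - (1 / 2 - (-2 * γ + s' + 1)))
          + (l0 - Js) + s' := by ring
      rw [e]
      exact four_abs' _ _ _ _ _ _ _ _ _ _ _ hl1' G zero hsS hC1.le hC2.le hC3.le hC4.le hC5.le hS.le hτ0.le hη0.le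

/-- `n ≥ 3` odd: the ringing profile. With `J(s) = (1/2π)·lim_{R→∞}∫_{−R}^R
sin(2π(y^n + sy))dy/y`, for admissible `t → 0⁺` and `s ∈ [−S,S]`, `σ = ±1`,
`U(t, σγ + s·t^{1/n}) = 1/2 − σ·J(s) + O(t^{αΔ/2^{n−1}−ε} + t^{αn−1})`. -/
theorem stmt13 (n : ℕ) (hn : 3 ≤ n) (hno : Odd n) (Δ : ℝ) (hΔ0 : 0 < Δ) (hΔ1 : Δ < 1)
    (γ : ℝ) (hγ : γ ∈ Set.Ioo (0 : ℝ) (1 / 2))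
    (m : ℤ) (hm : 2 ≤ m) (α : ℝ) (hα1 : ((n : ℝ) - Δ)⁻¹ < α) (hα2 : α < ((n : ℝ) - 1)⁻¹)
    (ε : ℝ) (hε : 0 < ε) (S : ℝ) (hS : 0 < S) :
    ∃ C > (0 : ℝ), ∃ t₁ > (0 : ℝ), ∀ t ∈ Set.Ioc (0 : ℝ) t₁,
      ((Irrational t ∧ t ∈ Bset n Δ m α) ∨
        (∃ u q : ℤ, 1 ≤ q ∧ Int.gcd u q = 1 ∧ t = (u : ℝ) / (q : ℝ) ∧
          t ≤ (m : ℝ) * (q : ℝ) ^ (-(1 / (α * ((n : ℝ) - Δ)))))) →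
      ∀ s ∈ Set.Icc (-S) S, ∀ σ : ℝ, (σ = 1 ∨ σ = -1) →
        ∃ (Js : ℝ) (L : ℂ),
          Tendsto (fun R : ℝ => (1 / (2 * Real.pi)) * Jint n s R) atTop (nhds Js) ∧
          Tendsto (fun K : ℕ => Upartial n γ t (σ * γ + s * t ^ ((n : ℝ)⁻¹)) K)
            atTop (nhds L) ∧
          ‖L - (1 / 2 - Complex.ofReal (σ * Js))‖ ≤
            C * (t ^ (α * Δ / 2 ^ (n - 1) - ε) + t ^ (α * n - 1)) := by
  have hn3 : (3:ℝ) ≤ n := by exact_mod_cast hn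
  have hα0 : 0 < α := lt_trans (inv_pos.2 (by linarith)) hα1
  have hαone : α ≤ 1 := hα2.le.trans (inv_le_one_of_one_le₀ (by linarith))
  have hD : 0 < Δ / 2 ^ (n - 1) := by positivity
  have hkap := kap_ge n hn Δ α hΔ0 hΔ1 hα0 hα2
  set D := Δ / 2 ^ (n - 1) with hDdef
  have eD : α * Δ / 2 ^ (n - 1) = α * D := by rw [hDdef, mul_div_assoc]
  set δ := min ε (D / 2) with hδ
  have hδ0 : 0 < δ := lt_min hε (by linarith)
  have hδε : δ ≤ ε := min_le_left _ _
  have hδD : δ ≤ D / 2 := min_le_right _ _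
  obtain ⟨C, hC, t₁, ht₁, ht1, H⟩ := core n hn hno Δ hΔ0 hΔ1 γ hγ m hm α hα0 hα2 (D - δ)
    (by linarith) (by linarith) S hS
  refine ⟨2 * C, by positivity, t₁, ht₁, fun t ht hadm s hs σ hσ => ?_⟩
  obtain ⟨Js, L, h1, h2, h3⟩ := H t ht hadm s hs σ hσ
  refine ⟨Js, L, h1, h2, ?_⟩
  have ht0 := ht.1
  have htone := ht.2.trans ht1
  have e : (L:ℂ) - (1 / 2 - Complex.ofReal (σ * Js)) = ((L - (1 / 2 - σ * Js) : ℝ) : ℂ) := by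
    push_cast; ring
  rw [e, Complex.norm_real, Real.norm_eq_abs, eD]
  rw [eD] at hkap
  have p1 : t ^ kap n ≤ t ^ (α * D - ε) :=
    Real.rpow_le_rpow_of_exponent_ge ht0 htone (by linarith)
  have p2 : t ^ (α * (D - δ)) ≤ t ^ (α * D - ε) :=
    Real.rpow_le_rpow_of_exponent_ge ht0 htone (by nlinarith)
  have p3 : 0 < t ^ (α * n - 1) := by positivity
  refine h3.trans ?_
  nlinarith [mul_pos hC p3]
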